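/- arXiv:1912.11641 — 2 statements merged into one kernel-verified Lean document; each statement's English description precedes it below -/
import Mathlib

section
/- There exists a universal constant c > 0 such that for every n and every pair of increasing measurable functions f, g : R^n → [0,1], one has Cor(f,g) ≥ c · Σ_{i∈[n]} min( M_1(f)_i M_1(g)_i / √(log(e / (M_1(f)_i M_1(g)_i))), (M_1(f)_i M_1(g)_i)^2 / |⟨M_2(f) e_i, M_2(g) e_i⟩| ), where e_i is the i-th standard basis vector and ⟨·,·⟩ is the standard inner product on R^n (the second term of each minimum being interpreted as +∞ when ⟨M_2(f) e_i, M_2(g) e_i⟩ = 0). -/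
/-!
The functions are first smoothed: let `F = half n f` and `G = half n g`, where
`(half n f)(x) = E f((x + Y)/√2)`. Given `X`, the functions `Y ↦ f((X + Y)/√2)` and
`Y ↦ g((X + Y)/√2)` are increasing, so the Harris–FKG inequality (`gaussian_fkg`) gives
`Cor(f, g) ≥ Cor(F, G)` (`cor_half_le`).

Differentiating `E F(X) G(sin θ X + cos θ Y)` in `θ` and integrating by parts yields
`Cor(F, G) = ∑ᵢ ∫₀^{π/2} cos θ ψᵢ(θ) dθ` (`cor_half_eq`), where
`ψᵢ(θ) = E ∂ᵢF(X) ∂ᵢG(sin θ X + cos θ Y)` (`psi`). The derivatives `∂ᵢF`, `∂ᵢG` (`hder`) take values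
in `[0, 1]`, have mean `M₁/√2` (`integral_hder`), and their first moments are half of the `i`-th
column of `M₂` (`integral_coord_mul_hder`). Every `ψᵢ` is nonnegative, so it suffices to bound it
below for small `θ`.

That bound is `two_point_lower`, an entropic estimate for `E u(X) v(ρ X + σ Y)`, `σ² = 1 - ρ²`,
where `u`, `v` are densities with respect to `γ`. Transport `γ` to `u γ` and to `v γ` by Knothe maps
`T₁`, `T₂`. With the Mehler kernel `k` (`mker`), the correlation equals the mean of
`k(T₁ x, T₂ z) / k(x, z)` over `ρ`-correlated pairs `(x, z)` (`ratio_lintegral`), and by Jensen's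
inequality it is at least the exponential of the mean of the logarithm of this ratio. That logarithm
is quadratic in the displacements `A = T₁ - id`, `B = T₂ - id`; its terms linear in them have mean
zero, `E A(X)·B(Z)` is `(E A)·(E B)` up to `O(ρ)(E|A|² + E|B|²)` by a Gebelein-type inequality
(`gebelein`), the means of `A` and `B` are the first moments of `u` and `v`, and `E|A|²`, `E|B|²` are
at most twice the entropies by Talagrand's transport inequality (`knothe`), hence at most
`2 log ‖u‖_∞` and `2 log ‖v‖_∞`.

Applied to the normalized derivatives, with `a = M₁(f)ᵢ M₁(g)ᵢ` and `b = ⟨M₂(f) eᵢ, M₂(g) eᵢ⟩`, the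
exponent is at least `-1` for all `θ ≤ t = ¼ min(1/√log(e/a), a/|b|)`, so `ψᵢ(θ) ≥ a/(2 e)` there
(`psi_lower`). Integrating over `[0, t]` gives the claim with `c = 1/(16 e)` (`coord_term`).
-/

open MeasureTheory ProbabilityTheory

noncomputable section

/-- The standard Gaussian measure on `ℝⁿ`. -/
def stdGaussian (n : ℕ) : Measure (Fin n → ℝ) := Measure.pi fun _ => gaussianReal 0 1

/-- `f` is increasing (monotone): nondecreasing in each coordinate when the other
coordinates are kept fixed. -/
def CoordMonotone (n : ℕ) (f : (Fin n → ℝ) → ℝ) : Prop :=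
  ∀ (x : Fin n → ℝ) (i : Fin n) (s t : ℝ), s ≤ t →
    f (Function.update x i s) ≤ f (Function.update x i t)

/-- `M₁(f) = ∫ x f(x) dγ(x) ∈ ℝⁿ` (given here coordinatewise). -/
def gM1 (n : ℕ) (f : (Fin n → ℝ) → ℝ) (i : Fin n) : ℝ :=
  ∫ x, x i * f x ∂stdGaussian n

/-- `M₂(f) = ∫ (x xᵀ - Iₙ) f(x) dγ(x) ∈ ℝⁿˣⁿ` (given here entrywise). -/
def gM2 (n : ℕ) (f : (Fin n → ℝ) → ℝ) (i j : Fin n) : ℝ :=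
  ∫ x, (x i * x j - if i = j then (1 : ℝ) else 0) * f x ∂stdGaussian n

/-- `Cor(f,g) = ∫ fg dγ - (∫ f dγ)(∫ g dγ)`. -/
def gCor (n : ℕ) (f g : (Fin n → ℝ) → ℝ) : ℝ :=
  (∫ x, f x * g x ∂stdGaussian n) -
    (∫ x, f x ∂stdGaussian n) * ∫ x, g x ∂stdGaussian n

/-- `⟨M₂(f) eᵢ, M₂(g) eᵢ⟩`, the standard inner product on `ℝⁿ` of the `i`-th columns. -/
def gM2col (n : ℕ) (f g : (Fin n → ℝ) → ℝ) (i : Fin n) : ℝ :=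
  ∑ j, gM2 n f j i * gM2 n g j i

/-- Short name for the standard Gaussian measure on `ℝⁿ`. -/
abbrev γ (n : ℕ) : Measure (Fin n → ℝ) := _root_.stdGaussian n

/-! ### The Gaussian measure: moments, rotations, Mehler kernel -/

instance isProbabilityMeasure_stdG (n : ℕ) : IsProbabilityMeasure (γ n) := by
  unfold γ _root_.stdGaussian; infer_instance

lemma measurePreserving_coord (n : ℕ) (i : Fin n) :
    MeasurePreserving (fun x : Fin n → ℝ => x i) (γ n) (gaussianReal 0 1) :=
  measurePreserving_eval (fun _ : Fin n => gaussianReal 0 1) i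

lemma memLp_coord (n : ℕ) (i : Fin n) (p : NNReal) :
    MemLp (fun x : Fin n → ℝ => x i) p (γ n) :=
  (memLp_id_gaussianReal (μ := 0) (v := 1) p).comp_measurePreserving (measurePreserving_coord n i)

lemma integrable_coord (n : ℕ) (i : Fin n) : Integrable (fun x : Fin n → ℝ => x i) (γ n) :=
  memLp_one_iff_integrable.1 (by simpa using memLp_coord n i 1)

lemma memLp_two_coord (n : ℕ) (i : Fin n) : MemLp (fun x : Fin n → ℝ => x i) 2 (γ n) := by
  simpa using memLp_coord n i 2

lemma integrable_coord_mul (n : ℕ) (i j : Fin n) :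
    Integrable (fun x : Fin n → ℝ => x i * x j) (γ n) :=
  (memLp_two_coord n i).integrable_mul (memLp_two_coord n j)

lemma integral_coord (n : ℕ) (i : Fin n) : ∫ x, x i ∂γ n = 0 := by
  have := integral_comp_eval (μ := fun _ : Fin n => gaussianReal 0 1) (i := i) (f := fun t : ℝ => t)
    (by fun_prop)
  rw [integral_id_gaussianReal] at this
  exact this

lemma integral_sq_gaussianReal : ∫ x, x * x ∂gaussianReal 0 1 = 1 := by
  have h := variance_eq_sub (memLp_id_gaussianReal (μ := 0) (v := 1) 2)
  rw [variance_id_gaussianReal] at h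
  simp [pow_two] at h
  linarith [h]

lemma charFunDual_gauss_one (L : StrongDual ℝ ℝ) :
    charFunDual (gaussianReal 0 1) L = Complex.exp (- (L 1)^2 / 2) := by
  rw [charFunDual_eq_charFun_map_one]
  rw [gaussianReal_map_continuousLinearMap, charFun_gaussianReal]
  simp
  congr 1
  rw [max_eq_left (sq_nonneg _)]
  push_cast
  ring

lemma rot1 (s c : ℝ) (h : s ^ 2 + c ^ 2 = 1) :
    MeasurePreserving (fun p : ℝ × ℝ => (s * p.1 + c * p.2, c * p.1 - s * p.2))
      ((gaussianReal 0 1).prod (gaussianReal 0 1)) ((gaussianReal 0 1).prod (gaussianReal 0 1)) := by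
  refine ⟨by fun_prop, ?_⟩
  let R : ℝ × ℝ →L[ℝ] ℝ × ℝ :=
    (s • ContinuousLinearMap.fst ℝ ℝ ℝ + c • ContinuousLinearMap.snd ℝ ℝ ℝ).prod
      (c • ContinuousLinearMap.fst ℝ ℝ ℝ - s • ContinuousLinearMap.snd ℝ ℝ ℝ)
  have hR : (fun p : ℝ × ℝ => (s * p.1 + c * p.2, c * p.1 - s * p.2)) = R := by
    ext p <;> simp [R]
  rw [hR]
  apply Measure.ext_of_charFunDual
  ext L
  rw [charFunDual_map, charFunDual_prod, charFunDual_prod]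
  simp only [charFunDual_gauss_one]
  rw [← Complex.exp_add, ← Complex.exp_add]
  congr 1
  simp only [ContinuousLinearMap.comp_apply, ContinuousLinearMap.inl_apply, ContinuousLinearMap.inr_apply]
  have e1 : R (1, 0) = s • ((1:ℝ), (0:ℝ)) + c • ((0:ℝ), (1:ℝ)) := by simp [R]
  have e2 : R (0, 1) = c • ((1:ℝ), (0:ℝ)) - s • ((0:ℝ), (1:ℝ)) := by simp [R]
  rw [e1, e2, map_add, map_sub, map_smul, map_smul, map_smul, map_smul]
  have : ((s:ℂ))^2 + (c:ℂ)^2 = 1 := by exact_mod_cast h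
  simp only [smul_eq_mul]
  push_cast
  linear_combination (-1/2) * (((L (1,0) : ℝ):ℂ)^2 + ((L (0,1) : ℝ):ℂ)^2) * this

/-- The orthogonal involution `(x, y) ↦ (s x + c y, c x - s y)` preserves `γ ⊗ γ`. -/
lemma rot (n : ℕ) (s c : ℝ) (h : s ^ 2 + c ^ 2 = 1) :
    MeasurePreserving (fun p : (Fin n → ℝ) × (Fin n → ℝ) => (s • p.1 + c • p.2, c • p.1 - s • p.2))
      ((γ n).prod (γ n)) ((γ n).prod (γ n)) := by
  have e := measurePreserving_arrowProdEquivProdArrow ℝ ℝ (Fin n)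
    (fun _ => gaussianReal 0 1) (fun _ => gaussianReal 0 1)
  have m := measurePreserving_pi (fun _ : Fin n => (gaussianReal 0 1).prod (gaussianReal 0 1))
    (fun _ : Fin n => (gaussianReal 0 1).prod (gaussianReal 0 1)) (fun _ => rot1 s c h)
  exact (e.comp m).comp (e.symm)

/-- Stability of the Gaussian: `s X + c Y` is standard Gaussian when `s² + c² = 1`. -/
lemma comb (n : ℕ) (s c : ℝ) (h : s ^ 2 + c ^ 2 = 1) :
    MeasurePreserving (fun p : (Fin n → ℝ) × (Fin n → ℝ) => s • p.1 + c • p.2)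
      ((γ n).prod (γ n)) (γ n) :=
  measurePreserving_fst.comp (rot n s c h)

lemma pi_withDensity_ofReal (n : ℕ) (μ : Measure ℝ) [IsProbabilityMeasure μ] (k : Fin n → ℝ → ℝ)
    (hk0 : ∀ i t, 0 ≤ k i t) (hki : ∀ i, Integrable (k i) μ) :
    Measure.pi (fun i => μ.withDensity fun t => ENNReal.ofReal (k i t)) =
      (Measure.pi fun _ : Fin n => μ).withDensity fun z => ENNReal.ofReal (∏ i, k i (z i)) := by
  have : ∀ i, IsFiniteMeasure (μ.withDensity fun t => ENNReal.ofReal (k i t)) := fun i =>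
    isFiniteMeasure_withDensity_ofReal (hki i).2
  apply Measure.pi_eq
  intro s hs
  rw [withDensity_apply _ (MeasurableSet.univ_pi hs), Measure.restrict_pi_pi,
    ← ofReal_integral_eq_lintegral_ofReal, integral_fintype_prod_eq_prod,
    ENNReal.ofReal_prod_of_nonneg]
  · refine Finset.prod_congr rfl fun i _ => ?_
    rw [withDensity_apply _ (hs i), ofReal_integral_eq_lintegral_ofReal]
    · exact (hki i).restrict
    · exact Filter.Eventually.of_forall (hk0 i)
  · intro i _; exact integral_nonneg (hk0 i)
  · exact Integrable.fintype_prod (fun i => (hki i).restrict)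
  · exact Filter.Eventually.of_forall fun z => Finset.prod_nonneg fun i _ => hk0 i _

/-- The one-dimensional Mehler kernel. -/
def mk1 (ρ x z : ℝ) : ℝ :=
  (√(1 - ρ ^ 2))⁻¹ * Real.exp (-(ρ ^ 2 * (x ^ 2 + z ^ 2) - 2 * ρ * x * z) / (2 * (1 - ρ ^ 2)))

/-- The Mehler kernel on `ℝⁿ`: the density, with respect to `γ ⊗ γ`, of a pair of `ρ`-correlated
standard Gaussian vectors. -/
def mker (n : ℕ) (ρ : ℝ) (x z : Fin n → ℝ) : ℝ := ∏ i, mk1 ρ (x i) (z i)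

lemma mk1_pos (ρ x z : ℝ) (h : ρ ^ 2 < 1) : 0 < mk1 ρ x z := by
  unfold mk1
  have : 0 < √(1 - ρ ^ 2) := Real.sqrt_pos.2 (by linarith)
  positivity

lemma mker_pos (n : ℕ) (ρ : ℝ) (x z : Fin n → ℝ) (h : ρ ^ 2 < 1) : 0 < mker n ρ x z :=
  Finset.prod_pos fun _ _ => mk1_pos _ _ _ h

lemma continuous_mk1 (ρ : ℝ) : Continuous fun p : ℝ × ℝ => mk1 ρ p.1 p.2 := by
  unfold mk1; fun_prop

lemma continuous_mker (n : ℕ) (ρ : ℝ) :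
    Continuous fun p : (Fin n → ℝ) × (Fin n → ℝ) => mker n ρ p.1 p.2 := by
  unfold mker
  refine continuous_finsetProd _ fun i _ => ?_
  exact (continuous_mk1 ρ).comp (by fun_prop : Continuous fun p : (Fin n → ℝ) × (Fin n → ℝ) => (p.1 i, p.2 i))

lemma mehler1 (ρ σ x : ℝ) (hσ : 0 < σ) (h : ρ ^ 2 + σ ^ 2 = 1) :
    (gaussianReal 0 1).map (fun y => ρ * x + σ * y) =
      (gaussianReal 0 1).withDensity fun z => ENNReal.ofReal (mk1 ρ x z) := by
  have e : (fun y => ρ * x + σ * y) = (fun y => ρ * x + y) ∘ (fun y => σ * y) := rfl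
  rw [e, ← Measure.map_map (by fun_prop) (by fun_prop), gaussianReal_map_const_mul,
    gaussianReal_map_const_add]
  rw [gaussianReal_of_var_ne_zero _ (by
      intro h0; have := congrArg NNReal.toReal h0; simp at this; exact hσ.ne' this),
    gaussianReal_of_var_ne_zero _ one_ne_zero]
  rw [← withDensity_mul _ (measurable_gaussianPDF _ _)
    (by have := (continuous_mk1 ρ).comp (by fun_prop : Continuous fun z => (x, z))
        exact this.measurable.ennreal_ofReal)]
  congr 1
  ext z
  simp only [gaussianPDF, Pi.mul_apply]
  rw [← ENNReal.ofReal_mul (gaussianPDFReal_nonneg _ _ _)]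
  congr 1
  simp only [gaussianPDFReal, mk1]
  have h1 : 1 - ρ ^ 2 = σ ^ 2 := by linarith
  rw [h1]
  have hρ : ρ ^ 2 = 1 - σ ^ 2 := by linarith
  simp only [NNReal.coe_mul, NNReal.coe_mk, NNReal.coe_one]
  rw [mul_one, Real.sqrt_mul (by positivity) (σ^2), mul_one, mul_inv]
  rw [mul_mul_mul_comm, ← Real.exp_add]
  congr 2
  rw [hρ]
  field_simp
  linear_combination (-1) * x ^ 2 * hρ

/-- For fixed `x`, the vector `ρ x + σ Y` has density `mker n ρ x` with respect to `γ`. -/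
lemma mehler (n : ℕ) (ρ σ : ℝ) (hσ : 0 < σ) (h : ρ ^ 2 + σ ^ 2 = 1) (x : Fin n → ℝ) :
    (γ n).map (fun y => ρ • x + σ • y) =
      (γ n).withDensity fun z => ENNReal.ofReal (mker n ρ x z) := by
  have hm : (fun y : Fin n → ℝ => ρ • x + σ • y) = fun y i => ρ * x i + σ * y i := rfl
  rw [hm]
  unfold γ _root_.stdGaussian
  have key := fun i => mehler1 ρ σ (x i) hσ h
  have : ∀ i, IsProbabilityMeasure ((gaussianReal 0 1).map (fun y => ρ * x i + σ * y)) := fun i =>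
    Measure.isProbabilityMeasure_map (by fun_prop)
  rw [Measure.pi_map_pi (f := fun i y => ρ * x i + σ * y) (fun i => by fun_prop)]
  simp_rw [key]
  have hc : ∀ i, Measurable (mk1 ρ (x i)) := fun i => by
    have := (continuous_mk1 ρ).comp (by fun_prop : Continuous fun z => (x i, z))
    exact this.measurable
  have h0 : ∀ i t, 0 ≤ mk1 ρ (x i) t := fun i t => (mk1_pos _ _ _ (by nlinarith)).le
  refine pi_withDensity_ofReal n _ (fun i => mk1 ρ (x i)) h0 fun i => ?_
  refine ⟨(hc i).aestronglyMeasurable, ?_⟩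
  have := this i
  rw [key] at this
  have h2 := this.measure_univ
  rw [withDensity_apply _ MeasurableSet.univ, Measure.restrict_univ] at h2
  rw [hasFiniteIntegral_iff_ofReal (Filter.Eventually.of_forall (h0 i)), h2]
  simp

/-! ### One-dimensional monotone transport and Talagrand's transport inequality -/

/-- The distribution function of the density `q` on the line. -/
def cdfOf (q : ℝ → ℝ) (y : ℝ) : ℝ := ∫ t in Set.Iic y, q t

lemma cdfOf_hasDerivAt {q : ℝ → ℝ} (hc : Continuous q) (hi : Integrable q) (y : ℝ) : HasDerivAt (cdfOf q) (q y) y := by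
  have e : cdfOf q = fun y => cdfOf q 0 + ∫ t in (0:ℝ)..y, q t := by
    ext y
    rw [intervalIntegral.integral_Iic_sub_Iic hi.integrableOn hi.integrableOn |>.symm]
    simp [cdfOf]
  rw [e]
  exact (intervalIntegral.integral_hasDerivAt_right (hc.intervalIntegrable _ _)
    (hc.stronglyMeasurableAtFilter _ _) hc.continuousAt).const_add _

lemma cdfOf_strictMono {q : ℝ → ℝ} (hc : Continuous q) (h0 : ∀ t, 0 < q t) (hi : Integrable q) :
    StrictMono (cdfOf q) :=
  strictMono_of_hasDerivAt_pos (cdfOf_hasDerivAt hc hi) h0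

lemma cdfOf_mem {q : ℝ → ℝ} (hc : Continuous q) (h0 : ∀ t, 0 < q t) (hi : Integrable q)
    (h1 : ∫ t, q t = 1) (y : ℝ) : cdfOf q y ∈ Set.Ioo (0:ℝ) 1 := by
  have hm := cdfOf_strictMono hc h0 hi
  have a : ∀ y, 0 ≤ cdfOf q y := fun y => integral_nonneg fun t => (h0 t).le
  have b : ∀ y, cdfOf q y ≤ 1 := fun y => by
    rw [← h1]; exact setIntegral_le_integral hi (Filter.Eventually.of_forall fun t => (h0 t).le)
  exact ⟨(a (y-1)).trans_lt (hm (by linarith)), (hm (show y < y + 1 by linarith)).trans_le (b _)⟩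

lemma cdfOf_surj {q : ℝ → ℝ} (hc : Continuous q) (hi : Integrable q) (h1 : ∫ t, q t = 1)
    (c : ℝ) (hcc : c ∈ Set.Ioo (0:ℝ) 1) : ∃ y, cdfOf q y = c := by
  have hcont : Continuous (cdfOf q) :=
    continuous_iff_continuousAt.2 fun y => (cdfOf_hasDerivAt hc hi y).continuousAt
  have ht : Filter.Tendsto (cdfOf q) Filter.atTop (nhds 1) := by
    rw [← h1]
    exact (aecover_Iic Filter.tendsto_id).integral_tendsto_of_countably_generated hi
  have hb : Filter.Tendsto (cdfOf q) Filter.atBot (nhds 0) := by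
    have h2 : Filter.Tendsto (fun y => ∫ t in Set.Ioi y, q t) Filter.atBot (nhds 1) := by
      rw [← h1]
      exact (aecover_Ioi Filter.tendsto_id).integral_tendsto_of_countably_generated hi
    have : cdfOf q = fun y => 1 - ∫ t in Set.Ioi y, q t := by
      ext y
      rw [← h1, ← integral_add_compl (measurableSet_Iic (a := y)) hi, Set.compl_Iic]
      simp [cdfOf]
    rw [this]
    simpa using h2.const_sub 1
  obtain ⟨a, ha⟩ := (hb.eventually (gt_mem_nhds hcc.1)).exists
  obtain ⟨b, hb_lt⟩ := (ht.eventually (lt_mem_nhds hcc.2)).exists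
  exact mem_range_of_exists_le_of_exists_ge hcont ⟨a, ha.le⟩ ⟨b, hb_lt.le⟩

/-- The standard Gaussian density on the line. -/
abbrev gp : ℝ → ℝ := gaussianPDFReal 0 1

lemma gp_eq (x : ℝ) : gp x = (√(2 * Real.pi))⁻¹ * Real.exp (-x ^ 2 / 2) := by
  simp [gp, gaussianPDFReal]

lemma gp_pos (x : ℝ) : 0 < gp x := gaussianPDFReal_pos _ _ _ one_ne_zero

lemma gp_cont : Continuous gp := by
  have : gp = fun x => (√(2 * Real.pi))⁻¹ * Real.exp (-x ^ 2 / 2) := funext gp_eq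
  rw [this]; fun_prop

lemma gp_deriv (x : ℝ) : HasDerivAt gp (-x * gp x) x := by
  have e : gp = fun x => (√(2 * Real.pi))⁻¹ * Real.exp (-x ^ 2 / 2) := funext gp_eq
  have : HasDerivAt (fun x : ℝ => -x ^ 2 / 2) (-x) x := by
    have := ((hasDerivAt_pow 2 x).neg).div_const 2
    refine this.congr_deriv ?_
    norm_num; ring
  rw [gp_eq, e]
  convert! (this.exp.const_mul _) using 1; ring

lemma gp_int : Integrable gp := integrable_gaussianPDFReal 0 1

lemma integrable_gauss_iff (f : ℝ → ℝ) :
    Integrable f (gaussianReal 0 1) ↔ Integrable (fun x => gp x * f x) := by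
  rw [gaussianReal_of_var_ne_zero _ one_ne_zero]
  rw [integrable_withDensity_iff_integrable_smul' (measurable_gaussianPDF _ _)
    (Filter.Eventually.of_forall fun _ => gaussianPDF_lt_top)]
  simp [toReal_gaussianPDF]

lemma integral_gauss (f : ℝ → ℝ) :
    ∫ x, f x ∂gaussianReal 0 1 = ∫ x, gp x * f x :=
  integral_gaussianReal_eq_integral_smul one_ne_zero

/-- If the derivative of `-f` lies below an integrable `g`, with `f` itself integrable, then
`∫ g ≥ 0`: the boundary terms `f(R) - f(-R)` cannot stay bounded away from zero as `R → ∞`. -/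
lemma nonneg_of_deriv_bound (g f f' : ℝ → ℝ) (hg : Integrable g) (hf : Integrable f)
    (hd : ∀ x, HasDerivAt f (f' x) x) (hf'c : Continuous f') (h : ∀ x, - f' x ≤ g x) :
    0 ≤ ∫ x, g x := by
  by_contra! hneg
  set ε := -(∫ x, g x) / 2 with hε
  have hε0 : 0 < ε := by linarith
  have ht : Filter.Tendsto (fun R : ℝ => ∫ x in (-R)..R, g x) Filter.atTop (nhds (∫ x, g x)) :=
    intervalIntegral_tendsto_integral hg Filter.tendsto_neg_atTop_atBot Filter.tendsto_id
  have he := ht.eventually (gt_mem_nhds (show ∫ x, g x < -ε by linarith))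
  obtain ⟨R0, hR0⟩ := Filter.eventually_atTop.1 (he.and (Filter.eventually_ge_atTop (0:ℝ)))
  have hk : Integrable (fun R : ℝ => f R - f (-R)) := hf.sub hf.comp_neg
  have hlow : ∀ R ∈ Set.Ioi R0, ε ≤ f R - f (-R) := by
    intro R hR
    obtain ⟨h1, h2⟩ := hR0 R (le_of_lt hR)
    have h3 : ∫ x in (-R)..R, f' x = f R - f (-R) :=
      intervalIntegral.integral_eq_sub_of_hasDerivAt (fun x _ => hd x)
        (hf'c.intervalIntegrable _ _)
    have h4 : ∫ x in (-R)..R, -f' x ≤ ∫ x in (-R)..R, g x :=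
      intervalIntegral.integral_mono (by linarith) (hf'c.neg.intervalIntegrable _ _)
        hg.intervalIntegrable h
    rw [intervalIntegral.integral_neg, h3] at h4
    linarith
  have hconst : IntegrableOn (fun _ : ℝ => ε) (Set.Ioi R0) := by
    refine Integrable.mono' (hk.integrableOn (s := Set.Ioi R0)) (by fun_prop) ?_
    filter_upwards [ae_restrict_mem measurableSet_Ioi] with R hR
    rw [Real.norm_of_nonneg hε0.le]; exact hlow R hR
  rw [integrableOn_const_iff] at hconst
  simp at hconst
  exact hε0.ne' hconst

lemma transport_density {w : ℝ → ℝ} {δ M : ℝ} (hc : Continuous w) (hδ : 0 < δ)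
    (hb : ∀ t, δ ≤ w t ∧ w t ≤ M) (h1 : ∫ t, w t ∂gaussianReal 0 1 = 1) :
    Continuous (fun t => gp t * w t) ∧ (∀ t, 0 < gp t * w t) ∧ Integrable (fun t => gp t * w t) ∧
      ∫ t, gp t * w t = 1 := by
  have hpos : ∀ t, 0 < gp t * w t := fun t => mul_pos (gp_pos t) (hδ.trans_le (hb t).1)
  refine ⟨gp_cont.mul hc, hpos, ?_, by rw [← integral_gauss, h1]⟩
  by_contra h
  rw [integral_gauss, integral_undef h] at h1
  norm_num at h1

/-- The increasing rearrangement `T` of the Gaussian onto the density `w`, obtained by matching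
distribution functions; the derivative is that of the implicit relation between them. -/
lemma exists_transport_one {w : ℝ → ℝ} {δ M : ℝ} (hc : Continuous w) (hδ : 0 < δ)
    (hb : ∀ t, δ ≤ w t ∧ w t ≤ M) (h1 : ∫ t, w t ∂gaussianReal 0 1 = 1) :
    ∃ T : ℝ → ℝ, (∀ x, cdfOf (fun t => gp t * w t) (T x) = cdfOf gp x) ∧
      (gaussianReal 0 1).map T = (gaussianReal 0 1).withDensity (fun t => ENNReal.ofReal (w t)) ∧
      Continuous T ∧ ∀ x, HasDerivAt T (gp x / (gp (T x) * w (T x))) x := by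
  obtain ⟨qc, q0, qi, q1⟩ := transport_density hc hδ hb h1
  have p1 : ∫ t, gp t = 1 := integral_gaussianPDFReal_eq_one 0 one_ne_zero
  have hT : ∀ x, ∃ y, cdfOf (fun t => gp t * w t) y = cdfOf gp x := fun x =>
    cdfOf_surj qc qi q1 _ (cdfOf_mem gp_cont gp_pos gp_int p1 x)
  have hU : ∀ y, ∃ x, cdfOf gp x = cdfOf (fun t => gp t * w t) y := fun y =>
    cdfOf_surj gp_cont gp_int p1 _ (cdfOf_mem qc q0 qi q1 y)
  choose T hT using hT
  choose U hU using hU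
  have mp := cdfOf_strictMono gp_cont gp_pos gp_int
  have mq := cdfOf_strictMono qc q0 qi
  have hmono : ∀ x y, T x ≤ y ↔ x ≤ U y := fun x y => by
    rw [← mq.le_iff_le, hT, ← hU, mp.le_iff_le]
  have TU : ∀ y, T (U y) = y := fun y => mq.injective (by rw [hT, hU])
  have Tm : Monotone T := fun a b hab => by
    rw [← mq.le_iff_le, hT, hT]; exact mp.monotone hab
  have Tc : Continuous T := Tm.continuous_of_surjective fun y => ⟨U y, TU y⟩
  refine ⟨T, hT, ?_, Tc, fun x => ?_⟩
  · have : IsFiniteMeasure ((gaussianReal 0 1).withDensity (fun t => ENNReal.ofReal (w t))) :=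
      isFiniteMeasure_withDensity_ofReal (((integrable_gauss_iff w).2 qi).2)
    have : IsProbabilityMeasure ((gaussianReal 0 1).map T) :=
      Measure.isProbabilityMeasure_map Tc.aemeasurable
    refine Measure.ext_of_Iic _ _ fun y => ?_
    rw [Measure.map_apply Tc.measurable measurableSet_Iic]
    have : T ⁻¹' Set.Iic y = Set.Iic (U y) := by ext x; exact hmono x y
    rw [this, gaussianReal_apply_eq_integral _ one_ne_zero]
    have e1 : ∫ t in Set.Iic (U y), gaussianPDFReal 0 1 t = cdfOf (fun t => gp t * w t) y := hU y
    rw [e1, withDensity_apply _ measurableSet_Iic, ← ofReal_integral_eq_lintegral_ofReal]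
    · congr 1
      rw [← integral_indicator measurableSet_Iic, integral_gauss, cdfOf,
        ← integral_indicator measurableSet_Iic]
      congr 1; ext t
      by_cases ht : t ∈ Set.Iic y <;> simp [ht, Set.indicator]
    · exact ((integrable_gauss_iff w).2 qi).restrict
    · exact Filter.Eventually.of_forall fun t => (hδ.le.trans (hb t).1)
  · have hs : HasStrictDerivAt (cdfOf (fun t => gp t * w t)) (gp (T x) * w (T x)) (T x) :=
      hasStrictDerivAt_of_hasDerivAt_of_continuousAt
        (Filter.Eventually.of_forall fun y => cdfOf_hasDerivAt qc qi y) qc.continuousAt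
    have hne : gp (T x) * w (T x) ≠ 0 := (q0 _).ne'
    have hl := hs.to_localInverse hne
    have hinv := (hs.hasStrictFDerivAt_equiv hne).eventually_left_inverse
    have hev : ∀ᶠ x' in nhds x, T x' = hs.localInverse _ _ _ hne (cdfOf gp x') := by
      filter_upwards [Tc.continuousAt.eventually hinv] with x' hx'
      rw [← hT]; exact hx'.symm
    have hl' := hl.hasDerivAt
    rw [hT] at hl'
    have := hl'.comp x (cdfOf_hasDerivAt gp_cont gp_int x)
    refine (this.congr_of_eventuallyEq hev).congr_deriv ?_
    rw [div_eq_mul_inv, mul_comm]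

/-- Talagrand's transport inequality on the line, for the monotone map. -/
lemma transport_cost {w : ℝ → ℝ} {δ M : ℝ} (hc : Continuous w) (hδ : 0 < δ)
    (hb : ∀ t, δ ≤ w t ∧ w t ≤ M) (h1 : ∫ t, w t ∂gaussianReal 0 1 = 1)
    (T : ℝ → ℝ)
    (hmap : (gaussianReal 0 1).map T =
      (gaussianReal 0 1).withDensity (fun t => ENNReal.ofReal (w t)))
    (Tc : Continuous T) (hd : ∀ x, HasDerivAt T (gp x / (gp (T x) * w (T x))) x) :
    Integrable (fun x => (T x - x) ^ 2) (gaussianReal 0 1) ∧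
      ∫ x, (T x - x) ^ 2 ∂gaussianReal 0 1 ≤ 2 * ∫ t, w t * Real.log (w t) ∂gaussianReal 0 1 := by
  obtain ⟨qc, q0, qi, q1⟩ := transport_density hc hδ hb h1
  have hw0 : ∀ t, 0 < w t := fun t => hδ.trans_le (hb t).1
  have hwd : ∀ φ : ℝ → ℝ, Continuous φ → Integrable (fun t => w t * φ t) (gaussianReal 0 1) →
      Integrable (fun x => φ (T x)) (gaussianReal 0 1) ∧
      ∫ x, φ (T x) ∂gaussianReal 0 1 = ∫ t, w t * φ t ∂gaussianReal 0 1 := by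
    intro φ hφ hint
    constructor
    · have : Integrable φ ((gaussianReal 0 1).map T) := by
        rw [hmap, integrable_withDensity_iff_integrable_smul' (by fun_prop)
          (Filter.Eventually.of_forall fun _ => ENNReal.ofReal_lt_top)]
        simpa [ENNReal.toReal_ofReal (hw0 _).le] using hint
      exact this.comp_measurable Tc.measurable
    · rw [← integral_map Tc.aemeasurable hφ.aestronglyMeasurable, hmap,
        integral_withDensity_eq_integral_toReal_smul (by fun_prop)
          (Filter.Eventually.of_forall fun _ => ENNReal.ofReal_lt_top)]
      simp [ENNReal.toReal_ofReal (hw0 _).le]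
  have hwbd : ∀ φ : ℝ → ℝ, Integrable φ (gaussianReal 0 1) →
      Integrable (fun t => w t * φ t) (gaussianReal 0 1) := fun φ hφ =>
    hφ.bdd_mul hc.aestronglyMeasurable (c := M)
      (Filter.Eventually.of_forall fun t => by
        rw [Real.norm_of_nonneg (hw0 t).le]; exact (hb t).2)
  have id2 : MemLp (fun x : ℝ => x) 2 (gaussianReal 0 1) := by
    exact_mod_cast memLp_id_gaussianReal (μ := 0) (v := 1) 2
  have hlogc : Continuous fun t => Real.log (w t) := hc.log fun t => (hw0 t).ne'
  have hlogi : Integrable (fun t => Real.log (w t)) (gaussianReal 0 1) := by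
    refine Integrable.of_bound hlogc.aestronglyMeasurable (max |Real.log δ| |Real.log M|)
      (Filter.Eventually.of_forall fun t => ?_)
    exact abs_le_max_abs_abs (Real.log_le_log hδ (hb t).1) (Real.log_le_log (hw0 t) (hb t).2)
  have T2 : MemLp T 2 (gaussianReal 0 1) :=
    (memLp_two_iff_integrable_sq Tc.aestronglyMeasurable).2
      (hwd (fun t => t ^ 2) (by fun_prop) (hwbd _ id2.integrable_sq)).1
  have S2 : MemLp (fun x => T x - x) 2 (gaussianReal 0 1) := T2.sub id2
  have Si : Integrable (fun x => T x - x) (gaussianReal 0 1) := S2.integrable (by norm_num)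
  obtain ⟨li, le⟩ := hwd (fun t => Real.log (w t)) hlogc (hwbd _ hlogi)
  refine ⟨S2.integrable_sq, ?_⟩
  have key : 0 ≤ ∫ x, gp x * (Real.log (w (T x)) - (T x - x) ^ 2 / 2) := by
    refine nonneg_of_deriv_bound _ (fun x => gp x * (T x - x))
      (fun x => (-x * gp x) * (T x - x) + gp x * (gp x / (gp (T x) * w (T x)) - 1))
      ?_ ?_ ?_ ?_ ?_
    · exact (integrable_gauss_iff _).1 (li.sub (S2.integrable_sq.div_const 2))
    · exact (integrable_gauss_iff _).1 Si
    · intro x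
      exact (gp_deriv x).mul ((hd x).sub (hasDerivAt_id x))
    · have : Continuous fun x => gp x / (gp (T x) * w (T x)) :=
        gp_cont.div (qc.comp Tc) fun x => (q0 _).ne'
      have g := gp_cont
      fun_prop
    · intro x
      set D := gp x / (gp (T x) * w (T x)) with hD
      have hD0 : 0 < D := div_pos (gp_pos x) (q0 _)
      have e : Real.log (w (T x)) = (T x ^ 2 - x ^ 2) / 2 - Real.log D := by
        rw [hD, Real.log_div (gp_pos x).ne' (q0 _).ne', Real.log_mul (gp_pos _).ne' (hw0 _).ne',
          gp_eq, gp_eq, Real.log_mul (by positivity) (Real.exp_ne_zero _),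
          Real.log_mul (by positivity) (Real.exp_ne_zero _), Real.log_exp, Real.log_exp]
        ring
      have hl := Real.log_le_sub_one_of_pos hD0
      rw [e]
      have := mul_le_mul_of_nonneg_left hl (gp_pos x).le
      nlinarith
  rw [← integral_gauss, integral_sub li (S2.integrable_sq.div_const 2), le, integral_div] at key
  linarith

/-- The one-dimensional transports of a measurable family of densities are jointly measurable in the
parameter, as needed to compose them into a triangular map. -/
lemma transport_param {S : Type*} [MeasurableSpace S] (w : S → ℝ → ℝ)
    (hm : Measurable (Function.uncurry w)) (hc : ∀ s, Continuous (w s)) (δ M : ℝ) (hδ : 0 < δ)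
    (hb : ∀ s t, δ ≤ w s t ∧ w s t ≤ M) (h1 : ∀ s, ∫ t, w s t ∂gaussianReal 0 1 = 1) :
    ∃ T : S → ℝ → ℝ, Measurable (Function.uncurry T) ∧ ∀ s,
      (gaussianReal 0 1).map (T s) =
        (gaussianReal 0 1).withDensity (fun t => ENNReal.ofReal (w s t)) ∧
      Integrable (fun x => (T s x - x) ^ 2) (gaussianReal 0 1) ∧
      ∫ x, (T s x - x) ^ 2 ∂gaussianReal 0 1 ≤
        2 * ∫ t, w s t * Real.log (w s t) ∂gaussianReal 0 1 := by
  choose T hT using fun s => exists_transport_one (hc s) hδ (hb s) (h1 s)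
  refine ⟨T, ?_, fun s => ⟨(hT s).2.1,
    transport_cost (hc s) hδ (hb s) (h1 s) (T s) (hT s).2.1 (hT s).2.2.1 (hT s).2.2.2⟩⟩
  refine measurable_of_Iic fun y => ?_
  have : Function.uncurry T ⁻¹' Set.Iic y =
      {p : S × ℝ | cdfOf gp p.2 ≤ cdfOf (fun t => gp t * w p.1 t) y} := by
    ext ⟨s, x⟩
    obtain ⟨qc, q0, qi, q1⟩ := transport_density (hc s) hδ (hb s) (h1 s)
    simp only [Set.mem_preimage, Function.uncurry, Set.mem_Iic, Set.mem_ofPred_eq]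
    rw [← (hT s).1 x, (cdfOf_strictMono qc q0 qi).le_iff_le]
  rw [this]
  refine measurableSet_le ?_ ?_
  · have : Continuous (cdfOf gp) :=
      continuous_iff_continuousAt.2 fun y => (cdfOf_hasDerivAt gp_cont gp_int y).continuousAt
    exact this.measurable.comp measurable_snd
  · have hsm : StronglyMeasurable fun p : S × ℝ => gp p.2 * w p.1 p.2 :=
      ((gp_cont.measurable.comp measurable_snd).mul hm).stronglyMeasurable
    have := (hsm.integral_prod_right' (ν := volume.restrict (Set.Iic y))).measurable
    exact this.comp measurable_fst

/-! ### The Knothe map in dimension `n` and its transport cost -/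

lemma integral_transport {α : Type*} [MeasurableSpace α] {μ : Measure α} {T : α → α}
    (hT : Measurable T) {u : α → ℝ} (hu : Measurable u) (h0 : ∀ x, 0 ≤ u x)
    (h : μ.map T = μ.withDensity fun x => ENNReal.ofReal (u x)) {φ : α → ℝ} (hφ : Measurable φ) :
    ∫ x, φ (T x) ∂μ = ∫ x, u x * φ x ∂μ := by
  rw [← integral_map hT.aemeasurable hφ.aestronglyMeasurable, h,
    integral_withDensity_eq_integral_toReal_smul hu.ennreal_ofReal
      (Filter.Eventually.of_forall fun _ => ENNReal.ofReal_lt_top)]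
  simp [ENNReal.toReal_ofReal, h0]

lemma cons_mp (n : ℕ) :
    MeasurePreserving (fun p : (Fin n → ℝ) × ℝ => (Fin.cons p.2 p.1 : Fin (n + 1) → ℝ))
      ((γ n).prod (gaussianReal 0 1)) (γ (n + 1)) := by
  have h := (measurePreserving_piFinSuccAbove (fun _ : Fin (n + 1) => gaussianReal 0 1) 0).symm
  have h2 := h.comp (Measure.measurePreserving_swap (μ := γ n) (ν := gaussianReal 0 1))
  have e : (fun p : (Fin n → ℝ) × ℝ => (Fin.cons p.2 p.1 : Fin (n + 1) → ℝ)) =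
      (MeasurableEquiv.piFinSuccAbove (fun _ => ℝ) 0).symm ∘ Prod.swap := by
    ext p i; simp [MeasurableEquiv.piFinSuccAbove]
  rw [e]
  exact h2

lemma integrable_of_bdd {α : Type*} [MeasurableSpace α] {μ : Measure α} [IsFiniteMeasure μ]
    {f : α → ℝ} (hf : Measurable f) (C : ℝ) (h : ∀ x, |f x| ≤ C) : Integrable f μ :=
  Integrable.of_bound hf.aestronglyMeasurable C (Filter.Eventually.of_forall h)

lemma abs_mul_log_le {δ M t : ℝ} (hδ : 0 < δ) (h1 : δ ≤ t) (h2 : t ≤ M) :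
    |t * Real.log t| ≤ M * (|Real.log δ| + |Real.log M|) := by
  have ht : 0 < t := hδ.trans_le h1
  rw [abs_mul, abs_of_pos ht]
  refine mul_le_mul h2 ?_ (abs_nonneg _) (ht.le.trans h2)
  have l1 := Real.log_le_log hδ h1
  have l2 := Real.log_le_log ht h2
  rw [abs_le]
  constructor
  · linarith [neg_abs_le (Real.log δ), abs_nonneg (Real.log M)]
  · linarith [le_abs_self (Real.log M), abs_nonneg (Real.log δ)]

/-- Knothe's triangular transport of `γ` to `u γ`, with Talagrand's transport-entropy bound. -/
lemma knothe (n : ℕ) : ∀ (u : (Fin n → ℝ) → ℝ) (_ : Continuous u) (δ M : ℝ) (_ : 0 < δ)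
    (_ : ∀ x, δ ≤ u x ∧ u x ≤ M) (_ : ∫ x, u x ∂γ n = 1),
    ∃ T : (Fin n → ℝ) → (Fin n → ℝ), Measurable T ∧
      (γ n).map T = (γ n).withDensity (fun x => ENNReal.ofReal (u x)) ∧
      (∀ i, Integrable (fun x => (T x i - x i) ^ 2) (γ n)) ∧
      ∑ i, ∫ x, (T x i - x i) ^ 2 ∂γ n ≤ 2 * ∫ x, u x * Real.log (u x) ∂γ n := by
  induction n with
  | zero =>
    intro u hc δ M hδ hb h1
    have hu : ∀ x, u x = 1 := by
      intro x
      have e : u = fun _ => u x := funext fun y => congrArg u (Subsingleton.elim _ _)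
      rw [e] at h1
      simpa using h1
    refine ⟨id, measurable_id, ?_, fun i => i.elim0, ?_⟩
    · simp [hu]
    · simp [hu]
  | succ n ih =>
    intro u hc δ M hδ hb h1
    have hu0 : ∀ x, 0 < u x := fun x => hδ.trans_le (hb x).1
    have mp := cons_mp n
    set U : (Fin n → ℝ) → ℝ → ℝ := fun y t => u (Fin.cons t y) with hU
    have hcons : Continuous fun p : (Fin n → ℝ) × ℝ => (Fin.cons p.2 p.1 : Fin (n + 1) → ℝ) := by
      fun_prop
    have Uc : Continuous (Function.uncurry U) := hc.comp hcons
    have Ub : ∀ y t, δ ≤ U y t ∧ U y t ≤ M := fun y t => hb _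
    have U0 : ∀ y t, 0 < U y t := fun y t => hu0 _
    have hM : 0 < M := (U0 0 0).trans_le (Ub 0 0).2
    have Ui : ∀ y, Integrable (U y) (gaussianReal 0 1) := fun y =>
      integrable_of_bdd (Uc.comp (by fun_prop : Continuous fun t => (y, t))).measurable M
        fun t => by show |U y t| ≤ M; rw [abs_of_pos (U0 y t)]; exact (Ub y t).2
    set v : (Fin n → ℝ) → ℝ := fun y => ∫ t, U y t ∂gaussianReal 0 1 with hv
    have vc : Continuous v := by
      refine continuous_of_dominated (bound := fun _ => M) (fun y => (Ui y).1) ?_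
        (integrable_const _) ?_
      · exact fun y => Filter.Eventually.of_forall fun t => by
          rw [Real.norm_eq_abs, abs_of_pos (U0 y t)]; exact (Ub y t).2
      · exact Filter.Eventually.of_forall fun t =>
          Uc.comp (by fun_prop : Continuous fun y : Fin n → ℝ => (y, t))
    have vb : ∀ y, δ ≤ v y ∧ v y ≤ M := by
      intro y
      constructor
      · have := integral_mono (integrable_const δ) (Ui y) fun t => (Ub y t).1
        simpa using this
      · have := integral_mono (Ui y) (integrable_const M) fun t => (Ub y t).2
        simpa using this
    have v0 : ∀ y, 0 < v y := fun y => hδ.trans_le (vb y).1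
    have UPi : Integrable (Function.uncurry U) ((γ n).prod (gaussianReal 0 1)) :=
      integrable_of_bdd Uc.measurable M fun p => by
        show |U p.1 p.2| ≤ M
        rw [abs_of_pos (U0 _ _)]; exact (Ub _ _).2
    have v1 : ∫ y, v y ∂γ n = 1 := by
      rw [← h1, ← mp.map_eq, integral_map mp.measurable.aemeasurable hc.measurable.aestronglyMeasurable]
      exact (integral_prod _ UPi).symm
    obtain ⟨T', T'm, T'map, T'i, T'c⟩ := ih v vc δ M hδ vb v1
    set w : (Fin n → ℝ) → ℝ → ℝ := fun y t => U y t / v y with hw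
    have wc2 : Continuous (Function.uncurry w) := by
      refine Uc.div (vc.comp continuous_fst) fun p => (v0 _).ne'
    have wb : ∀ y t, δ / M ≤ w y t ∧ w y t ≤ M / δ := fun y t =>
      ⟨div_le_div₀ (U0 y t).le (Ub y t).1 (v0 y) (vb y).2,
        div_le_div₀ hM.le (Ub y t).2 hδ (vb y).1⟩
    have w0 : ∀ y t, 0 < w y t := fun y t => div_pos (U0 y t) (v0 y)
    have wi1 : ∀ y, ∫ t, w y t ∂gaussianReal 0 1 = 1 := by
      intro y
      simp only [hw]
      rw [integral_div]
      exact div_self (v0 y).ne'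
    obtain ⟨T, Tm, hT⟩ := transport_param w wc2.measurable
      (fun y => wc2.comp (by fun_prop : Continuous fun t => (y, t))) (δ / M) (M / δ)
      (by positivity) wb wi1
    -- the triangular map, in the product coordinates
    set Q : (Fin n → ℝ) × ℝ → (Fin (n + 1) → ℝ) := fun p => Fin.cons (T (T' p.1) p.2) (T' p.1) with hQ
    have Qm : Measurable Q := by
      have a : Measurable fun p : (Fin n → ℝ) × ℝ => (T' p.1, T (T' p.1) p.2) :=
        (T'm.comp measurable_fst).prodMk
          (Tm.comp ((T'm.comp measurable_fst).prodMk measurable_snd))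
      exact hcons.measurable.comp a
    set P : (Fin (n + 1) → ℝ) → (Fin n → ℝ) × ℝ := fun x => (fun i => x i.succ, x 0) with hP
    have Pm : Measurable P := by fun_prop
    have PC : ∀ p : (Fin n → ℝ) × ℝ, P (Fin.cons p.2 p.1) = p := by
      intro p; simp [hP]
    have tr : ∀ φ : (Fin (n + 1) → ℝ) → ℝ, Measurable φ →
        ∫ x, φ x ∂γ (n + 1) = ∫ p, φ (Fin.cons p.2 p.1) ∂(γ n).prod (gaussianReal 0 1) := by
      intro φ hφ
      rw [← mp.map_eq, integral_map mp.measurable.aemeasurable hφ.aestronglyMeasurable]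
    have ti : ∀ φ : (Fin (n + 1) → ℝ) → ℝ, Measurable φ →
        (Integrable φ (γ (n + 1)) ↔
          Integrable (fun p : (Fin n → ℝ) × ℝ => φ (Fin.cons p.2 p.1)) ((γ n).prod (gaussianReal 0 1))) := by
      intro φ hφ
      exact (mp.integrable_comp hφ.aestronglyMeasurable).symm
    have QPm : Measurable fun x => Q (P x) := Qm.comp Pm
    -- conditional entropy
    set E : (Fin n → ℝ) → ℝ := fun y => ∫ t, w y t * Real.log (w y t) ∂gaussianReal 0 1 with hE
    have wlog : ∀ y t, |w y t * Real.log (w y t)| ≤ M / δ * (|Real.log (δ / M)| + |Real.log (M / δ)|) := by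
      exact fun y t => abs_mul_log_le (by positivity) (wb y t).1 (wb y t).2
    set C := M / δ * (|Real.log (δ / M)| + |Real.log (M / δ)|) with hC
    have wlm : Measurable (Function.uncurry fun y t => w y t * Real.log (w y t)) :=
      wc2.measurable.mul (Real.measurable_log.comp wc2.measurable)
    have Em : Measurable E :=
      (wlm.stronglyMeasurable.integral_prod_right' (ν := gaussianReal 0 1)).measurable
    have Eb : ∀ y, |E y| ≤ C := by
      intro y
      have := norm_integral_le_of_norm_le_const (μ := gaussianReal 0 1)
        (f := fun t => w y t * Real.log (w y t)) (Filter.Eventually.of_forall (wlog y))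
      simpa using this
    have Tm2 : Measurable fun p : (Fin n → ℝ) × ℝ => (T (T' p.1) p.2 - p.2) ^ 2 := by
      have := Tm.comp ((T'm.comp measurable_fst).prodMk (measurable_snd : Measurable fun p : (Fin n → ℝ) × ℝ => p.2))
      exact (this.sub measurable_snd).pow_const 2
    have I0 : Integrable (fun p : (Fin n → ℝ) × ℝ => (T (T' p.1) p.2 - p.2) ^ 2)
        ((γ n).prod (gaussianReal 0 1)) := by
      rw [integrable_prod_iff Tm2.aestronglyMeasurable]
      refine ⟨Filter.Eventually.of_forall fun y => (hT (T' y)).2.1, ?_⟩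
      refine Integrable.of_bound ?_ (2 * C) (Filter.Eventually.of_forall fun y => ?_)
      · exact (Tm2.norm.stronglyMeasurable.integral_prod_right' (ν := gaussianReal 0 1)).aestronglyMeasurable
      · simp only [Real.norm_eq_abs]
        rw [abs_of_nonneg (integral_nonneg fun _ => abs_nonneg _)]
        simp only [abs_sq]
        refine ((hT (T' y)).2.2).trans ?_
        have := le_abs_self (E (T' y))
        have h3 := Eb (T' y)
        simp only [hE] at this h3
        linarith
    have mainE : ∫ p : (Fin n → ℝ) × ℝ, (T (T' p.1) p.2 - p.2) ^ 2 ∂(γ n).prod (gaussianReal 0 1)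
        ≤ 2 * ∫ y, v y * E y ∂γ n := by
      rw [integral_prod _ I0, ← integral_transport T'm vc.measurable (fun y => (v0 y).le) T'map Em,
        ← integral_const_mul]
      refine integral_mono I0.integral_prod_left ?_ fun y => (hT (T' y)).2.2
      exact (integrable_of_bdd (Em.comp T'm) C fun y => Eb _).const_mul 2
    have vE : ∀ y, v y * E y = ∫ t, U y t * Real.log (U y t) ∂gaussianReal 0 1 - v y * Real.log (v y) := by
      intro y
      have hUl : Integrable (fun t => U y t * Real.log (U y t)) (gaussianReal 0 1) := by
        refine integrable_of_bdd (f := fun t => U y t * Real.log (U y t)) ?_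
          (M * (|Real.log δ| + |Real.log M|)) fun t => ?_
        · have : Continuous (U y) := Uc.comp (by fun_prop : Continuous fun t => (y, t))
          exact this.measurable.mul (Real.measurable_log.comp this.measurable)
        · exact abs_mul_log_le hδ (Ub y t).1 (Ub y t).2
      have e1 : v y * Real.log (v y) = ∫ t, U y t * Real.log (v y) ∂gaussianReal 0 1 := by
        rw [integral_mul_const]
      rw [e1, ← integral_sub hUl ((Ui y).mul_const _), hE, ← integral_const_mul]
      refine integral_congr_ae (Filter.Eventually.of_forall fun t => ?_)
      simp only [hw]
      rw [Real.log_div (U0 y t).ne' (v0 y).ne']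
      have := (v0 y).ne'
      field_simp
    have ulb : ∀ x, |u x * Real.log (u x)| ≤ M * (|Real.log δ| + |Real.log M|) := fun x =>
      abs_mul_log_le hδ (hb x).1 (hb x).2
    have vlb : ∀ x, |v x * Real.log (v x)| ≤ M * (|Real.log δ| + |Real.log M|) := fun x =>
      abs_mul_log_le hδ (vb x).1 (vb x).2
    have ulm : Measurable fun x => u x * Real.log (u x) :=
      hc.measurable.mul (Real.measurable_log.comp hc.measurable)
    have ulI : Integrable (fun p : (Fin n → ℝ) × ℝ => U p.1 p.2 * Real.log (U p.1 p.2))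
        ((γ n).prod (gaussianReal 0 1)) :=
      integrable_of_bdd (ulm.comp hcons.measurable) _ fun p => ulb _
    have chain : ∫ y, v y * E y ∂γ n =
        ∫ x, u x * Real.log (u x) ∂γ (n + 1) - ∫ y, v y * Real.log (v y) ∂γ n := by
      simp_rw [vE]
      have vlI : Integrable (fun y => v y * Real.log (v y)) (γ n) :=
        integrable_of_bdd (vc.measurable.mul (Real.measurable_log.comp vc.measurable)) _ vlb
      have ulI' : Integrable (fun y => ∫ t, U y t * Real.log (U y t) ∂gaussianReal 0 1) (γ n) :=
        ulI.integral_prod_left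
      rw [integral_sub ulI' vlI]
      congr 1
      rw [tr _ ulm]
      exact (integral_prod _ ulI).symm
    have Im : ∀ i, Measurable fun x : Fin (n + 1) → ℝ => (Q (P x) i - x i) ^ 2 := fun i =>
      (((measurable_pi_apply i).comp QPm).sub (measurable_pi_apply i)).pow_const 2
    have Is : ∀ i : Fin n, Integrable (fun p : (Fin n → ℝ) × ℝ => (T' p.1 i - p.1 i) ^ 2)
        ((γ n).prod (gaussianReal 0 1)) := fun i => (T'i i).comp_fst _
    refine ⟨fun x => Q (P x), QPm, ?_, ?_, ?_⟩
    · refine Measure.ext_of_lintegral _ fun φ hφ => ?_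
      have hQP : ∀ p : (Fin n → ℝ) × ℝ, Q (P (Fin.cons p.2 p.1)) = Fin.cons (T (T' p.1) p.2) (T' p.1) := by
        intro p; rw [PC]
      rw [lintegral_map hφ QPm, ← mp.map_eq,
        lintegral_withDensity_eq_lintegral_mul _ hc.measurable.ennreal_ofReal hφ,
        lintegral_map (f := fun x => φ (Q (P x))) (hφ.comp QPm) mp.measurable,
        lintegral_map (hc.measurable.ennreal_ofReal.mul hφ) mp.measurable]
      simp only [hQP]
      have hφc : Measurable fun p : (Fin n → ℝ) × ℝ => φ (Fin.cons p.2 p.1) := hφ.comp hcons.measurable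
      rw [lintegral_prod _ (by
          have := (hφ.comp Qm)
          exact this.aemeasurable), lintegral_prod _ (by
          have := ((hc.measurable.ennreal_ofReal.mul hφ).comp mp.measurable)
          exact this.aemeasurable)]
      have step : ∀ y, ∫⁻ t, φ (Fin.cons (T y t) y) ∂gaussianReal 0 1 =
          ∫⁻ t, ENNReal.ofReal (w y t) * φ (Fin.cons t y) ∂gaussianReal 0 1 := by
        intro y
        have hφy : Measurable fun t : ℝ => φ (Fin.cons t y) :=
          hφc.comp (by fun_prop : Measurable fun t => (y, t))
        have Ty : Measurable (T y) := Tm.comp (by fun_prop : Measurable fun t => (y, t))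
        rw [← lintegral_map (f := fun t : ℝ => φ (Fin.cons t y)) hφy Ty, (hT y).1,
          lintegral_withDensity_eq_lintegral_mul _ _ hφy]
        · rfl
        · exact (wc2.comp (by fun_prop : Continuous fun t => (y, t))).measurable.ennreal_ofReal
      simp only [step]
      have Φm : Measurable fun y => ∫⁻ t, ENNReal.ofReal (w y t) * φ (Fin.cons t y) ∂gaussianReal 0 1 :=
        (wc2.measurable.ennreal_ofReal.mul hφc).lintegral_prod_right'
      rw [← lintegral_map (f := fun y => ∫⁻ t, ENNReal.ofReal (w y t) * φ (Fin.cons t y) ∂gaussianReal 0 1)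
        Φm T'm, T'map, lintegral_withDensity_eq_lintegral_mul _ vc.measurable.ennreal_ofReal Φm]
      refine lintegral_congr fun y => ?_
      simp only [Pi.mul_apply]
      rw [← lintegral_const_mul' _ _ ENNReal.ofReal_ne_top]
      refine lintegral_congr fun t => ?_
      rw [← mul_assoc, ← ENNReal.ofReal_mul (v0 y).le]
      congr 2
      simp only [hw]
      have := (v0 y).ne'
      field_simp
      rfl
    · intro i
      rw [ti _ (Im i)]
      simp only [PC]
      refine Fin.cases ?_ (fun i => ?_) i
      · simpa [hQ] using I0
      · simpa [hQ] using Is i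
    · rw [Fin.sum_univ_succ]
      simp_rw [tr _ (Im _)]
      simp only [PC]
      simp only [hQ, Fin.cons_zero, Fin.cons_succ]
      have s2 : ∀ i : Fin n, ∫ p : (Fin n → ℝ) × ℝ, (T' p.1 i - p.1 i) ^ 2 ∂(γ n).prod (gaussianReal 0 1)
          = ∫ y, (T' y i - y i) ^ 2 ∂γ n := by
        intro i
        rw [integral_prod _ (Is i)]
        simp
      simp_rw [s2]
      linarith

/-! ### Correlation of functions of correlated Gaussian vectors -/

lemma memLp_mul {α : Type*} [MeasurableSpace α] {μ : Measure α} {f g : α → ℝ}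
    (hf : MemLp f 2 μ) (hg : MemLp g 2 μ) : Integrable (fun x => f x * g x) μ :=
  hf.integrable_mul hg

lemma integrable_fun_sub {α : Type*} [MeasurableSpace α] {μ : Measure α} {f g : α → ℝ}
    (hf : Integrable f μ) (hg : Integrable g μ) : Integrable (fun x => f x - g x) μ :=
  hf.sub hg

/-- The constant `1/√2`. -/
def rt : ℝ := (√2)⁻¹

lemma rt_pos : 0 < rt := by unfold rt; positivity

lemma rt_sq : rt ^ 2 = 1 / 2 := by
  unfold rt; rw [inv_pow, Real.sq_sqrt (by norm_num)]; norm_num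

lemma rt_add : rt ^ 2 + rt ^ 2 = 1 := by rw [rt_sq]; norm_num

/-- The noise operator with correlation `1/√2`: `(half B)(x) = E B((x + Y)/√2)`. -/
def half (n : ℕ) (B : (Fin n → ℝ) → ℝ) (x : Fin n → ℝ) : ℝ :=
  ∫ y, B (rt • x + rt • y) ∂γ n

lemma comb_memLp {n : ℕ} {B : (Fin n → ℝ) → ℝ} (hB2 : MemLp B 2 (γ n)) {s c : ℝ}
    (h : s ^ 2 + c ^ 2 = 1) :
    MemLp (fun p : (Fin n → ℝ) × (Fin n → ℝ) => B (s • p.1 + c • p.2)) 2 ((γ n).prod (γ n)) :=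
  hB2.comp_measurePreserving (comb n s c h)

lemma comb_integral {n : ℕ} {B : (Fin n → ℝ) → ℝ} (hB : Measurable B) {s c : ℝ}
    (h : s ^ 2 + c ^ 2 = 1) :
    ∫ p : (Fin n → ℝ) × (Fin n → ℝ), B (s • p.1 + c • p.2) ∂(γ n).prod (γ n) = ∫ x, B x ∂γ n := by
  have e := integral_map (comb n s c h).measurable.aemeasurable
    (hB.aestronglyMeasurable (μ := ((γ n).prod (γ n)).map fun p => s • p.1 + c • p.2))
  rw [(comb n s c h).map_eq] at e
  exact e.symm

lemma measurable_half {n : ℕ} {B : (Fin n → ℝ) → ℝ} (hB : Measurable B) :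
    Measurable (half n B) := by
  have : Measurable fun p : (Fin n → ℝ) × (Fin n → ℝ) => B (rt • p.1 + rt • p.2) :=
    hB.comp (by fun_prop)
  exact (this.stronglyMeasurable.integral_prod_right' (ν := γ n)).measurable

lemma sq_integral_le {α : Type*} [MeasurableSpace α] {μ : Measure α} [IsProbabilityMeasure μ]
    {g : α → ℝ} (hg : MemLp g 2 μ) : (∫ x, g x ∂μ) ^ 2 ≤ ∫ x, g x ^ 2 ∂μ := by
  have h := variance_eq_sub hg
  have h0 := variance_nonneg g μ
  rw [h] at h0
  simpa using h0

lemma half_ae {n : ℕ} {B : (Fin n → ℝ) → ℝ} (hB : Measurable B) (hB2 : MemLp B 2 (γ n)) {s c : ℝ}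
    (h : s ^ 2 + c ^ 2 = 1) :
    ∀ᵐ x ∂γ n, MemLp (fun y => B (s • x + c • y)) 2 (γ n) := by
  have h1 := (comb_memLp hB2 h).integrable_sq.prod_right_ae
  filter_upwards [h1] with x hx
  refine (memLp_two_iff_integrable_sq ?_).2 hx
  exact (hB.comp (by fun_prop : Measurable fun y : Fin n → ℝ => s • x + c • y)).aestronglyMeasurable

lemma half_memLp {n : ℕ} {B : (Fin n → ℝ) → ℝ} (hB : Measurable B) (hB2 : MemLp B 2 (γ n)) :
    MemLp (half n B) 2 (γ n) := by
  rw [memLp_two_iff_integrable_sq (measurable_half hB).aestronglyMeasurable]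
  refine ((comb_memLp hB2 rt_add).integrable_sq.integral_prod_left).mono'
    ((measurable_half hB).pow_const 2).aestronglyMeasurable ?_
  filter_upwards [half_ae hB hB2 rt_add] with x hx
  rw [Real.norm_eq_abs, abs_sq]
  exact sq_integral_le hx

lemma integral_half {n : ℕ} {B : (Fin n → ℝ) → ℝ} (hB : Measurable B) (hB2 : MemLp B 2 (γ n)) :
    ∫ x, half n B x ∂γ n = ∫ x, B x ∂γ n := by
  rw [← comb_integral hB rt_add, integral_prod _ ((comb_memLp hB2 rt_add).integrable (by norm_num))]
  rfl

/-- `half` contracts mean-zero functions by `1/√2`: expand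
`0 ≤ E (B((X + Y)/√2) - half B X - half B Y)²`. -/
lemma half_contract {n : ℕ} {B : (Fin n → ℝ) → ℝ} (hB : Measurable B) (hB2 : MemLp B 2 (γ n))
    (h0 : ∫ x, B x ∂γ n = 0) : 2 * ∫ x, half n B x ^ 2 ∂γ n ≤ ∫ x, B x ^ 2 ∂γ n := by
  set μ := (γ n).prod (γ n) with hμ
  set P := half n B with hP
  have Pm := measurable_half hB
  have P2 := half_memLp hB hB2
  have W2 := comb_memLp hB2 rt_add
  have P1' : MemLp (fun p : (Fin n → ℝ) × (Fin n → ℝ) => P p.1) 2 μ := P2.comp_measurePreserving measurePreserving_fst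
  have P2' : MemLp (fun p : (Fin n → ℝ) × (Fin n → ℝ) => P p.2) 2 μ := P2.comp_measurePreserving measurePreserving_snd
  have e1 : ∫ p : (Fin n → ℝ) × (Fin n → ℝ), B (rt • p.1 + rt • p.2) ^ 2 ∂μ = ∫ x, B x ^ 2 ∂γ n :=
    comb_integral (B := fun x => B x ^ 2) (hB.pow_const 2) rt_add
  have e2 : ∫ p : (Fin n → ℝ) × (Fin n → ℝ), P p.1 ^ 2 ∂μ = ∫ x, P x ^ 2 ∂γ n := by
    rw [hμ, integral_prod _ P1'.integrable_sq]; simp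
  have e3 : ∫ p : (Fin n → ℝ) × (Fin n → ℝ), P p.2 ^ 2 ∂μ = ∫ x, P x ^ 2 ∂γ n := by
    rw [hμ, integral_prod _ P2'.integrable_sq]; simp
  have e4 : ∫ p : (Fin n → ℝ) × (Fin n → ℝ), P p.1 * B (rt • p.1 + rt • p.2) ∂μ = ∫ x, P x ^ 2 ∂γ n := by
    rw [hμ, integral_prod _ (memLp_mul P1' W2)]
    refine integral_congr_ae (Filter.Eventually.of_forall fun x => ?_)
    simp only [integral_const_mul]
    rw [pow_two]; rfl
  have e5 : ∫ p : (Fin n → ℝ) × (Fin n → ℝ), P p.2 * B (rt • p.1 + rt • p.2) ∂μ = ∫ x, P x ^ 2 ∂γ n := by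
    rw [hμ, integral_prod_symm _ (memLp_mul P2' W2)]
    refine integral_congr_ae (Filter.Eventually.of_forall fun x => ?_)
    simp only [integral_const_mul]
    rw [pow_two]
    congr 1
    simp only [hP, half]
    refine integral_congr_ae (Filter.Eventually.of_forall fun y => ?_)
    simp only [add_comm]
  have e6 : ∫ p : (Fin n → ℝ) × (Fin n → ℝ), P p.1 * P p.2 ∂μ = 0 := by
    rw [hμ, integral_prod_mul, hP, integral_half hB hB2, h0, zero_mul]
  have key : 0 ≤ ∫ p : (Fin n → ℝ) × (Fin n → ℝ), (B (rt • p.1 + rt • p.2) - P p.1 - P p.2) ^ 2 ∂μ :=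
    integral_nonneg fun _ => sq_nonneg _
  have ex : ∀ p : (Fin n → ℝ) × (Fin n → ℝ), (B (rt • p.1 + rt • p.2) - P p.1 - P p.2) ^ 2 =
      B (rt • p.1 + rt • p.2) ^ 2 + P p.1 ^ 2 + P p.2 ^ 2 + 2 * (P p.1 * P p.2)
        - 2 * (P p.1 * B (rt • p.1 + rt • p.2)) - 2 * (P p.2 * B (rt • p.1 + rt • p.2)) := by
    intro p; ring
  simp_rw [ex] at key
  have i1 := W2.integrable_sq
  have i2 := P1'.integrable_sq
  have i3 := P2'.integrable_sq
  have i4 := (memLp_mul P1' P2').const_mul 2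
  have i5 := (memLp_mul P1' W2).const_mul 2
  have i6 := (memLp_mul P2' W2).const_mul 2
  rw [integral_sub (integrable_fun_sub (((i1.fun_add i2).fun_add i3).fun_add i4) i5) i6,
    integral_sub (((i1.fun_add i2).fun_add i3).fun_add i4) i5,
    integral_add ((i1.fun_add i2).fun_add i3) i4, integral_add (i1.fun_add i2) i3, integral_add i1 i2, integral_const_mul, integral_const_mul,
    integral_const_mul, e1, e2, e3, e4, e5, e6] at key
  linarith

/-- One half-step of noise can be moved into `B`: this replaces the correlation `ρ` by `√2 ρ`. -/
lemma corr_half {n : ℕ} {A B : (Fin n → ℝ) → ℝ} (hA2 : MemLp A 2 (γ n)) (hB : Measurable B)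
    (hB2 : MemLp B 2 (γ n)) {ρ σ τ : ℝ} (hσ : 0 < σ)
    (h : ρ ^ 2 + σ ^ 2 = 1) (h' : (√2 * ρ) ^ 2 + τ ^ 2 = 1) :
    ∫ p : (Fin n → ℝ) × (Fin n → ℝ), A p.1 * B (ρ • p.1 + σ • p.2) ∂(γ n).prod (γ n) =
    ∫ p : (Fin n → ℝ) × (Fin n → ℝ), A p.1 * half n B ((√2 * ρ) • p.1 + τ • p.2) ∂(γ n).prod (γ n) := by
  have A2 : MemLp (fun p : (Fin n → ℝ) × (Fin n → ℝ) => A p.1) 2 ((γ n).prod (γ n)) :=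
    hA2.comp_measurePreserving measurePreserving_fst
  rw [integral_prod _ (memLp_mul A2 (comb_memLp hB2 h)),
    integral_prod _ (memLp_mul A2 (comb_memLp (half_memLp hB hB2) h'))]
  refine integral_congr_ae ?_
  filter_upwards [half_ae hB hB2 h] with x hx
  simp only [integral_const_mul]
  congr 1
  have r2 : rt * √2 = 1 := by unfold rt; simp
  have hs : (√2) ^ 2 = 2 := Real.sq_sqrt (by norm_num)
  have hst : (rt * τ / σ) ^ 2 + (rt / σ) ^ 2 = 1 := by
    rw [div_pow, div_pow, mul_pow, rt_sq]
    have : σ ^ 2 ≠ 0 := by positivity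
    field_simp
    rw [mul_pow, hs] at h'
    nlinarith
  have hm : Measurable fun y : Fin n → ℝ => B (ρ • x + σ • y) := hB.comp (by fun_prop)
  have c1 := comb_integral hm hst
  have c2 := (comb_memLp hx hst).integrable (by norm_num : (1 : ENNReal) ≤ 2)
  rw [← c1, integral_prod _ c2]
  refine integral_congr_ae (Filter.Eventually.of_forall fun y => ?_)
  simp only [half]
  refine integral_congr_ae (Filter.Eventually.of_forall fun z => ?_)
  simp only
  congr 1
  ext i
  simp only [Pi.add_apply, Pi.smul_apply, smul_eq_mul]
  field_simp
  linear_combination (-ρ * x i) * r2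

lemma corr_trivial {n : ℕ} {A B : (Fin n → ℝ) → ℝ} (hA2 : MemLp A 2 (γ n)) (hB : Measurable B)
    (hB2 : MemLp B 2 (γ n)) {ρ σ : ℝ} (h : ρ ^ 2 + σ ^ 2 = 1) :
    -(1 / 2 * (∫ x, A x ^ 2 ∂γ n + ∫ x, B x ^ 2 ∂γ n)) ≤
      ∫ p : (Fin n → ℝ) × (Fin n → ℝ), A p.1 * B (ρ • p.1 + σ • p.2) ∂(γ n).prod (γ n) := by
  have A2 : MemLp (fun p : (Fin n → ℝ) × (Fin n → ℝ) => A p.1) 2 ((γ n).prod (γ n)) :=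
    hA2.comp_measurePreserving measurePreserving_fst
  have B2 := comb_memLp hB2 h
  have e1 := comb_integral (B := fun x => B x ^ 2) (hB.pow_const 2) h
  have e2 : ∫ p : (Fin n → ℝ) × (Fin n → ℝ), A p.1 ^ 2 ∂(γ n).prod (γ n) = ∫ x, A x ^ 2 ∂γ n := by
    rw [integral_prod _ A2.integrable_sq]; simp
  rw [← e1, ← e2, ← integral_add A2.integrable_sq B2.integrable_sq, ← integral_const_mul,
    ← integral_neg]
  refine integral_mono ((A2.integrable_sq.add B2.integrable_sq).const_mul _).neg
    (memLp_mul A2 B2) fun p => ?_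
  simp only
  nlinarith [sq_nonneg (A p.1 + B (ρ • p.1 + σ • p.2))]

/-- Iterating `corr_half` multiplies `ρ` by `√2` until it is of order one; each step gains the
contraction factor of `half_contract`, so the bound stays linear in `ρ`. -/
lemma corr_aux (n k : ℕ) : ∀ (A B : (Fin n → ℝ) → ℝ) (_ : MemLp A 2 (γ n)) (_ : Measurable B)
    (_ : MemLp B 2 (γ n)) (_ : ∫ x, B x ∂γ n = 0) (ρ : ℝ) (_ : 0 ≤ ρ) (_ : ρ ≤ 1)
    (_ : 1 ≤ (√2) ^ k * (√2 * ρ)),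
    -(√2 * ρ * (1 / 2 * (∫ x, A x ^ 2 ∂γ n + ∫ x, B x ^ 2 ∂γ n))) ≤
      ∫ p : (Fin n → ℝ) × (Fin n → ℝ), A p.1 * B (ρ • p.1 + √(1 - ρ ^ 2) • p.2) ∂(γ n).prod (γ n) := by
  have hs : (√2) ^ 2 = 2 := Real.sq_sqrt (by norm_num)
  have hs0 : 0 < √2 := by positivity
  induction k with
  | zero =>
    intro A B hA2 hB hB2 h0 ρ hρ hρ1 hk
    have h : ρ ^ 2 + (√(1 - ρ ^ 2)) ^ 2 = 1 := by rw [Real.sq_sqrt (by nlinarith)]; ring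
    refine le_trans ?_ (corr_trivial hA2 hB hB2 h)
    have : 0 ≤ 1 / 2 * (∫ x, A x ^ 2 ∂γ n + ∫ x, B x ^ 2 ∂γ n) := by
      have := integral_nonneg (μ := γ n) (f := fun x => A x ^ 2) fun _ => sq_nonneg _
      have := integral_nonneg (μ := γ n) (f := fun x => B x ^ 2) fun _ => sq_nonneg _
      positivity
    simp only [pow_zero, one_mul] at hk
    nlinarith
  | succ k ih =>
    intro A B hA2 hB hB2 h0 ρ hρ hρ1 hk
    by_cases hc : 1 ≤ √2 * ρ
    · have h : ρ ^ 2 + (√(1 - ρ ^ 2)) ^ 2 = 1 := by rw [Real.sq_sqrt (by nlinarith)]; ring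
      refine le_trans ?_ (corr_trivial hA2 hB hB2 h)
      have : 0 ≤ 1 / 2 * (∫ x, A x ^ 2 ∂γ n + ∫ x, B x ^ 2 ∂γ n) := by
        have := integral_nonneg (μ := γ n) (f := fun x => A x ^ 2) fun _ => sq_nonneg _
        have := integral_nonneg (μ := γ n) (f := fun x => B x ^ 2) fun _ => sq_nonneg _
        positivity
      nlinarith
    · push Not at hc
      have hq : 2 * ρ ^ 2 < 1 := by
        have : (√2 * ρ) ^ 2 < 1 := by
          have : 0 ≤ √2 * ρ := by positivity
          nlinarith
        rw [mul_pow, hs] at this; exact this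
      have h : ρ ^ 2 + (√(1 - ρ ^ 2)) ^ 2 = 1 := by rw [Real.sq_sqrt (by nlinarith)]; ring
      have h' : (√2 * ρ) ^ 2 + (√(1 - (√2 * ρ) ^ 2)) ^ 2 = 1 := by
        rw [Real.sq_sqrt (by rw [mul_pow, hs]; linarith)]; ring
      rw [corr_half hA2 hB hB2 (Real.sqrt_pos.2 (by nlinarith)) h h']
      -- rescaling `half B` by `√2` makes its norm at most that of `B`
      have := ih A (fun x => √2 * half n B x) hA2 ((measurable_half hB).const_mul _)
        ((half_memLp hB hB2).const_mul _)
        (by rw [integral_const_mul, integral_half hB hB2, h0, mul_zero]) (√2 * ρ) (by positivity)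
        hc.le (by rw [pow_succ] at hk; linarith)
      have e : ∀ p : (Fin n → ℝ) × (Fin n → ℝ), A p.1 * (√2 * half n B ((√2 * ρ) • p.1 + √(1 - (√2 * ρ) ^ 2) • p.2)) =
          √2 * (A p.1 * half n B ((√2 * ρ) • p.1 + √(1 - (√2 * ρ) ^ 2) • p.2)) := fun p => by ring
      simp_rw [e, mul_pow, hs] at this
      rw [integral_const_mul, integral_const_mul] at this
      have hcon := half_contract hB hB2 h0
      simp_rw [mul_pow, hs]
      have h3 : √2 * -(√2 * ρ * (1 / 2 * (∫ x, A x ^ 2 ∂γ n + ∫ x, B x ^ 2 ∂γ n))) ≤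
          -(√2 * (√2 * ρ) * (1 / 2 * (∫ x, A x ^ 2 ∂γ n + 2 * ∫ x, half n B x ^ 2 ∂γ n))) := by
        have : 0 ≤ √2 * (√2 * ρ) := by positivity
        nlinarith
      exact le_of_mul_le_mul_left (h3.trans this) hs0

/-- A Gebelein-type inequality: functions of `ρ`-correlated Gaussian vectors, one of them centred,
satisfy `E A(X) B(Z) ≥ -ρ (E A² + E B²)`. -/
lemma gebelein (n : ℕ) (A B : (Fin n → ℝ) → ℝ) (hA2 : MemLp A 2 (γ n)) (hB : Measurable B)
    (hB2 : MemLp B 2 (γ n)) (h0 : ∫ x, B x ∂γ n = 0) (ρ : ℝ) (hρ : 0 ≤ ρ) (hρ1 : ρ ≤ 1) :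
    -(ρ * (∫ x, A x ^ 2 ∂γ n + ∫ x, B x ^ 2 ∂γ n)) ≤
      ∫ p : (Fin n → ℝ) × (Fin n → ℝ), A p.1 * B (ρ • p.1 + √(1 - ρ ^ 2) • p.2) ∂(γ n).prod (γ n) := by
  rcases hρ.eq_or_lt with rfl | hpos
  · simp only [zero_smul, zero_add, zero_mul, neg_zero]
    norm_num
    rw [integral_prod_mul, h0, mul_zero]
  · have hs1 : 1 < √2 := by rw [Real.lt_sqrt (by norm_num)]; norm_num
    have hs2 : √2 ≤ 2 := by rw [Real.sqrt_le_left (by norm_num)]; norm_num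
    obtain ⟨k, hk⟩ := pow_unbounded_of_one_lt (1 / (√2 * ρ)) hs1
    have hsp : 0 < √2 * ρ := by positivity
    rw [div_lt_iff₀ hsp] at hk
    refine le_trans ?_ (corr_aux n k A B hA2 hB hB2 h0 ρ hρ hρ1 hk.le)
    have := integral_nonneg (μ := γ n) (f := fun x => A x ^ 2) fun _ => sq_nonneg _
    have := integral_nonneg (μ := γ n) (f := fun x => B x ^ 2) fun _ => sq_nonneg _
    have : 0 ≤ ρ * (∫ x, A x ^ 2 ∂γ n + ∫ x, B x ^ 2 ∂γ n) := by positivity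
    nlinarith

/-! ### A lower bound for the two-point correlation of two densities -/

lemma integral_fst_prod {n : ℕ} {A : (Fin n → ℝ) → ℝ} :
    ∫ p : (Fin n → ℝ) × (Fin n → ℝ), A p.1 ∂(γ n).prod (γ n) = ∫ x, A x ∂γ n := by
  have := integral_prod_mul (μ := γ n) (ν := γ n) A (fun _ => (1 : ℝ))
  simpa using this

/-- The part of the logarithm of the ratio of Mehler kernels coming from one coordinate, where
`A`, `B` are the displacements: the terms linear in the displacements have zero mean. -/
lemma coord_energy {n : ℕ} (i : Fin n) {A B : (Fin n → ℝ) → ℝ}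
    (hB : Measurable B) (hA2 : MemLp A 2 (γ n)) (hB2 : MemLp B 2 (γ n)) {ρ σ : ℝ}
    (hρ : 0 ≤ ρ) (hρ1 : ρ ≤ 1) (hσ : σ = √(1 - ρ ^ 2)) (L : (Fin n → ℝ) → (Fin n → ℝ) → ℝ)
    (hL : ∀ x z, L x z = ρ * (A x * B z) - ρ ^ 2 / 2 * A x ^ 2 - ρ ^ 2 / 2 * B z ^ 2
      + ρ * (A x * z i - ρ * (A x * x i)) + ρ * (x i * B z - ρ * (z i * B z))) :
    Integrable (fun p : (Fin n → ℝ) × (Fin n → ℝ) => L p.1 (ρ • p.1 + σ • p.2)) ((γ n).prod (γ n)) ∧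
    ρ * ((∫ x, A x ∂γ n) * ∫ x, B x ∂γ n) -
        3 / 2 * ρ ^ 2 * (∫ x, A x ^ 2 ∂γ n + ∫ x, B x ^ 2 ∂γ n) ≤
      ∫ p : (Fin n → ℝ) × (Fin n → ℝ), L p.1 (ρ • p.1 + σ • p.2) ∂(γ n).prod (γ n) := by
  have h : ρ ^ 2 + σ ^ 2 = 1 := by rw [hσ, Real.sq_sqrt (by nlinarith)]; ring
  have A2 : MemLp (fun p : (Fin n → ℝ) × (Fin n → ℝ) => A p.1) 2 ((γ n).prod (γ n)) :=
    hA2.comp_measurePreserving measurePreserving_fst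
  have B2 := comb_memLp hB2 h
  have X2 : MemLp (fun p : (Fin n → ℝ) × (Fin n → ℝ) => p.1 i) 2 ((γ n).prod (γ n)) :=
    (memLp_two_coord n i).comp_measurePreserving measurePreserving_fst
  have Y2 : MemLp (fun p : (Fin n → ℝ) × (Fin n → ℝ) => p.2 i) 2 ((γ n).prod (γ n)) :=
    (memLp_two_coord n i).comp_measurePreserving measurePreserving_snd
  have Z2 : MemLp (fun p : (Fin n → ℝ) × (Fin n → ℝ) => (ρ • p.1 + σ • p.2) i) 2 ((γ n).prod (γ n)) :=
    comb_memLp (memLp_two_coord n i) h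
  have i1 := (memLp_mul A2 B2).const_mul ρ
  have i2 := A2.integrable_sq.const_mul (ρ ^ 2 / 2)
  have i3 := B2.integrable_sq.const_mul (ρ ^ 2 / 2)
  have i4 := (integrable_fun_sub (memLp_mul A2 Z2) ((memLp_mul A2 X2).const_mul ρ)).const_mul ρ
  have i5 := (integrable_fun_sub (memLp_mul X2 B2) ((memLp_mul Z2 B2).const_mul ρ)).const_mul ρ
  have e4 : ∫ p : (Fin n → ℝ) × (Fin n → ℝ), (A p.1 * (ρ • p.1 + σ • p.2) i - ρ * (A p.1 * p.1 i))
      ∂(γ n).prod (γ n) = 0 := by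
    have : ∀ p : (Fin n → ℝ) × (Fin n → ℝ),
        A p.1 * (ρ • p.1 + σ • p.2) i - ρ * (A p.1 * p.1 i) = A p.1 * (σ * p.2 i) := by
      intro p; simp only [Pi.add_apply, Pi.smul_apply, smul_eq_mul]; ring
    simp_rw [this]
    rw [integral_prod_mul A (fun y : Fin n → ℝ => σ * y i), integral_const_mul, integral_coord]
    simp
  have e5 : ∫ p : (Fin n → ℝ) × (Fin n → ℝ),
      (p.1 i * B (ρ • p.1 + σ • p.2) - ρ * ((ρ • p.1 + σ • p.2) i * B (ρ • p.1 + σ • p.2)))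
      ∂(γ n).prod (γ n) = 0 := by
    have : ∀ p : (Fin n → ℝ) × (Fin n → ℝ),
        p.1 i * B (ρ • p.1 + σ • p.2) - ρ * ((ρ • p.1 + σ • p.2) i * B (ρ • p.1 + σ • p.2)) =
          (fun q : (Fin n → ℝ) × (Fin n → ℝ) => B q.1 * (σ * q.2 i))
            (ρ • p.1 + σ • p.2, σ • p.1 - ρ • p.2) := by
      intro p; simp only [Pi.add_apply, Pi.sub_apply, Pi.smul_apply, smul_eq_mul]
      linear_combination (-(p.1 i) * B (ρ • p.1 + σ • p.2)) * h
    simp_rw [this]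
    have m : Measurable fun q : (Fin n → ℝ) × (Fin n → ℝ) => B q.1 * (σ * q.2 i) := by fun_prop
    rw [← integral_map (φ := fun p : (Fin n → ℝ) × (Fin n → ℝ) => (ρ • p.1 + σ • p.2, σ • p.1 - ρ • p.2))
      (rot n ρ σ h).measurable.aemeasurable m.aestronglyMeasurable, (rot n ρ σ h).map_eq,
      integral_prod_mul B (fun y : Fin n → ℝ => σ * y i), integral_const_mul, integral_coord]
    simp
  have e2 : ∫ p : (Fin n → ℝ) × (Fin n → ℝ), A p.1 ^ 2 ∂(γ n).prod (γ n) = ∫ x, A x ^ 2 ∂γ n :=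
    integral_fst_prod (A := fun x => A x ^ 2)
  have e3 : ∫ p : (Fin n → ℝ) × (Fin n → ℝ), B (ρ • p.1 + σ • p.2) ^ 2 ∂(γ n).prod (γ n) = ∫ x, B x ^ 2 ∂γ n :=
    comb_integral (B := fun x => B x ^ 2) (hB.pow_const 2) h
  simp_rw [hL]
  refine ⟨((integrable_fun_sub (integrable_fun_sub i1 i2) i3).fun_add i4).fun_add i5, ?_⟩
  rw [integral_add ((integrable_fun_sub (integrable_fun_sub i1 i2) i3).fun_add i4) i5,
    integral_add (integrable_fun_sub (integrable_fun_sub i1 i2) i3) i4,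
    integral_sub (integrable_fun_sub i1 i2) i3, integral_sub i1 i2]
  simp only [integral_const_mul]
  rw [e2, e3, e4, e5]
  set b := ∫ x, B x ∂γ n with hb
  have hBi := hB2.integrable (by norm_num : (1 : ENNReal) ≤ 2)
  have hAi := A2.integrable (by norm_num : (1 : ENNReal) ≤ 2)
  have B02 : MemLp (fun x => B x - b) 2 (γ n) := hB2.sub (memLp_const b)
  have hg := gebelein n A (fun x => B x - b) hA2 (hB.sub_const b) B02
    (by rw [integral_sub hBi (integrable_const _)]; simp [hb]) ρ hρ hρ1
  rw [← hσ] at hg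
  have ev : ∫ x, (B x - b) ^ 2 ∂γ n ≤ ∫ x, B x ^ 2 ∂γ n := by
    have : ∀ x, (B x - b) ^ 2 = B x ^ 2 - (2 * b * B x - b ^ 2) := fun x => by ring
    simp_rw [this]
    have j := integrable_fun_sub (hBi.const_mul (2 * b)) (integrable_const (b ^ 2))
    rw [integral_sub hB2.integrable_sq j, integral_sub (hBi.const_mul (2 * b)) (integrable_const _),
      integral_const_mul]
    simp only [integral_const, probReal_univ, smul_eq_mul, one_mul]
    rw [← hb]; nlinarith [sq_nonneg b]
  have es : ∫ p : (Fin n → ℝ) × (Fin n → ℝ), A p.1 * (B (ρ • p.1 + σ • p.2) - b) ∂(γ n).prod (γ n)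
      = ∫ p : (Fin n → ℝ) × (Fin n → ℝ), A p.1 * B (ρ • p.1 + σ • p.2) ∂(γ n).prod (γ n)
        - (∫ x, A x ∂γ n) * b := by
    simp_rw [mul_sub]
    rw [integral_sub (memLp_mul A2 B2) (hAi.mul_const b), integral_mul_const, integral_fst_prod]
  rw [es] at hg
  have := mul_le_mul_of_nonneg_left hg hρ
  have := mul_le_mul_of_nonneg_left ev (sq_nonneg ρ)
  nlinarith

lemma mehler_lintegral (n : ℕ) {ρ σ : ℝ} (hσ : 0 < σ) (h : ρ ^ 2 + σ ^ 2 = 1) (x : Fin n → ℝ)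
    {φ : (Fin n → ℝ) → ENNReal} (hφ : Measurable φ) :
    ∫⁻ y, φ (ρ • x + σ • y) ∂γ n = ∫⁻ z, ENNReal.ofReal (mker n ρ x z) * φ z ∂γ n := by
  rw [← lintegral_map (f := φ) (g := fun y : Fin n → ℝ => ρ • x + σ • y) hφ (by fun_prop),
    mehler n ρ σ hσ h x, lintegral_withDensity_eq_lintegral_mul _ _ hφ]
  · rfl
  · exact ((continuous_mker n ρ).comp
      (by fun_prop : Continuous fun z : Fin n → ℝ => (x, z))).measurable.ennreal_ofReal

lemma transport_lintegral {α : Type*} [MeasurableSpace α] {μ : Measure α} {T : α → α}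
    (hT : Measurable T) {u : α → ℝ} (hu : Measurable u)
    (h : μ.map T = μ.withDensity fun x => ENNReal.ofReal (u x)) {φ : α → ENNReal} (hφ : Measurable φ) :
    ∫⁻ x, φ (T x) ∂μ = ∫⁻ x, ENNReal.ofReal (u x) * φ x ∂μ := by
  rw [← lintegral_map hφ hT, h, lintegral_withDensity_eq_lintegral_mul _ hu.ennreal_ofReal hφ]
  rfl

/-- The change of variables of `ratio_lintegral`, for an abstract kernel `k` satisfying the Mehler
formula. -/
lemma ratio_lintegral_aux {n : ℕ} {u v : (Fin n → ℝ) → ℝ} (hu : Measurable u) (hv : Measurable v)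
    (hu0 : ∀ x, 0 ≤ u x) {T₁ T₂ : (Fin n → ℝ) → (Fin n → ℝ)}
    (h1 : Measurable T₁) (h2 : Measurable T₂)
    (m1 : (γ n).map T₁ = (γ n).withDensity fun x => ENNReal.ofReal (u x))
    (m2 : (γ n).map T₂ = (γ n).withDensity fun x => ENNReal.ofReal (v x))
    {ρ σ : ℝ} {k : (Fin n → ℝ) → (Fin n → ℝ) → ℝ}
    (km : Measurable fun p : (Fin n → ℝ) × (Fin n → ℝ) => k p.1 p.2) (kpos : ∀ x z, 0 < k x z)
    (hk : ∀ (x : Fin n → ℝ) (φ : (Fin n → ℝ) → ENNReal), Measurable φ →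
      ∫⁻ y, φ (ρ • x + σ • y) ∂γ n = ∫⁻ z, ENNReal.ofReal (k x z) * φ z ∂γ n) :
    ∫⁻ p : (Fin n → ℝ) × (Fin n → ℝ), ENNReal.ofReal (u p.1 * v (ρ • p.1 + σ • p.2)) ∂(γ n).prod (γ n) =
    ∫⁻ p : (Fin n → ℝ) × (Fin n → ℝ),
      ENNReal.ofReal (k (T₁ p.1) (T₂ (ρ • p.1 + σ • p.2)) / k p.1 (ρ • p.1 + σ • p.2))
        ∂(γ n).prod (γ n) := by
  have zm : Measurable fun p : (Fin n → ℝ) × (Fin n → ℝ) => ρ • p.1 + σ • p.2 := by fun_prop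
  have Rm : Measurable fun p : (Fin n → ℝ) × (Fin n → ℝ) =>
      ENNReal.ofReal (k (T₁ p.1) (T₂ p.2) / k p.1 p.2) :=
    ((km.comp ((h1.comp measurable_fst).prodMk (h2.comp measurable_snd))).div km).ennreal_ofReal
  have R2m : Measurable fun p : (Fin n → ℝ) × (Fin n → ℝ) =>
      ENNReal.ofReal (k p.1 (T₂ p.2)) :=
    (km.comp (measurable_fst.prodMk (h2.comp measurable_snd))).ennreal_ofReal
  have e1 : ∀ x, ∫⁻ y, ENNReal.ofReal (u x * v (ρ • x + σ • y)) ∂γ n =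
      ENNReal.ofReal (u x) * ∫⁻ z, ENNReal.ofReal (k x (T₂ z)) ∂γ n := by
    intro x
    have kx : Measurable fun z => ENNReal.ofReal (k x z) :=
      (km.comp (by fun_prop : Measurable fun z : Fin n → ℝ => (x, z))).ennreal_ofReal
    have := hk x (fun z => ENNReal.ofReal (u x * v z))
      (hv.const_mul _).ennreal_ofReal
    rw [this, transport_lintegral (φ := fun z => ENNReal.ofReal (k x z)) h2 hv m2 kx,
      ← lintegral_const_mul' _ _ ENNReal.ofReal_ne_top]
    refine lintegral_congr fun z => ?_
    rw [ENNReal.ofReal_mul (hu0 x)]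
    ring
  have uvm : Measurable fun p : (Fin n → ℝ) × (Fin n → ℝ) =>
      ENNReal.ofReal (u p.1 * v (ρ • p.1 + σ • p.2)) := by
    fun_prop
  rw [lintegral_prod _ uvm.aemeasurable, lintegral_congr e1]
  have Ψm : Measurable fun x => ∫⁻ z, ENNReal.ofReal (k x (T₂ z)) ∂γ n :=
    R2m.lintegral_prod_right' (ν := γ n)
  have Rzm : Measurable fun p : (Fin n → ℝ) × (Fin n → ℝ) => ENNReal.ofReal
      (k (T₁ p.1) (T₂ (ρ • p.1 + σ • p.2)) / k p.1 (ρ • p.1 + σ • p.2)) :=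
    Rm.comp (f := fun p : (Fin n → ℝ) × (Fin n → ℝ) => (p.1, ρ • p.1 + σ • p.2)) (by fun_prop)
  rw [← transport_lintegral (φ := fun x => ∫⁻ z, ENNReal.ofReal (k x (T₂ z)) ∂γ n)
    h1 hu m1 Ψm, lintegral_prod _ Rzm.aemeasurable]
  refine lintegral_congr fun x => ?_
  have := hk x
    (fun z => ENNReal.ofReal (k (T₁ x) (T₂ z) / k x z))
    (Rm.comp (by fun_prop : Measurable fun z : Fin n → ℝ => (x, z)))
  rw [this]
  refine lintegral_congr fun z => ?_
  have k0 := kpos x z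
  rw [← ENNReal.ofReal_mul k0.le]
  congr 1
  field_simp

/-- Change of variables: the two-point correlation of the densities `u`, `v` is the mean, over
correlated Gaussian pairs `(x, z)`, of a ratio of Mehler kernels. -/
lemma ratio_lintegral {n : ℕ} {u v : (Fin n → ℝ) → ℝ} (hu : Measurable u) (hv : Measurable v)
    (hu0 : ∀ x, 0 ≤ u x) {T₁ T₂ : (Fin n → ℝ) → (Fin n → ℝ)}
    (h1 : Measurable T₁) (h2 : Measurable T₂)
    (m1 : (γ n).map T₁ = (γ n).withDensity fun x => ENNReal.ofReal (u x))
    (m2 : (γ n).map T₂ = (γ n).withDensity fun x => ENNReal.ofReal (v x))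
    {ρ σ : ℝ} (hσ : 0 < σ) (h : ρ ^ 2 + σ ^ 2 = 1) :
    ∫⁻ p : (Fin n → ℝ) × (Fin n → ℝ), ENNReal.ofReal (u p.1 * v (ρ • p.1 + σ • p.2)) ∂(γ n).prod (γ n) =
    ∫⁻ p : (Fin n → ℝ) × (Fin n → ℝ),
      ENNReal.ofReal (mker n ρ (T₁ p.1) (T₂ (ρ • p.1 + σ • p.2)) / mker n ρ p.1 (ρ • p.1 + σ • p.2))
        ∂(γ n).prod (γ n) :=
  ratio_lintegral_aux hu hv hu0 h1 h2 m1 m2 (continuous_mker n ρ).measurable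
    (fun x z => mker_pos n ρ x z (by nlinarith)) fun x _ hφ => mehler_lintegral n hσ h x hφ

lemma log_mk1_div {ρ x z a b : ℝ} (hρ : ρ ^ 2 < 1) :
    Real.log (mk1 ρ a b) - Real.log (mk1 ρ x z) =
      (ρ * ((a - x) * (b - z)) - ρ ^ 2 / 2 * (a - x) ^ 2 - ρ ^ 2 / 2 * (b - z) ^ 2
        + ρ * ((a - x) * z - ρ * ((a - x) * x)) + ρ * (x * (b - z) - ρ * (z * (b - z))))
        / (1 - ρ ^ 2) := by
  unfold mk1
  have : 0 < √(1 - ρ ^ 2) := Real.sqrt_pos.2 (by linarith)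
  rw [Real.log_mul (by positivity) (Real.exp_ne_zero _), Real.log_mul (by positivity) (Real.exp_ne_zero _),
    Real.log_exp, Real.log_exp]
  have : 1 - ρ ^ 2 ≠ 0 := by linarith
  field_simp
  ring

/-- The entropy of a density bounded by `M` is at most `log M`. -/
lemma ent_le {n : ℕ} {u : (Fin n → ℝ) → ℝ} (hc : Continuous u) {δ M : ℝ} (hδ : 0 < δ)
    (hb : ∀ x, δ ≤ u x ∧ u x ≤ M) (h1 : ∫ x, u x ∂γ n = 1) :
    ∫ x, u x * Real.log (u x) ∂γ n ≤ Real.log M := by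
  have ui : Integrable u (γ n) := integrable_of_bdd hc.measurable M fun x => by
    rw [abs_of_pos (hδ.trans_le (hb x).1)]; exact (hb x).2
  have : ∫ x, u x * Real.log M ∂γ n = Real.log M := by rw [integral_mul_const, h1, one_mul]
  rw [← this]
  refine integral_mono (integrable_of_bdd
    (hc.measurable.mul (Real.measurable_log.comp hc.measurable)) _
    fun x => abs_mul_log_le hδ (hb x).1 (hb x).2) (ui.mul_const _) fun x => ?_
  have : 0 < u x := hδ.trans_le (hb x).1
  exact mul_le_mul_of_nonneg_left (Real.log_le_log this (hb x).2) this.le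

/-- The mean displacement of a transport of `γ` to `u γ` is the first moment of `u`. -/
lemma integral_displacement {n : ℕ} {u : (Fin n → ℝ) → ℝ} (hu : Measurable u) (h0 : ∀ x, 0 ≤ u x)
    {T : (Fin n → ℝ) → (Fin n → ℝ)} (hT : Measurable T)
    (m : (γ n).map T = (γ n).withDensity fun x => ENNReal.ofReal (u x)) (i : Fin n)
    (h2 : MemLp (fun x => T x i - x i) 2 (γ n)) :
    ∫ x, (T x i - x i) ∂γ n = ∫ x, x i * u x ∂γ n := by
  have hi := h2.integrable (by norm_num : (1 : ENNReal) ≤ 2)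
  have hTi : Integrable (fun x => T x i) (γ n) := by
    have := hi.add (integrable_coord n i)
    refine this.congr (Filter.Eventually.of_forall fun x => ?_)
    simp
  rw [integral_sub hTi (integrable_coord n i), integral_coord, sub_zero,
    integral_transport (φ := fun x : Fin n → ℝ => x i) hT hu h0 m (by fun_prop)]
  simp_rw [mul_comm]

/-- Transporting `γ ⊗ γ` to `u γ ⊗ v γ` and applying Jensen's inequality to the logarithm of the
ratio of Mehler kernels bounds the two-point correlation of two bounded densities from below. -/
lemma two_point_lower {n : ℕ} {u v : (Fin n → ℝ) → ℝ} (hu : Continuous u) (hv : Continuous v)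
    {δ Mu Mv : ℝ} (hδ : 0 < δ) (hub : ∀ x, δ ≤ u x ∧ u x ≤ Mu) (hvb : ∀ x, δ ≤ v x ∧ v x ≤ Mv)
    (hu1 : ∫ x, u x ∂γ n = 1) (hv1 : ∫ x, v x ∂γ n = 1) {ρ : ℝ} (hρ : 0 ≤ ρ) (hρ1 : ρ < 1) :
    Real.exp ((ρ * ∑ i, (∫ x, x i * u x ∂γ n) * (∫ x, x i * v x ∂γ n)
        - 3 * ρ ^ 2 * (Real.log Mu + Real.log Mv)) / (1 - ρ ^ 2)) ≤
      ∫ p : (Fin n → ℝ) × (Fin n → ℝ), u p.1 * v (ρ • p.1 + √(1 - ρ ^ 2) • p.2) ∂(γ n).prod (γ n) := by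
  set σ := √(1 - ρ ^ 2) with hσ
  have hρ2 : ρ ^ 2 < 1 := by nlinarith
  have hσ0 : 0 < σ := Real.sqrt_pos.2 (by linarith)
  have h : ρ ^ 2 + σ ^ 2 = 1 := by rw [hσ, Real.sq_sqrt (by linarith)]; ring
  have u0 : ∀ x, 0 < u x := fun x => hδ.trans_le (hub x).1
  have v0 : ∀ x, 0 < v x := fun x => hδ.trans_le (hvb x).1
  obtain ⟨T₁, T₁m, map1, sq1, cost1⟩ := knothe n u hu δ Mu hδ hub hu1
  obtain ⟨T₂, T₂m, map2, sq2, cost2⟩ := knothe n v hv δ Mv hδ hvb hv1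
  have A_m : ∀ i, Measurable fun x => T₁ x i - x i := fun i =>
    ((measurable_pi_apply i).comp T₁m).sub (measurable_pi_apply i)
  have B_m : ∀ i, Measurable fun x => T₂ x i - x i := fun i =>
    ((measurable_pi_apply i).comp T₂m).sub (measurable_pi_apply i)
  have A_2 : ∀ i, MemLp (fun x => T₁ x i - x i) 2 (γ n) := fun i =>
    (memLp_two_iff_integrable_sq (A_m i).aestronglyMeasurable).2 (sq1 i)
  have B_2 : ∀ i, MemLp (fun x => T₂ x i - x i) 2 (γ n) := fun i =>
    (memLp_two_iff_integrable_sq (B_m i).aestronglyMeasurable).2 (sq2 i)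
  set ℓ : Fin n → (Fin n → ℝ) → (Fin n → ℝ) → ℝ := fun i x z =>
    ρ * ((T₁ x i - x i) * (T₂ z i - z i)) - ρ ^ 2 / 2 * (T₁ x i - x i) ^ 2
      - ρ ^ 2 / 2 * (T₂ z i - z i) ^ 2
      + ρ * ((T₁ x i - x i) * z i - ρ * ((T₁ x i - x i) * x i))
      + ρ * (x i * (T₂ z i - z i) - ρ * (z i * (T₂ z i - z i))) with hℓ
  have ce := fun i => coord_energy i (B_m i) (A_2 i) (B_2 i) hρ hρ1.le hσ (ℓ i)
    (fun x z => rfl)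
  set Λ : (Fin n → ℝ) × (Fin n → ℝ) → ℝ := fun p => (∑ i, ℓ i p.1 (ρ • p.1 + σ • p.2)) / (1 - ρ ^ 2) with hΛ
  have Λi : Integrable Λ ((γ n).prod (γ n)) :=
    (integrable_finsetSum _ fun i _ => (ce i).1).div_const _
  have Λm : ∀ p : (Fin n → ℝ) × (Fin n → ℝ),
      mker n ρ (T₁ p.1) (T₂ (ρ • p.1 + σ • p.2)) / mker n ρ p.1 (ρ • p.1 + σ • p.2) = Real.exp (Λ p) := by
    intro p
    unfold mker
    rw [← Finset.prod_div_distrib, hΛ]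
    simp only
    rw [Finset.sum_div, Real.exp_sum]
    refine Finset.prod_congr rfl fun i _ => ?_
    rw [hℓ, ← log_mk1_div hρ2, Real.exp_sub, Real.exp_log (mk1_pos _ _ _ hρ2),
      Real.exp_log (mk1_pos _ _ _ hρ2)]
  have rl := ratio_lintegral hu.measurable hv.measurable (fun x => (u0 x).le) T₁m T₂m map1 map2 hσ0 h
  simp_rw [Λm] at rl
  have zm : Measurable fun p : (Fin n → ℝ) × (Fin n → ℝ) => ρ • p.1 + σ • p.2 := by fun_prop
  have uvI : Integrable (fun p : (Fin n → ℝ) × (Fin n → ℝ) => u p.1 * v (ρ • p.1 + σ • p.2))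
      ((γ n).prod (γ n)) := by
    refine integrable_of_bdd ((hu.measurable.comp measurable_fst).mul (hv.measurable.comp zm)) (Mu * Mv) fun p => ?_
    rw [abs_of_pos (mul_pos (u0 _) (v0 _))]
    exact mul_le_mul (hub _).2 (hvb _).2 (v0 _).le ((u0 0).le.trans (hub 0).2)
  rw [← ofReal_integral_eq_lintegral_ofReal uvI
    (Filter.Eventually.of_forall fun p => (mul_pos (u0 _) (v0 _)).le)] at rl
  have exI : Integrable (fun p => Real.exp (Λ p)) ((γ n).prod (γ n)) := by
    refine ⟨(Real.continuous_exp.comp_aestronglyMeasurable Λi.1), ?_⟩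
    rw [hasFiniteIntegral_iff_ofReal (Filter.Eventually.of_forall fun p => (Real.exp_pos _).le), ← rl]
    exact ENNReal.ofReal_lt_top
  rw [← ofReal_integral_eq_lintegral_ofReal exI
    (Filter.Eventually.of_forall fun p => (Real.exp_pos _).le),
    ENNReal.ofReal_eq_ofReal_iff (integral_nonneg fun p => (mul_pos (u0 _) (v0 _)).le)
    (integral_nonneg fun p => (Real.exp_pos _).le)] at rl
  rw [rl]
  set c := ∫ p, Λ p ∂(γ n).prod (γ n) with hc
  have jensen : Real.exp c ≤ ∫ p, Real.exp (Λ p) ∂(γ n).prod (γ n) := by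
    have e : ∫ p, Real.exp c * (1 + (Λ p - c)) ∂(γ n).prod (γ n) = Real.exp c := by
      rw [integral_const_mul, integral_add (integrable_const _) (integrable_fun_sub Λi (integrable_const _)),
        integral_sub Λi (integrable_const _), ← hc]
      simp
    rw [← e]
    refine integral_mono (((integrable_const 1).fun_add
      (integrable_fun_sub Λi (integrable_const _))).const_mul _) exI fun p => ?_
    have := Real.add_one_le_exp (Λ p - c)
    have e2 : Real.exp (Λ p) = Real.exp c * Real.exp (Λ p - c) := by
      rw [← Real.exp_add]; congr 1; ring
    simp only
    rw [e2]
    exact mul_le_mul_of_nonneg_left (by linarith) (Real.exp_pos _).le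
  refine le_trans (Real.exp_le_exp.2 ?_) jensen
  have h1ρ : 0 < 1 - ρ ^ 2 := by linarith
  rw [hc, hΛ, integral_div, integral_finsetSum _ fun i _ => (ce i).1]
  refine div_le_div_of_nonneg_right ?_ h1ρ.le
  have hsum := Finset.sum_le_sum fun i (_ : i ∈ Finset.univ) => (ce i).2
  refine le_trans ?_ hsum
  have d1 := fun i => integral_displacement hu.measurable (fun x => (u0 x).le) T₁m map1 i (A_2 i)
  have d2 := fun i => integral_displacement hv.measurable (fun x => (v0 x).le) T₂m map2 i (B_2 i)
  simp_rw [d1, d2]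
  rw [Finset.sum_sub_distrib, ← Finset.mul_sum, ← Finset.mul_sum, Finset.sum_add_distrib]
  have l1 := ent_le hu hδ hub hu1
  have l2 := ent_le hv hδ hvb hv1
  have := sq_nonneg ρ
  nlinarith

/-! ### Positive association of increasing functions -/

/-- Chebyshev's association inequality on the line. -/
lemma chebyshev_line {f g : ℝ → ℝ} (hf : Monotone f) (hg : Monotone g)
    (f1 : ∀ x, |f x| ≤ 1) (g1 : ∀ x, |g x| ≤ 1) :
    (∫ x, f x ∂gaussianReal 0 1) * ∫ x, g x ∂gaussianReal 0 1 ≤ ∫ x, f x * g x ∂gaussianReal 0 1 := by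
  set μ := gaussianReal 0 1
  have fi : Integrable f μ := integrable_of_bdd hf.measurable 1 f1
  have gi : Integrable g μ := integrable_of_bdd hg.measurable 1 g1
  have fgi : Integrable (fun x => f x * g x) μ :=
    integrable_of_bdd (hf.measurable.mul hg.measurable) 1 fun x => by
      rw [abs_mul]; exact mul_le_one₀ (f1 x) (abs_nonneg _) (g1 x)
  have h0 : 0 ≤ ∫ p : ℝ × ℝ, (f p.1 - f p.2) * (g p.1 - g p.2) ∂μ.prod μ := by
    refine integral_nonneg fun p => ?_
    rcases le_total p.1 p.2 with h | h
    · exact mul_nonneg_of_nonpos_of_nonpos (sub_nonpos.2 (hf h)) (sub_nonpos.2 (hg h))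
    · exact mul_nonneg (sub_nonneg.2 (hf h)) (sub_nonneg.2 (hg h))
  have i1 : Integrable (fun p : ℝ × ℝ => f p.1 * g p.1) (μ.prod μ) := fgi.comp_fst μ
  have i2 : Integrable (fun p : ℝ × ℝ => f p.2 * g p.2) (μ.prod μ) := fgi.comp_snd μ
  have i3 : Integrable (fun p : ℝ × ℝ => f p.1 * g p.2) (μ.prod μ) := fi.mul_prod gi
  have i4 : Integrable (fun p : ℝ × ℝ => g p.1 * f p.2) (μ.prod μ) := gi.mul_prod fi
  have e : ∀ p : ℝ × ℝ, (f p.1 - f p.2) * (g p.1 - g p.2) =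
      (f p.1 * g p.1 + f p.2 * g p.2) - (f p.1 * g p.2 + g p.1 * f p.2) := fun p => by ring
  simp_rw [e] at h0
  rw [integral_sub (i1.fun_add i2) (i3.fun_add i4), integral_add i1 i2, integral_add i3 i4,
    integral_prod_mul, integral_prod_mul] at h0
  have e1 : ∫ p : ℝ × ℝ, f p.1 * g p.1 ∂μ.prod μ = ∫ x, f x * g x ∂μ := by
    rw [integral_fun_fst (μ := μ) (ν := μ) (fun x => f x * g x)]; simp
  have e2 : ∫ p : ℝ × ℝ, f p.2 * g p.2 ∂μ.prod μ = ∫ x, f x * g x ∂μ := by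
    rw [integral_fun_snd (μ := μ) (ν := μ) (fun x => f x * g x)]; simp
  rw [e1, e2] at h0
  linarith

lemma abs_le_one_of_mem {t : ℝ} (h : t ∈ Set.Icc (0 : ℝ) 1) : |t| ≤ 1 := by
  rw [abs_of_nonneg h.1]; exact h.2

lemma integral_mem_Icc {α : Type*} [MeasurableSpace α] {μ : Measure α} [IsProbabilityMeasure μ]
    {f : α → ℝ} (hf : Measurable f) (h : ∀ x, f x ∈ Set.Icc (0 : ℝ) 1) :
    ∫ x, f x ∂μ ∈ Set.Icc (0 : ℝ) 1 := by
  refine ⟨integral_nonneg fun x => (h x).1, ?_⟩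
  have := integral_mono (integrable_of_bdd (μ := μ) hf 1 fun x => abs_le_one_of_mem (h x))
    (integrable_const (1 : ℝ)) fun x => (h x).2
  simpa using this

/-- The Harris–FKG inequality for the Gaussian measure, by induction on the dimension. -/
lemma gaussian_fkg (n : ℕ) : ∀ (f g : (Fin n → ℝ) → ℝ), Measurable f → Measurable g →
    (∀ x, f x ∈ Set.Icc (0 : ℝ) 1) → (∀ x, g x ∈ Set.Icc (0 : ℝ) 1) →
    CoordMonotone n f → CoordMonotone n g →
    (∫ x, f x ∂γ n) * ∫ x, g x ∂γ n ≤ ∫ x, f x * g x ∂γ n := by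
  induction n with
  | zero =>
    intro f g _ _ _ _ _ _
    have h : ∀ k : (Fin 0 → ℝ) → ℝ, ∫ x, k x ∂γ 0 = k 0 := fun k => by
      have : ∀ x, k x = k 0 := fun x => congrArg k (Subsingleton.elim _ _)
      simp_rw [this]; simp
    rw [h, h, h]
  | succ n ih =>
    intro f g hf hg f1 g1 mf mg
    set c : (Fin n → ℝ) × ℝ → (Fin (n + 1) → ℝ) := fun p => Fin.cons p.2 p.1 with hc
    have cm : Measurable c := (cons_mp n).measurable
    have split : ∀ k : (Fin (n + 1) → ℝ) → ℝ, Measurable k → (∀ x, k x ∈ Set.Icc (0 : ℝ) 1) →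
        ∫ x, k x ∂γ (n + 1) = ∫ x, ∫ t, k (Fin.cons t x) ∂gaussianReal 0 1 ∂γ n := by
      intro k hk k1
      rw [← (cons_mp n).map_eq, integral_map cm.aemeasurable hk.aestronglyMeasurable,
        integral_prod (fun p => k (c p)) (integrable_of_bdd (hk.comp cm) 1 fun x => abs_le_one_of_mem (k1 _))]
    have fgm : ∀ x, f x * g x ∈ Set.Icc (0 : ℝ) 1 := fun x =>
      ⟨mul_nonneg (f1 x).1 (g1 x).1, mul_le_one₀ (f1 x).2 (g1 x).1 (g1 x).2⟩
    have im : ∀ k : (Fin (n + 1) → ℝ) → ℝ, Measurable k →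
        Measurable fun x => ∫ t, k (Fin.cons t x) ∂gaussianReal 0 1 := fun k hk =>
      ((hk.comp cm).stronglyMeasurable.integral_prod_right' (ν := gaussianReal 0 1)).measurable
    have sm : ∀ k : (Fin (n + 1) → ℝ) → ℝ, Measurable k → ∀ x : Fin n → ℝ,
        Measurable fun t : ℝ => k (Fin.cons t x) := fun k hk x =>
      (hk.comp cm).comp (by fun_prop : Measurable fun t : ℝ => (x, t))
    have im1 : ∀ k : (Fin (n + 1) → ℝ) → ℝ, Measurable k → (∀ x, k x ∈ Set.Icc (0 : ℝ) 1) →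
        ∀ x, ∫ t, k (Fin.cons t x) ∂gaussianReal 0 1 ∈ Set.Icc (0 : ℝ) 1 := fun k hk k1 x =>
      integral_mem_Icc (sm k hk x) fun t => k1 _
    have mono : ∀ k : (Fin (n + 1) → ℝ) → ℝ, Measurable k → (∀ x, k x ∈ Set.Icc (0 : ℝ) 1) →
        CoordMonotone (n + 1) k →
        CoordMonotone n fun x => ∫ t, k (Fin.cons t x) ∂gaussianReal 0 1 := by
      intro k hk k1 mk x i s t hst
      refine integral_mono (integrable_of_bdd (sm k hk _) 1 fun x => abs_le_one_of_mem (k1 _))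
        (integrable_of_bdd (sm k hk _) 1 fun x => abs_le_one_of_mem (k1 _)) fun r => ?_
      simp only [Fin.cons_update]
      exact mk _ _ _ _ hst
    have mono1 : ∀ k : (Fin (n + 1) → ℝ) → ℝ, CoordMonotone (n + 1) k → ∀ x : Fin n → ℝ,
        Monotone fun t : ℝ => k (Fin.cons t x) := by
      intro k mk x s t hst
      have := mk (Fin.cons 0 x) 0 s t hst
      simpa [Fin.update_cons_zero] using this
    rw [split f hf f1, split g hg g1, split (fun x => f x * g x) (hf.mul hg) fgm]
    refine (ih _ _ (im f hf) (im g hg) (im1 f hf f1) (im1 g hg g1) (mono f hf f1 mf)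
      (mono g hg g1 mg)).trans ?_
    refine integral_mono ?_ ?_ fun x => chebyshev_line (mono1 f mf x) (mono1 g mg x)
      (fun t => abs_le_one_of_mem (f1 _)) fun t => abs_le_one_of_mem (g1 _)
    · refine integrable_of_bdd ((im f hf).mul (im g hg)) 1 fun x => ?_
      rw [abs_mul]
      exact mul_le_one₀ (abs_le_one_of_mem (im1 f hf f1 x)) (abs_nonneg _)
        (abs_le_one_of_mem (im1 g hg g1 x))
    · exact integrable_of_bdd (im _ (hf.mul hg)) 1 fun x =>
        abs_le_one_of_mem (im1 _ (hf.mul hg) fgm x)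

lemma coordMonotone_comp {n : ℕ} {f : (Fin n → ℝ) → ℝ} (hf : CoordMonotone n f) (w : Fin n → ℝ)
    {c : ℝ} (hc : 0 ≤ c) : CoordMonotone n fun y => f (w + c • y) := by
  intro y i s t hst
  have e : ∀ s : ℝ, w + c • Function.update y i s =
      Function.update (w + c • y) i (w i + c * s) := by
    intro s
    ext j
    by_cases h : j = i
    · subst h; simp
    · simp [h]
  simp only [e]
  exact hf _ _ _ _ (by nlinarith)

lemma measurable_comp_affine {n : ℕ} {f : (Fin n → ℝ) → ℝ} (hf : Measurable f) (w : Fin n → ℝ)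
    (c : ℝ) : Measurable fun y => f (w + c • y) :=
  hf.comp (by fun_prop)

lemma half_mem_Icc {n : ℕ} {f : (Fin n → ℝ) → ℝ} (hf : Measurable f)
    (f1 : ∀ x, f x ∈ Set.Icc (0 : ℝ) 1) (x : Fin n → ℝ) : half n f x ∈ Set.Icc (0 : ℝ) 1 :=
  integral_mem_Icc (measurable_comp_affine hf _ _) fun _ => f1 _

lemma memLp_of_mem {n : ℕ} {f : (Fin n → ℝ) → ℝ} (hf : Measurable f)
    (f1 : ∀ x, f x ∈ Set.Icc (0 : ℝ) 1) : MemLp f 2 (γ n) :=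
  MemLp.of_bound hf.aestronglyMeasurable 1 (Filter.Eventually.of_forall fun x =>
    abs_le_one_of_mem (f1 x))

/-- Smoothing does not increase the correlation: condition on `X` in `(X + Y)/√2` and use
positive association in `Y`. -/
lemma cor_half_le {n : ℕ} {f g : (Fin n → ℝ) → ℝ} (hf : Measurable f) (hg : Measurable g)
    (f1 : ∀ x, f x ∈ Set.Icc (0 : ℝ) 1) (g1 : ∀ x, g x ∈ Set.Icc (0 : ℝ) 1)
    (mf : CoordMonotone n f) (mg : CoordMonotone n g) :
    gCor n (half n f) (half n g) ≤ gCor n f g := by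
  have fgm : ∀ x, f x * g x ∈ Set.Icc (0 : ℝ) 1 := fun x =>
    ⟨mul_nonneg (f1 x).1 (g1 x).1, mul_le_one₀ (f1 x).2 (g1 x).1 (g1 x).2⟩
  have hm := hf.mul hg
  change (∫ x, half n f x * half n g x ∂γ n) - (∫ x, half n f x ∂γ n) * ∫ x, half n g x ∂γ n ≤
    (∫ x, f x * g x ∂γ n) - (∫ x, f x ∂γ n) * ∫ x, g x ∂γ n
  rw [integral_half hf (memLp_of_mem hf f1), integral_half hg (memLp_of_mem hg g1),
    ← integral_half (B := fun x => f x * g x) hm (memLp_of_mem hm fgm)]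
  refine sub_le_sub_right (integral_mono ?_ ?_ fun x => ?_) _
  · exact memLp_mul (half_memLp hf (memLp_of_mem hf f1)) (half_memLp hg (memLp_of_mem hg g1))
  · exact (half_memLp hm (memLp_of_mem hm fgm)).integrable (by norm_num)
  · exact gaussian_fkg n _ _ (measurable_comp_affine hf _ _) (measurable_comp_affine hg _ _)
      (fun _ => f1 _) (fun _ => g1 _) (coordMonotone_comp mf _ rt_pos.le)
      (coordMonotone_comp mg _ rt_pos.le)

/-! ### The smoothed partial derivatives -/

/-- `hder n f i x = E Yᵢ f((x + Y)/√2)`, which is the `i`-th partial derivative of `half n f`. -/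
def hder (n : ℕ) (f : (Fin n → ℝ) → ℝ) (i : Fin n) (x : Fin n → ℝ) : ℝ :=
  ∫ y, y i * f (rt • x + rt • y) ∂γ n

lemma refl_mp (n : ℕ) (i : Fin n) :
    MeasurePreserving (fun x : Fin n → ℝ => Function.update x i (-x i)) (γ n) (γ n) := by
  have m := measurePreserving_pi (fun _ : Fin n => gaussianReal 0 1)
    (fun _ : Fin n => gaussianReal 0 1)
    (f := fun j => if j = i then fun t : ℝ => -t else fun t => t) (fun j => by
      by_cases h : j = i
      · simp only [h, if_true]
        refine ⟨measurable_neg, ?_⟩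
        have := gaussianReal_map_neg (μ := 0) (v := 1)
        simpa using this
      · simp only [h, if_false]
        exact MeasurePreserving.id _)
  have e : (fun x : Fin n → ℝ => Function.update x i (-x i)) =
      fun x j => (if j = i then fun t : ℝ => -t else fun t => t) (x j) := ?_
  · rw [e]; exact m
  ext x j
  by_cases h : j = i
  · subst h; simp
  · simp [h]

lemma integral_refl {n : ℕ} (i : Fin n) {k : (Fin n → ℝ) → ℝ} (hk : Measurable k) :
    ∫ x, k (Function.update x i (-x i)) ∂γ n = ∫ x, k x ∂γ n := by
  conv_rhs => rw [← (refl_mp n i).map_eq]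
  rw [integral_map (refl_mp n i).measurable.aemeasurable hk.aestronglyMeasurable]

lemma integral_coord_mul (n : ℕ) (i j : Fin n) :
    ∫ x, x i * x j ∂γ n = if i = j then 1 else 0 := by
  by_cases h : i = j
  · subst h
    have := integral_comp_eval (μ := fun _ : Fin n => gaussianReal 0 1) (i := i)
      (f := fun t : ℝ => t * t) (by fun_prop)
    rw [integral_sq_gaussianReal] at this
    rw [if_pos rfl]
    exact this
  · have e := integral_refl i (k := fun x : Fin n → ℝ => x i * x j) (by fun_prop)
    simp only [Function.update_self, Function.update_of_ne (Ne.symm h), neg_mul] at e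
    rw [integral_neg] at e
    simp only [h, if_false]
    linarith

lemma integrable_coord_mul_bdd {n : ℕ} (i : Fin n) {k : (Fin n → ℝ) → ℝ} (hk : Measurable k)
    (k1 : ∀ x, k x ∈ Set.Icc (0 : ℝ) 1) : Integrable (fun x => x i * k x) (γ n) :=
  memLp_mul (memLp_two_coord n i) (memLp_of_mem hk k1)

lemma measurable_hder {n : ℕ} {f : (Fin n → ℝ) → ℝ} (hf : Measurable f) (i : Fin n) :
    Measurable (hder n f i) := by
  have : Measurable fun p : (Fin n → ℝ) × (Fin n → ℝ) => p.2 i * f (rt • p.1 + rt • p.2) :=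
    Measurable.mul (by fun_prop) (hf.comp (by fun_prop))
  exact (this.stronglyMeasurable.integral_prod_right' (ν := γ n)).measurable

/-- Positivity is seen by pairing `y` with its reflection in the `i`-th coordinate. -/
lemma hder_nonneg {n : ℕ} {f : (Fin n → ℝ) → ℝ} (hf : Measurable f)
    (f1 : ∀ x, f x ∈ Set.Icc (0 : ℝ) 1) (mf : CoordMonotone n f) (i : Fin n) (x : Fin n → ℝ) :
    0 ≤ hder n f i x := by
  set k := fun y => f (rt • x + rt • y) with hk
  have km : Measurable k := measurable_comp_affine hf _ _
  have mk : CoordMonotone n k := coordMonotone_comp mf _ rt_pos.le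
  have e := integral_refl i (k := fun y => y i * k y) (Measurable.mul (by fun_prop) km)
  have i1 : Integrable (fun y => y i * k y) (γ n) := integrable_coord_mul_bdd i km fun _ => f1 _
  have i2 : Integrable (fun y => (Function.update y i (-y i)) i * k (Function.update y i (-y i)))
      (γ n) := (refl_mp n i).integrable_comp_of_integrable i1
  have s : hder n f i x + hder n f i x = ∫ y, (y i * k y +
      (Function.update y i (-y i)) i * k (Function.update y i (-y i))) ∂γ n := by
    rw [integral_add i1 i2, e]; rfl
  have : 0 ≤ hder n f i x + hder n f i x := by
    rw [s]
    refine integral_nonneg fun y => ?_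
    simp only [Function.update_self]
    have y0 : k y = k (Function.update y i (y i)) := by rw [Function.update_eq_self]
    rcases le_total (y i) 0 with h | h
    · have := mk y i (y i) (-y i) (by linarith)
      simp only [Pi.zero_apply]
      nlinarith
    · have := mk y i (-y i) (y i) (by linarith)
      simp only [Pi.zero_apply]
      nlinarith
  linarith

lemma abs_hder_le {n : ℕ} {f : (Fin n → ℝ) → ℝ}
    (f1 : ∀ x, f x ∈ Set.Icc (0 : ℝ) 1) (i : Fin n) (x : Fin n → ℝ) :
    |hder n f i x| ≤ 1 := by
  have i2 := integrable_coord_mul n i i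
  have e : ∫ y, (1 + y i * y i) / 2 ∂γ n = 1 := by
    rw [integral_div, integral_add (integrable_const _) i2, integral_coord_mul]
    simp
  have := norm_integral_le_of_norm_le (μ := γ n) (f := fun y => y i * f (rt • x + rt • y))
    (((integrable_const (1 : ℝ)).fun_add i2).div_const 2) (Filter.Eventually.of_forall fun y => by
      rw [Real.norm_eq_abs, abs_mul]
      have a := abs_le_one_of_mem (f1 (rt • x + rt • y))
      have b := abs_nonneg (y i)
      have c := abs_mul_abs_self (y i)
      nlinarith [sq_nonneg (|y i| - 1)])
  rw [e] at this
  exact this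

/-- Rotational orthogonality: `cZ + W` is independent of `Z - cW`. -/
lemma integral_orthogonal {n : ℕ} (i : Fin n) (c : ℝ) {k : (Fin n → ℝ) → ℝ} (hk : Measurable k)
    (k1 : ∀ x, k x ∈ Set.Icc (0 : ℝ) 1) :
    ∫ p : (Fin n → ℝ) × (Fin n → ℝ), p.1 i * k (c • p.1 + p.2) ∂(γ n).prod (γ n) =
      c * ∫ p : (Fin n → ℝ) × (Fin n → ℝ), p.2 i * k (c • p.1 + p.2) ∂(γ n).prod (γ n) := by
  set q := √(1 + c ^ 2) with hq
  have q0 : 0 < q := Real.sqrt_pos.2 (by positivity)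
  have q2 : q ^ 2 = 1 + c ^ 2 := Real.sq_sqrt (by positivity)
  have h : (c / q) ^ 2 + (1 / q) ^ 2 = 1 := by
    rw [div_pow, div_pow, q2]; field_simp; ring
  have R := rot n (c / q) (1 / q) h
  have Km : Measurable fun p : (Fin n → ℝ) × (Fin n → ℝ) => k (q • p.1) * (q * p.2 i) :=
    Measurable.mul (hk.comp (by fun_prop)) (by fun_prop)
  have z : ∫ p : (Fin n → ℝ) × (Fin n → ℝ), k (q • p.1) * (q * p.2 i) ∂(γ n).prod (γ n) = 0 := by
    rw [integral_prod_mul (fun x => k (q • x)) (fun y : Fin n → ℝ => q * y i), integral_const_mul,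
      integral_coord]
    simp
  rw [← R.map_eq, integral_map R.measurable.aemeasurable Km.aestronglyMeasurable] at z
  have e : ∀ p : (Fin n → ℝ) × (Fin n → ℝ),
      k (q • ((c / q) • p.1 + (1 / q) • p.2)) * (q * ((1 / q) • p.1 - (c / q) • p.2) i) =
      p.1 i * k (c • p.1 + p.2) - c * (p.2 i * k (c • p.1 + p.2)) := by
    intro p
    have : q • ((c / q) • p.1 + (1 / q) • p.2) = c • p.1 + p.2 := by
      rw [smul_add, smul_smul, smul_smul, mul_div_cancel₀ _ q0.ne', mul_div_cancel₀ _ q0.ne', one_smul]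
    rw [this]
    simp only [Pi.sub_apply, Pi.smul_apply, smul_eq_mul]
    field_simp
  simp only [e] at z
  have kp : MemLp (fun p : (Fin n → ℝ) × (Fin n → ℝ) => k (c • p.1 + p.2)) 2 ((γ n).prod (γ n)) :=
    MemLp.of_bound (hk.comp (by fun_prop)).aestronglyMeasurable 1
      (Filter.Eventually.of_forall fun p => abs_le_one_of_mem (k1 _))
  have c1 : MemLp (fun p : (Fin n → ℝ) × (Fin n → ℝ) => p.1 i) 2 ((γ n).prod (γ n)) :=
    (memLp_two_coord n i).comp_measurePreserving measurePreserving_fst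
  have c2 : MemLp (fun p : (Fin n → ℝ) × (Fin n → ℝ) => p.2 i) 2 ((γ n).prod (γ n)) :=
    (memLp_two_coord n i).comp_measurePreserving measurePreserving_snd
  rw [integral_sub (memLp_mul c1 kp) ((memLp_mul c2 kp).const_mul _), integral_const_mul] at z
  linarith

lemma integrable_pair {n : ℕ} (i : Fin n) {f : (Fin n → ℝ) → ℝ} (hf : Measurable f)
    (f1 : ∀ x, f x ∈ Set.Icc (0 : ℝ) 1) :
    Integrable (fun p : (Fin n → ℝ) × (Fin n → ℝ) => p.2 i * f (rt • p.1 + rt • p.2))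
      ((γ n).prod (γ n)) :=
  memLp_mul ((memLp_two_coord n i).comp_measurePreserving measurePreserving_snd)
    (comb_memLp (memLp_of_mem hf f1) rt_add)

/-- The mean of the smoothed derivative recovers the first moment `M₁(f)ᵢ`. -/
lemma integral_hder {n : ℕ} {f : (Fin n → ℝ) → ℝ} (hf : Measurable f)
    (f1 : ∀ x, f x ∈ Set.Icc (0 : ℝ) 1) (i : Fin n) :
    ∫ x, hder n f i x ∂γ n = rt * gM1 n f i := by
  have ip := integrable_pair i hf f1
  have i1 : Integrable (fun p : (Fin n → ℝ) × (Fin n → ℝ) => p.1 i * f (rt • p.1 + rt • p.2))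
      ((γ n).prod (γ n)) :=
    memLp_mul ((memLp_two_coord n i).comp_measurePreserving measurePreserving_fst)
      (comb_memLp (memLp_of_mem hf f1) rt_add)
  have e1 : ∫ x, hder n f i x ∂γ n =
      ∫ p : (Fin n → ℝ) × (Fin n → ℝ), p.2 i * f (rt • p.1 + rt • p.2) ∂(γ n).prod (γ n) := by
    rw [integral_prod _ ip]; rfl
  have e2 := integral_orthogonal i 1 (k := fun x => f (rt • x)) (hf.comp (by fun_prop)) fun _ => f1 _
  simp only [one_smul, one_mul, smul_add] at e2
  have e3 := comb_integral (B := fun x => x i * f x) (Measurable.mul (by fun_prop) hf) rt_add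
  have e4 : ∀ p : (Fin n → ℝ) × (Fin n → ℝ), (rt • p.1 + rt • p.2) i * f (rt • p.1 + rt • p.2) =
      rt * (p.1 i * f (rt • p.1 + rt • p.2) + p.2 i * f (rt • p.1 + rt • p.2)) := by
    intro p; simp only [Pi.add_apply, Pi.smul_apply, smul_eq_mul]; ring
  simp only [e4] at e3
  rw [integral_const_mul, integral_add i1 ip, e2, ← e1] at e3
  change _ = gM1 n f i at e3
  rw [← e3]
  have := rt_sq
  linear_combination (-2 * ∫ x, hder n f i x ∂γ n) * this

/-- The first moments of the `i`-th smoothed derivative are the entries of the `i`-th column of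
`M₂(f)`, up to the factor `1/2`. -/
lemma integral_coord_mul_hder {n : ℕ} {f : (Fin n → ℝ) → ℝ} (hf : Measurable f)
    (f1 : ∀ x, f x ∈ Set.Icc (0 : ℝ) 1) (i j : Fin n) :
    ∫ x, x j * hder n f i x ∂γ n = 1 / 2 * gM2 n f j i := by
  set μ := (γ n).prod (γ n) with hμ
  have R := rot n rt rt rt_add
  have fj := memLp_of_mem hf f1
  have i4 : ∀ a b : Fin n, Integrable (fun x : Fin n → ℝ => x a * x b * f x) (γ n) := fun a b =>
    (integrable_coord_mul n a b).mul_bdd (c := 1) hf.aestronglyMeasurable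
      (Filter.Eventually.of_forall fun x => abs_le_one_of_mem (f1 x))
  have i5 := fun a => integrable_coord_mul_bdd a hf f1
  have fi : Integrable f (γ n) := fj.integrable (by norm_num)
  have Km : Measurable fun p : (Fin n → ℝ) × (Fin n → ℝ) =>
      1 / 2 * ((p.1 j + p.2 j) * (p.1 i - p.2 i)) * f p.1 :=
    Measurable.mul (by fun_prop) (hf.comp (by fun_prop))
  have a1 : Integrable (fun p : (Fin n → ℝ) × (Fin n → ℝ) => p.1 j * p.1 i * f p.1) μ :=
    (i4 j i).comp_fst _
  have a2 : Integrable (fun p : (Fin n → ℝ) × (Fin n → ℝ) => f p.1 * (p.2 j * p.2 i)) μ :=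
    fi.mul_prod (integrable_coord_mul n j i)
  have a3 : Integrable (fun p : (Fin n → ℝ) × (Fin n → ℝ) => (p.1 i * f p.1) * p.2 j) μ :=
    (i5 i).mul_prod (integrable_coord n j)
  have a4 : Integrable (fun p : (Fin n → ℝ) × (Fin n → ℝ) => (p.1 j * f p.1) * p.2 i) μ :=
    (i5 j).mul_prod (integrable_coord n i)
  have K : ∀ p : (Fin n → ℝ) × (Fin n → ℝ), 1 / 2 * ((p.1 j + p.2 j) * (p.1 i - p.2 i)) * f p.1 =
      1 / 2 * ((p.1 j * p.1 i * f p.1 - f p.1 * (p.2 j * p.2 i)) +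
        ((p.1 i * f p.1) * p.2 j - (p.1 j * f p.1) * p.2 i)) := fun p => by ring
  have Ki : Integrable (fun p : (Fin n → ℝ) × (Fin n → ℝ) =>
      1 / 2 * ((p.1 j + p.2 j) * (p.1 i - p.2 i)) * f p.1) μ := by
    simp only [K]
    exact ((integrable_fun_sub a1 a2).fun_add (integrable_fun_sub a3 a4)).const_mul _
  have KR : ∀ p : (Fin n → ℝ) × (Fin n → ℝ),
      1 / 2 * (((rt • p.1 + rt • p.2) j + (rt • p.1 - rt • p.2) j) *
        ((rt • p.1 + rt • p.2) i - (rt • p.1 - rt • p.2) i)) * f (rt • p.1 + rt • p.2) =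
      p.1 j * (p.2 i * f (rt • p.1 + rt • p.2)) := by
    intro p
    simp only [Pi.add_apply, Pi.sub_apply, Pi.smul_apply, smul_eq_mul]
    have := rt_sq
    linear_combination (2 * p.1 j * p.2 i * f (rt • p.1 + rt • p.2)) * this
  have KRi := R.integrable_comp_of_integrable Ki
  have e : ∫ p : (Fin n → ℝ) × (Fin n → ℝ), p.1 j * (p.2 i * f (rt • p.1 + rt • p.2)) ∂μ =
      ∫ p : (Fin n → ℝ) × (Fin n → ℝ), 1 / 2 * ((p.1 j + p.2 j) * (p.1 i - p.2 i)) * f p.1 ∂μ := by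
    conv_rhs => rw [hμ, ← R.map_eq]
    rw [integral_map R.measurable.aemeasurable Km.aestronglyMeasurable]
    simp only [KR]
    rfl
  have KRi' : Integrable (fun p : (Fin n → ℝ) × (Fin n → ℝ) =>
      p.1 j * (p.2 i * f (rt • p.1 + rt • p.2))) μ := by
    refine KRi.congr (Filter.Eventually.of_forall fun p => ?_)
    exact KR p
  have e1 : ∫ x, x j * hder n f i x ∂γ n =
      ∫ p : (Fin n → ℝ) × (Fin n → ℝ), p.1 j * (p.2 i * f (rt • p.1 + rt • p.2)) ∂μ := by
    rw [integral_prod _ KRi']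
    refine integral_congr_ae (Filter.Eventually.of_forall fun x => ?_)
    simp only [integral_const_mul]
    rfl
  rw [e1, e]
  simp only [K]
  rw [integral_const_mul, integral_add (integrable_fun_sub a1 a2) (integrable_fun_sub a3 a4),
    integral_sub a1 a2, integral_sub a3 a4, integral_prod_mul f (fun y : Fin n → ℝ => y j * y i),
    integral_prod_mul (fun x => x i * f x) (fun y : Fin n → ℝ => y j),
    integral_prod_mul (fun x => x j * f x) (fun y : Fin n → ℝ => y i), integral_coord,
    integral_coord, integral_coord_mul, hμ, integral_fst_prod (A := fun x => x j * x i * f x)]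
  have m2 : gM2 n f j i = ∫ x, (x j * x i * f x - (if j = i then (1 : ℝ) else 0) * f x) ∂γ n := by
    unfold gM2
    refine integral_congr_ae (Filter.Eventually.of_forall fun x => ?_)
    simp only; ring
  rw [m2, integral_sub (i4 j i) (fi.const_mul _), integral_const_mul]
  ring

/-! ### Differentiating the correlation along a rotation -/

/-- The exponent of the Mehler kernel with correlation `1/√2`. -/
def qexp (n : ℕ) (x z : Fin n → ℝ) : ℝ :=
  ∑ i, (-(x i ^ 2 + z i ^ 2) / 2 + 2 * rt * (x i * z i))

lemma mker_rt (n : ℕ) : ∃ C : ℝ, 0 < C ∧ ∀ x z, mker n rt x z = C * Real.exp (qexp n x z) := by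
  have h : 0 < √(1 - rt ^ 2) := Real.sqrt_pos.2 (by rw [rt_sq]; norm_num)
  refine ⟨∏ _i : Fin n, (√(1 - rt ^ 2))⁻¹, Finset.prod_pos fun i _ => by positivity, fun x z => ?_⟩
  unfold mker qexp
  rw [Real.exp_sum, ← Finset.prod_mul_distrib]
  refine Finset.prod_congr rfl fun i _ => ?_
  unfold mk1
  congr 2
  rw [rt_sq]
  ring

lemma continuous_qexp (n : ℕ) : Continuous fun p : (Fin n → ℝ) × (Fin n → ℝ) => qexp n p.1 p.2 := by
  unfold qexp; fun_prop

lemma qexp_le {n : ℕ} {x z c : Fin n → ℝ} (h : ∀ i, |x i| ≤ c i) : qexp n x z ≤ ∑ i, c i ^ 2 / 2 := by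
  refine Finset.sum_le_sum fun i _ => ?_
  have h1 : x i ^ 2 ≤ c i ^ 2 := sq_le_sq' (by linarith [abs_le.1 (h i)]) (abs_le.1 (h i)).2
  have := sq_nonneg (x i - rt * z i)
  have h2 := rt_sq
  have h3 : (x i - rt * z i) ^ 2 = x i ^ 2 - 2 * rt * (x i * z i) + z i ^ 2 / 2 := by
    linear_combination z i ^ 2 * h2
  linarith

lemma integral_mehler {n : ℕ} {φ : (Fin n → ℝ) → ℝ} (hφ : Measurable φ) (x : Fin n → ℝ) :
    ∫ y, φ (rt • x + rt • y) ∂γ n = ∫ z, mker n rt x z * φ z ∂γ n := by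
  have hm : Measurable fun z => ENNReal.ofReal (mker n rt x z) :=
    ((continuous_mker n rt).comp
      (by fun_prop : Continuous fun z : Fin n → ℝ => (x, z))).measurable.ennreal_ofReal
  have e := integral_map (μ := γ n) (φ := fun y : Fin n → ℝ => rt • x + rt • y)
    (by fun_prop : Measurable _).aemeasurable (f := φ) hφ.aestronglyMeasurable
  rw [mehler n rt rt rt_pos rt_add x, integral_withDensity_eq_integral_toReal_smul hm
    (Filter.Eventually.of_forall fun z => ENNReal.ofReal_lt_top)] at e
  rw [← e]
  refine integral_congr_ae (Filter.Eventually.of_forall fun z => ?_)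
  simp only [smul_eq_mul]
  rw [ENNReal.toReal_ofReal (mker_pos n rt x z (by rw [rt_sq]; norm_num)).le]

lemma half_eq {n : ℕ} {C : ℝ} (hC : ∀ x z, mker n rt x z = C * Real.exp (qexp n x z))
    {f : (Fin n → ℝ) → ℝ} (hf : Measurable f) (x : Fin n → ℝ) :
    half n f x = ∫ z, C * Real.exp (qexp n x z) * f z ∂γ n := by
  unfold half
  rw [integral_mehler hf]
  simp only [hC]

lemma hder_eq {n : ℕ} {C : ℝ} (hC : ∀ x z, mker n rt x z = C * Real.exp (qexp n x z))
    {f : (Fin n → ℝ) → ℝ} (hf : Measurable f) (i : Fin n) (x : Fin n → ℝ) :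
    hder n f i x = ∫ z, C * Real.exp (qexp n x z) * ((2 * rt * z i - x i) * f z) ∂γ n := by
  have h := integral_mehler (φ := fun z => (2 * rt * z i - x i) * f z)
    (Measurable.mul (by fun_prop) hf) x
  simp only [hC] at h
  rw [← h]
  unfold hder
  refine integral_congr_ae (Filter.Eventually.of_forall fun y => ?_)
  simp only [Pi.add_apply, Pi.smul_apply, smul_eq_mul]
  have := rt_sq
  linear_combination (-2 * (x i + y i) * f (rt • x + rt • y)) * this

lemma integrable_lin_bound {n : ℕ} (i : Fin n) (a b : ℝ) :
    Integrable (fun z : Fin n → ℝ => a * |z i| + b) (γ n) :=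
  ((integrable_coord n i).abs.const_mul a).fun_add (integrable_const b)

lemma continuous_hder {n : ℕ} {f : (Fin n → ℝ) → ℝ} (hf : Measurable f)
    (f1 : ∀ x, f x ∈ Set.Icc (0 : ℝ) 1) (i : Fin n) : Continuous (hder n f i) := by
  obtain ⟨C, C0, hC⟩ := mker_rt n
  rw [continuous_iff_continuousAt]
  intro x₀
  have e : hder n f i = fun x => ∫ z, C * Real.exp (qexp n x z) * ((2 * rt * z i - x i) * f z) ∂γ n :=
    funext fun x => hder_eq hC hf i x
  rw [e]
  set D := C * Real.exp (∑ j, (|x₀ j| + 1) ^ 2 / 2) with hD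
  refine continuousAt_of_dominated (bound := fun z => D * (2 * rt * |z i| + (|x₀ i| + 1))) ?_ ?_ ?_ ?_
  · refine Filter.Eventually.of_forall fun x => Measurable.aestronglyMeasurable ?_
    have := ((continuous_qexp n).comp (by fun_prop : Continuous fun z : Fin n → ℝ => (x, z))).measurable
    exact (this.exp.const_mul C).mul (Measurable.mul (by fun_prop) hf)
  · have ev : ∀ᶠ x in nhds x₀, ∀ j, |x j| < |x₀ j| + 1 := by
      rw [Filter.eventually_all]
      intro j
      have : Continuous fun x : Fin n → ℝ => |x j| := by fun_prop
      exact this.continuousAt.eventually_lt continuousAt_const (by simp)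
    filter_upwards [ev] with x hx
    refine Filter.Eventually.of_forall fun z => ?_
    have q := qexp_le (x := x) (z := z) fun j => (hx j).le
    rw [norm_mul, norm_mul, Real.norm_eq_abs, Real.norm_eq_abs, Real.abs_exp, abs_of_pos C0, norm_mul]
    refine mul_le_mul (mul_le_mul_of_nonneg_left (Real.exp_le_exp.2 q) C0.le) ?_ (by positivity)
      (by positivity)
    have a1 := abs_le_one_of_mem (f1 z)
    have a2 : |2 * rt * z i - x i| ≤ 2 * rt * |z i| + (|x₀ i| + 1) := by
      refine (abs_sub _ _).trans ?_
      rw [abs_mul, abs_of_pos (by have := rt_pos; positivity : 0 < 2 * rt)]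
      linarith [hx i]
    rw [Real.norm_eq_abs, Real.norm_eq_abs]
    calc |2 * rt * z i - x i| * |f z| ≤ |2 * rt * z i - x i| * 1 :=
          mul_le_mul_of_nonneg_left a1 (abs_nonneg _)
      _ ≤ _ := by linarith
  · exact (integrable_lin_bound i _ _).const_mul D
  · refine Filter.Eventually.of_forall fun z => Continuous.continuousAt ?_
    have := (continuous_qexp n).comp (by fun_prop : Continuous fun x : Fin n → ℝ => (x, z))
    exact (this.rexp.const_mul C).mul (by fun_prop)

/-- The chain rule for `half n f` along the rotation `θ ↦ sin θ x + cos θ y`, by differentiation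
under the integral sign in the Mehler representation. -/
lemma hasDerivAt_half {n : ℕ} {f : (Fin n → ℝ) → ℝ} (hf : Measurable f)
    (f1 : ∀ x, f x ∈ Set.Icc (0 : ℝ) 1) (x y : Fin n → ℝ) (θ₀ : ℝ) :
    HasDerivAt (fun θ => half n f (Real.sin θ • x + Real.cos θ • y))
      (∑ i, (Real.cos θ₀ * x i - Real.sin θ₀ * y i) *
        hder n f i (Real.sin θ₀ • x + Real.cos θ₀ • y)) θ₀ := by
  obtain ⟨C, C0, hC⟩ := mker_rt n
  set V : ℝ → (Fin n → ℝ) := fun θ => Real.sin θ • x + Real.cos θ • y with hV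
  have Vi : ∀ θ i, V θ i = Real.sin θ * x i + Real.cos θ * y i := fun θ i => by simp [hV]
  set c : Fin n → ℝ := fun i => |x i| + |y i| with hc
  have c0 : ∀ i, 0 ≤ c i := fun i => by positivity
  have tri : ∀ (s t : ℝ) i, |s| ≤ 1 → |t| ≤ 1 → |s * x i + t * y i| ≤ c i := by
    intro s t i hs ht
    refine (abs_add_le _ _).trans ?_
    rw [abs_mul, abs_mul]
    have := mul_le_mul_of_nonneg_right hs (abs_nonneg (x i))
    have := mul_le_mul_of_nonneg_right ht (abs_nonneg (y i))
    simp only [hc]; linarith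
  have Vc : ∀ θ i, |V θ i| ≤ c i := fun θ i => by
    rw [Vi]; exact tri _ _ i (Real.abs_sin_le_one θ) (Real.abs_cos_le_one θ)
  have Wc : ∀ θ i, |Real.cos θ * x i - Real.sin θ * y i| ≤ c i := fun θ i => by
    have := tri (Real.cos θ) (-Real.sin θ) i (Real.abs_cos_le_one θ)
      (by rw [abs_neg]; exact Real.abs_sin_le_one θ)
    rwa [neg_mul, ← sub_eq_add_neg] at this
  set D := C * Real.exp (∑ j, c j ^ 2 / 2) with hD
  have qm : ∀ w : Fin n → ℝ, Measurable fun z => qexp n w z := fun w =>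
    ((continuous_qexp n).comp (by fun_prop : Continuous fun z : Fin n → ℝ => (w, z))).measurable
  have qb : ∀ θ z, C * Real.exp (qexp n (V θ) z) ≤ D := fun θ z =>
    mul_le_mul_of_nonneg_left (Real.exp_le_exp.2 (qexp_le (Vc θ))) C0.le
  set F' : ℝ → (Fin n → ℝ) → ℝ := fun θ z => C * Real.exp (qexp n (V θ) z) *
    ((∑ i, (Real.cos θ * x i - Real.sin θ * y i) * (2 * rt * z i - V θ i)) * f z) with hF'
  have sm : ∀ θ, Measurable fun z : Fin n → ℝ =>
      ∑ i, (Real.cos θ * x i - Real.sin θ * y i) * (2 * rt * z i - V θ i) := fun θ =>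
    Finset.measurable_fun_sum _ fun i _ => by fun_prop
  have D0 : 0 ≤ D := by positivity
  have lin : ∀ θ i (z : Fin n → ℝ), |2 * rt * z i - V θ i| ≤ 2 * rt * |z i| + c i := by
    intro θ i z
    refine (abs_sub _ _).trans ?_
    rw [abs_mul, abs_of_pos (by have := rt_pos; positivity : 0 < 2 * rt)]
    linarith [Vc θ i]
  have main := hasDerivAt_integral_of_dominated_loc_of_deriv_le (μ := γ n) (x₀ := θ₀)
    (F := fun θ z => C * Real.exp (qexp n (V θ) z) * f z) (F' := F') (s := Set.univ)
    (bound := fun z => D * ∑ i, c i * (2 * rt * |z i| + c i)) Filter.univ_mem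
    (Filter.Eventually.of_forall fun θ =>
      (((qm _).exp.const_mul C).mul hf).aestronglyMeasurable)
    (integrable_of_bdd (((qm _).exp.const_mul C).mul hf) D fun z => by
      rw [abs_mul, abs_of_pos (by positivity)]
      calc _ ≤ D * 1 := mul_le_mul (qb _ _) (abs_le_one_of_mem (f1 z)) (abs_nonneg _) D0
        _ = D := mul_one D)
    ((((qm _).exp.const_mul C).mul ((sm _).mul hf)).aestronglyMeasurable)
    (Filter.Eventually.of_forall fun z θ _ => by
      simp only [hF']
      rw [norm_mul, Real.norm_eq_abs, abs_of_pos (by positivity)]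
      refine mul_le_mul (qb _ _) ?_ (norm_nonneg _) D0
      rw [norm_mul, Real.norm_eq_abs, Real.norm_eq_abs]
      refine (mul_le_of_le_one_right (abs_nonneg _) (abs_le_one_of_mem (f1 z))).trans ?_
      refine (Finset.abs_sum_le_sum_abs _ _).trans (Finset.sum_le_sum fun i _ => ?_)
      rw [abs_mul]
      exact mul_le_mul (Wc θ i) (lin θ i z) (abs_nonneg _) (c0 i))
    ((integrable_finsetSum _ fun i _ => (integrable_lin_bound i _ _).const_mul (c i)).const_mul D)
    (Filter.Eventually.of_forall fun z θ _ => by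
      have hVd : ∀ i, HasDerivAt (fun θ => V θ i) (Real.cos θ * x i - Real.sin θ * y i) θ := by
        intro i
        simp only [Vi]
        have := ((Real.hasDerivAt_sin θ).mul_const (x i)).add ((Real.hasDerivAt_cos θ).mul_const (y i))
        rw [neg_mul, ← sub_eq_add_neg] at this
        exact this
      have hq : HasDerivAt (fun θ => qexp n (V θ) z)
          (∑ i, (Real.cos θ * x i - Real.sin θ * y i) * (2 * rt * z i - V θ i)) θ := by
        unfold qexp
        refine HasDerivAt.fun_sum fun i _ => ?_
        have h1 := ((((hVd i).pow 2).add_const (z i ^ 2)).neg.div_const 2).add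
          (((hVd i).mul_const (z i)).const_mul (2 * rt))
        refine h1.congr_deriv ?_
        simp only [Nat.cast_ofNat, Nat.add_one_sub_one, pow_one]
        ring
      refine ((hq.exp.const_mul C).mul_const (f z)).congr_deriv ?_
      simp only [hF']
      ring)
  have e1 : (fun θ => half n f (V θ)) = fun θ => ∫ z, C * Real.exp (qexp n (V θ) z) * f z ∂γ n :=
    funext fun θ => half_eq hC hf _
  rw [e1]
  refine main.2.congr_deriv ?_
  simp only [hder_eq hC hf]
  have ii : ∀ i, Integrable (fun z => C * Real.exp (qexp n (V θ₀) z) * ((2 * rt * z i - V θ₀ i) * f z))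
      (γ n) := by
    intro i
    refine ((integrable_lin_bound i (2 * rt) (c i)).const_mul D).mono'
      (((qm _).exp.const_mul C).mul (Measurable.mul (by fun_prop) hf)).aestronglyMeasurable
      (Filter.Eventually.of_forall fun z => ?_)
    rw [norm_mul, Real.norm_eq_abs, abs_of_pos (by positivity)]
    refine mul_le_mul (qb _ _) ?_ (norm_nonneg _) D0
    rw [norm_mul, Real.norm_eq_abs, Real.norm_eq_abs]
    exact (mul_le_of_le_one_right (abs_nonneg _) (abs_le_one_of_mem (f1 z))).trans (lin θ₀ i z)
  simp_rw [← integral_const_mul]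
  rw [← integral_finsetSum _ fun i _ => (ii i).const_mul _]
  refine integral_congr_ae (Filter.Eventually.of_forall fun z => ?_)
  simp only [hF', Finset.sum_mul, Finset.mul_sum]
  refine Finset.sum_congr rfl fun i _ => ?_
  ring

/-- The inner integration by parts in the derivative of the correlation, for fixed `v`. -/
lemma integral_coord_half {n : ℕ} {f : (Fin n → ℝ) → ℝ} (hf : Measurable f)
    (f1 : ∀ x, f x ∈ Set.Icc (0 : ℝ) 1) (i : Fin n) (s c : ℝ) (v : Fin n → ℝ) :
    ∫ z, half n f (s • v + c • z) * z i ∂γ n = c * ∫ z, hder n f i (s • v + c • z) ∂γ n := by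
  set k := fun w => f (rt • (s • v) + rt • w) with hk
  have km : Measurable k := measurable_comp_affine hf _ _
  have e := integral_orthogonal i c km fun _ => f1 _
  have kp : MemLp (fun p : (Fin n → ℝ) × (Fin n → ℝ) => k (c • p.1 + p.2)) 2 ((γ n).prod (γ n)) :=
    MemLp.of_bound (km.comp (by fun_prop)).aestronglyMeasurable 1
      (Filter.Eventually.of_forall fun p => abs_le_one_of_mem (f1 _))
  have i1 : Integrable (fun p : (Fin n → ℝ) × (Fin n → ℝ) => p.1 i * k (c • p.1 + p.2))
      ((γ n).prod (γ n)) :=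
    memLp_mul ((memLp_two_coord n i).comp_measurePreserving measurePreserving_fst) kp
  have i2 : Integrable (fun p : (Fin n → ℝ) × (Fin n → ℝ) => p.2 i * k (c • p.1 + p.2))
      ((γ n).prod (γ n)) :=
    memLp_mul ((memLp_two_coord n i).comp_measurePreserving measurePreserving_snd) kp
  have kk : ∀ z w : Fin n → ℝ, k (c • z + w) = f (rt • (s • v + c • z) + rt • w) := by
    intro z w
    simp only [hk, smul_add, add_assoc]
  rw [integral_prod _ i1, integral_prod _ i2] at e
  simp only [integral_const_mul, kk] at e
  rw [show (∫ z, hder n f i (s • v + c • z) ∂γ n) =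
    ∫ z, ∫ w, w i * f (rt • (s • v + c • z) + rt • w) ∂γ n ∂γ n from rfl, ← e]
  refine integral_congr_ae (Filter.Eventually.of_forall fun z => ?_)
  simp only [half]
  ring

/-- Integration by parts for a rotated pair: the velocity of the rotation is traded for a
derivative of `half n f`. -/
lemma rotation_by_parts {n : ℕ} {f H : (Fin n → ℝ) → ℝ} (hf : Measurable f)
    (f1 : ∀ x, f x ∈ Set.Icc (0 : ℝ) 1) (hH : Measurable H) (H1 : ∀ x, |H x| ≤ 1) (i : Fin n)
    {s c : ℝ} (h : s ^ 2 + c ^ 2 = 1) :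
    ∫ p : (Fin n → ℝ) × (Fin n → ℝ), half n f p.1 * ((c * p.1 i - s * p.2 i) * H (s • p.1 + c • p.2))
        ∂(γ n).prod (γ n) =
      c * ∫ p : (Fin n → ℝ) × (Fin n → ℝ), hder n f i p.1 * H (s • p.1 + c • p.2)
        ∂(γ n).prod (γ n) := by
  set μ := (γ n).prod (γ n) with hμ
  have R := rot n s c h
  have rr : ∀ x y : Fin n → ℝ, s • (s • x + c • y) + c • (c • x - s • y) = x := by
    intro x y
    ext j
    simp only [Pi.add_apply, Pi.sub_apply, Pi.smul_apply, smul_eq_mul]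
    linear_combination x j * h
  have vm : Measurable fun p : (Fin n → ℝ) × (Fin n → ℝ) => s • p.1 + c • p.2 := by fun_prop
  have hm := measurable_half hf
  have dm := measurable_hder hf i
  have Φ1 : Measurable fun p : (Fin n → ℝ) × (Fin n → ℝ) =>
      half n f (s • p.1 + c • p.2) * (p.2 i * H p.1) :=
    (hm.comp vm).mul (Measurable.mul (by fun_prop) (hH.comp measurable_fst))
  have Φ2 : Measurable fun p : (Fin n → ℝ) × (Fin n → ℝ) =>
      hder n f i (s • p.1 + c • p.2) * H p.1 :=
    (dm.comp vm).mul (hH.comp measurable_fst)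
  have e1 : ∫ p, half n f (s • p.1 + c • p.2) * (p.2 i * H p.1) ∂μ =
      ∫ p : (Fin n → ℝ) × (Fin n → ℝ),
        half n f p.1 * ((c * p.1 i - s * p.2 i) * H (s • p.1 + c • p.2)) ∂μ := by
    conv_lhs => rw [hμ, ← R.map_eq]
    rw [integral_map R.measurable.aemeasurable Φ1.aestronglyMeasurable]
    simp only [rr, Pi.sub_apply, Pi.smul_apply, smul_eq_mul]
    rfl
  have e2 : ∫ p, hder n f i (s • p.1 + c • p.2) * H p.1 ∂μ =
      ∫ p : (Fin n → ℝ) × (Fin n → ℝ), hder n f i p.1 * H (s • p.1 + c • p.2) ∂μ := by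
    conv_lhs => rw [hμ, ← R.map_eq]
    rw [integral_map R.measurable.aemeasurable Φ2.aestronglyMeasurable]
    simp only [rr]
    rfl
  have i2 : Integrable (fun p : (Fin n → ℝ) × (Fin n → ℝ) =>
      hder n f i (s • p.1 + c • p.2) * H p.1) μ :=
    integrable_of_bdd Φ2 1 fun p => by
      rw [abs_mul]; exact mul_le_one₀ (abs_hder_le f1 _ _) (abs_nonneg _) (H1 _)
  have ci : Integrable (fun p : (Fin n → ℝ) × (Fin n → ℝ) => p.2 i) μ := (integrable_coord n i).comp_snd _
  have i1 : Integrable (fun p : (Fin n → ℝ) × (Fin n → ℝ) =>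
      half n f (s • p.1 + c • p.2) * (p.2 i * H p.1)) μ := by
    refine ci.abs.mono' Φ1.aestronglyMeasurable (Filter.Eventually.of_forall fun p => ?_)
    rw [norm_mul, norm_mul, Real.norm_eq_abs, Real.norm_eq_abs, Real.norm_eq_abs]
    have a := abs_le_one_of_mem (half_mem_Icc hf f1 (s • p.1 + c • p.2))
    calc _ ≤ 1 * (|p.2 i| * 1) := mul_le_mul a (mul_le_mul_of_nonneg_left (H1 _) (abs_nonneg _))
          (by positivity) zero_le_one
      _ = _ := by ring
  rw [← e1, ← e2, hμ, integral_prod _ i1, integral_prod _ i2, ← integral_const_mul]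
  refine integral_congr_ae (Filter.Eventually.of_forall fun v => ?_)
  simp only
  rw [integral_mul_const, ← mul_assoc, ← integral_coord_half hf f1 i s c v, ← integral_mul_const]
  refine integral_congr_ae (Filter.Eventually.of_forall fun z => ?_)
  simp only
  ring

/-- The two-point correlation of the `i`-th smoothed derivatives of `f` and `g` at angle `θ`. -/
def psi (n : ℕ) (f g : (Fin n → ℝ) → ℝ) (i : Fin n) (θ : ℝ) : ℝ :=
  ∫ p : (Fin n → ℝ) × (Fin n → ℝ), hder n f i p.1 * hder n g i (Real.sin θ • p.1 + Real.cos θ • p.2)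
    ∂(γ n).prod (γ n)

lemma continuous_psi {n : ℕ} {f g : (Fin n → ℝ) → ℝ} (hf : Measurable f) (hg : Measurable g)
    (f1 : ∀ x, f x ∈ Set.Icc (0 : ℝ) 1) (g1 : ∀ x, g x ∈ Set.Icc (0 : ℝ) 1) (i : Fin n) :
    Continuous (psi n f g i) := by
  have cf := continuous_hder hf f1 i
  have cg := continuous_hder hg g1 i
  refine continuous_of_dominated (bound := fun _ => 1) (fun θ => ?_) (fun θ => ?_)
    (integrable_const _) (Filter.Eventually.of_forall fun p => ?_)
  · exact (Continuous.mul (cf.comp continuous_fst) (cg.comp (by fun_prop))).aestronglyMeasurable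
  · refine Filter.Eventually.of_forall fun p => ?_
    rw [norm_mul]
    exact mul_le_one₀ (abs_hder_le f1 _ _) (norm_nonneg _) (abs_hder_le g1 _ _)
  · exact continuous_const.mul (cg.comp (by fun_prop))

lemma psi_nonneg {n : ℕ} {f g : (Fin n → ℝ) → ℝ} (hf : Measurable f) (hg : Measurable g)
    (f1 : ∀ x, f x ∈ Set.Icc (0 : ℝ) 1) (g1 : ∀ x, g x ∈ Set.Icc (0 : ℝ) 1)
    (mf : CoordMonotone n f) (mg : CoordMonotone n g) (i : Fin n) (θ : ℝ) : 0 ≤ psi n f g i θ :=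
  integral_nonneg fun _ => mul_nonneg (hder_nonneg hf f1 mf i _) (hder_nonneg hg g1 mg i _)

/-- As the angle grows the correlation of the smoothed functions increases at the rate given by the
two-point correlations of their derivatives. -/
lemma hasDerivAt_corr {n : ℕ} {f g : (Fin n → ℝ) → ℝ} (hf : Measurable f) (hg : Measurable g)
    (f1 : ∀ x, f x ∈ Set.Icc (0 : ℝ) 1) (g1 : ∀ x, g x ∈ Set.Icc (0 : ℝ) 1) (θ₀ : ℝ) :
    HasDerivAt (fun θ => ∫ p : (Fin n → ℝ) × (Fin n → ℝ),
        half n f p.1 * half n g (Real.sin θ • p.1 + Real.cos θ • p.2) ∂(γ n).prod (γ n))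
      (Real.cos θ₀ * ∑ i, psi n f g i θ₀) θ₀ := by
  have hm := measurable_half hf
  have gm := measurable_half hg
  have dm := fun i => measurable_hder hg i
  have vm : ∀ θ, Measurable fun p : (Fin n → ℝ) × (Fin n → ℝ) => Real.sin θ • p.1 + Real.cos θ • p.2 :=
    fun θ => by fun_prop
  have F1 := fun x => abs_le_one_of_mem (half_mem_Icc hf f1 x)
  have G1 := fun x => abs_le_one_of_mem (half_mem_Icc hg g1 x)
  have ci : ∀ i, Integrable (fun p : (Fin n → ℝ) × (Fin n → ℝ) => |p.1 i| + |p.2 i|)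
      ((γ n).prod (γ n)) := fun i =>
    ((integrable_coord n i).comp_fst (γ n)).abs.fun_add ((integrable_coord n i).comp_snd (γ n)).abs
  have Tm : ∀ i θ, Measurable fun p : (Fin n → ℝ) × (Fin n → ℝ) =>
      (Real.cos θ * p.1 i - Real.sin θ * p.2 i) *
        hder n g i (Real.sin θ • p.1 + Real.cos θ • p.2) := fun i θ =>
    Measurable.mul (by fun_prop) ((dm i).comp (vm θ))
  have Tb : ∀ i θ (p : (Fin n → ℝ) × (Fin n → ℝ)),
      |(Real.cos θ * p.1 i - Real.sin θ * p.2 i) *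
        hder n g i (Real.sin θ • p.1 + Real.cos θ • p.2)| ≤ |p.1 i| + |p.2 i| := by
    intro i θ p
    rw [abs_mul]
    refine (mul_le_of_le_one_right (abs_nonneg _) (abs_hder_le g1 _ _)).trans ?_
    refine (abs_sub _ _).trans ?_
    rw [abs_mul, abs_mul]
    have := mul_le_mul_of_nonneg_right (Real.abs_cos_le_one θ) (abs_nonneg (p.1 i))
    have := mul_le_mul_of_nonneg_right (Real.abs_sin_le_one θ) (abs_nonneg (p.2 i))
    linarith
  have main := hasDerivAt_integral_of_dominated_loc_of_deriv_le (μ := (γ n).prod (γ n)) (x₀ := θ₀)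
    (F := fun θ p => half n f p.1 * half n g (Real.sin θ • p.1 + Real.cos θ • p.2))
    (F' := fun θ p => half n f p.1 * ∑ i, (Real.cos θ * p.1 i - Real.sin θ * p.2 i) *
        hder n g i (Real.sin θ • p.1 + Real.cos θ • p.2)) (s := Set.univ)
    (bound := fun p => ∑ i, (|p.1 i| + |p.2 i|)) Filter.univ_mem
    (Filter.Eventually.of_forall fun θ =>
      ((hm.comp measurable_fst).mul (gm.comp (vm θ))).aestronglyMeasurable)
    (integrable_of_bdd ((hm.comp measurable_fst).mul (gm.comp (vm θ₀))) 1 fun p => by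
      rw [abs_mul]; exact mul_le_one₀ (F1 _) (abs_nonneg _) (G1 _))
    ((hm.comp measurable_fst).mul (Finset.measurable_fun_sum _ fun i _ => Tm i θ₀)).aestronglyMeasurable
    (Filter.Eventually.of_forall fun p θ _ => by
      rw [norm_mul]
      refine (mul_le_of_le_one_left (norm_nonneg _) (F1 _)).trans ?_
      rw [Real.norm_eq_abs]
      exact (Finset.abs_sum_le_sum_abs _ _).trans (Finset.sum_le_sum fun i _ => Tb i θ p))
    (integrable_finsetSum _ fun i _ => ci i)
    (Filter.Eventually.of_forall fun p θ _ => (hasDerivAt_half hg g1 p.1 p.2 θ).const_mul _)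
  refine main.2.congr_deriv ?_
  have ii : ∀ i, Integrable (fun p : (Fin n → ℝ) × (Fin n → ℝ) =>
      half n f p.1 * ((Real.cos θ₀ * p.1 i - Real.sin θ₀ * p.2 i) *
        hder n g i (Real.sin θ₀ • p.1 + Real.cos θ₀ • p.2))) ((γ n).prod (γ n)) := by
    intro i
    refine (ci i).mono' ((hm.comp measurable_fst).mul (Tm i θ₀)).aestronglyMeasurable
      (Filter.Eventually.of_forall fun p => ?_)
    rw [norm_mul]
    exact (mul_le_of_le_one_left (norm_nonneg _) (F1 _)).trans (Tb i θ₀ p)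
  simp only [Finset.mul_sum]
  rw [integral_finsetSum _ fun i _ => ii i]
  refine Finset.sum_congr rfl fun i _ => ?_
  exact rotation_by_parts hf f1 (dm i) (fun x => abs_hder_le g1 i x) i (Real.sin_sq_add_cos_sq θ₀)

/-- The correlation of the smoothed functions, integrated along the quarter rotation. -/
lemma cor_half_eq {n : ℕ} {f g : (Fin n → ℝ) → ℝ} (hf : Measurable f) (hg : Measurable g)
    (f1 : ∀ x, f x ∈ Set.Icc (0 : ℝ) 1) (g1 : ∀ x, g x ∈ Set.Icc (0 : ℝ) 1) :
    gCor n (half n f) (half n g) =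
      ∑ i, ∫ θ in (0 : ℝ)..(Real.pi / 2), Real.cos θ * psi n f g i θ := by
  have cp := fun i => continuous_psi hf hg f1 g1 i
  have ftc := intervalIntegral.integral_eq_sub_of_hasDerivAt (a := 0) (b := Real.pi / 2)
    (fun θ _ => hasDerivAt_corr hf hg f1 g1 θ)
    (Continuous.intervalIntegrable
      (Real.continuous_cos.mul (continuous_finsetSum _ fun i _ => cp i)) _ _)
  simp only [Real.sin_pi_div_two, Real.cos_pi_div_two, Real.sin_zero, Real.cos_zero, one_smul,
    zero_smul, add_zero, zero_add] at ftc
  rw [integral_fst_prod (A := fun x => half n f x * half n g x), integral_prod_mul] at ftc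
  change (∫ x, half n f x * half n g x ∂γ n) - (∫ x, half n f x ∂γ n) * ∫ x, half n g x ∂γ n = _
  rw [← ftc, ← intervalIntegral.integral_finsetSum
    (f := fun i θ => Real.cos θ * psi n f g i θ) fun i _ => Continuous.intervalIntegrable (Real.continuous_cos.mul (cp i)) _ _]
  simp only [Finset.mul_sum]

/-! ### The lower bound for each coordinate -/

/-- `two_point_lower` after normalizing `u + ε` and `v + ε` to densities. -/
lemma two_point_lower_eps {n : ℕ} {u v : (Fin n → ℝ) → ℝ} (hu : Continuous u) (hv : Continuous v)
    (u1 : ∀ x, u x ∈ Set.Icc (0 : ℝ) 1) (v1 : ∀ x, v x ∈ Set.Icc (0 : ℝ) 1) {ρ : ℝ} (hρ : 0 ≤ ρ)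
    (hρ1 : ρ < 1) {ε : ℝ} (hε : 0 < ε) :
    (∫ x, u x ∂γ n + ε) * (∫ x, v x ∂γ n + ε) *
      Real.exp ((ρ * ((∑ i, (∫ x, x i * u x ∂γ n) * (∫ x, x i * v x ∂γ n)) /
        ((∫ x, u x ∂γ n + ε) * (∫ x, v x ∂γ n + ε)))
        - 3 * ρ ^ 2 * (Real.log ((1 + ε) / (∫ x, u x ∂γ n + ε)) +
          Real.log ((1 + ε) / (∫ x, v x ∂γ n + ε)))) / (1 - ρ ^ 2)) ≤
      (∫ p : (Fin n → ℝ) × (Fin n → ℝ), u p.1 * v (ρ • p.1 + √(1 - ρ ^ 2) • p.2) ∂(γ n).prod (γ n)) +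
        ε * (∫ x, u x ∂γ n + ∫ x, v x ∂γ n) + ε ^ 2 := by
  have um := integral_mem_Icc (μ := γ n) hu.measurable u1
  have vm := integral_mem_Icc (μ := γ n) hv.measurable v1
  set a := ∫ x, u x ∂γ n with ha
  set b := ∫ x, v x ∂γ n with hb
  have ui : Integrable u (γ n) := integrable_of_bdd hu.measurable 1 fun x => abs_le_one_of_mem (u1 x)
  have vi : Integrable v (γ n) := integrable_of_bdd hv.measurable 1 fun x => abs_le_one_of_mem (v1 x)
  have a0 : 0 < a + ε := by linarith [um.1]
  have b0 : 0 < b + ε := by linarith [vm.1]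
  have h1 : (ρ) ^ 2 + (√(1 - ρ ^ 2)) ^ 2 = 1 := by rw [Real.sq_sqrt (by nlinarith)]; ring
  have bd : ∀ {w : (Fin n → ℝ) → ℝ} {m : ℝ}, (∀ x, w x ∈ Set.Icc (0 : ℝ) 1) →
      m ∈ Set.Icc (0 : ℝ) 1 → ∀ x, ε / (1 + ε) ≤ (w x + ε) / (m + ε) ∧
        (w x + ε) / (m + ε) ≤ (1 + ε) / (m + ε) := by
    intro w m w1 hm x
    have m0 : 0 < m + ε := by linarith [hm.1]
    refine ⟨?_, div_le_div_of_nonneg_right (by linarith [(w1 x).2]) m0.le⟩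
    exact div_le_div₀ (by linarith [(w1 x).1]) (by linarith [(w1 x).1]) m0 (by linarith [hm.2])
  have int1 : ∀ {w : (Fin n → ℝ) → ℝ}, Integrable w (γ n) → 0 < ∫ x, w x ∂γ n + ε →
      ∫ x, (w x + ε) / (∫ x, w x ∂γ n + ε) ∂γ n = 1 := by
    intro w hw h0
    rw [integral_div, integral_add hw (integrable_const _)]
    simp only [integral_const, probReal_univ, smul_eq_mul, one_mul]
    exact div_self h0.ne'
  have mom : ∀ {w : (Fin n → ℝ) → ℝ} {m : ℝ}, Measurable w → (∀ x, w x ∈ Set.Icc (0 : ℝ) 1) →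
      ∀ i, ∫ x, x i * ((w x + ε) / (m + ε)) ∂γ n = (∫ x, x i * w x ∂γ n) / (m + ε) := by
    intro w m hw w1 i
    have : ∀ x : Fin n → ℝ, x i * ((w x + ε) / (m + ε)) = (x i * w x + x i * ε) / (m + ε) := fun x => by
      ring
    simp only [this]
    rw [integral_div, integral_add (integrable_coord_mul_bdd i hw w1)
      ((integrable_coord n i).mul_const ε), integral_mul_const, integral_coord]
    simp
  have key := two_point_lower (u := fun x => (u x + ε) / (a + ε)) (v := fun x => (v x + ε) / (b + ε))
    (by fun_prop) (by fun_prop) (div_pos hε (by linarith)) (bd u1 um) (bd v1 vm) (int1 ui a0)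
    (int1 vi b0) hρ hρ1
  simp only [mom hu.measurable u1, mom hv.measurable v1] at key
  have uvi : Integrable (fun p : (Fin n → ℝ) × (Fin n → ℝ) =>
      u p.1 * v (ρ • p.1 + √(1 - ρ ^ 2) • p.2)) ((γ n).prod (γ n)) := by
    refine integrable_of_bdd (Measurable.mul (hu.measurable.comp measurable_fst)
      (hv.measurable.comp (by fun_prop))) 1 fun p => ?_
    rw [abs_mul]
    exact mul_le_one₀ (abs_le_one_of_mem (u1 _)) (abs_nonneg _) (abs_le_one_of_mem (v1 _))
  have ufi : Integrable (fun p : (Fin n → ℝ) × (Fin n → ℝ) => u p.1) ((γ n).prod (γ n)) :=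
    ui.comp_fst _
  have vfi : Integrable (fun p : (Fin n → ℝ) × (Fin n → ℝ) => v (ρ • p.1 + √(1 - ρ ^ 2) • p.2))
      ((γ n).prod (γ n)) :=
    (comb n _ _ h1).integrable_comp_of_integrable vi
  have ex : ∀ p : (Fin n → ℝ) × (Fin n → ℝ),
      (u p.1 + ε) / (a + ε) * ((v (ρ • p.1 + √(1 - ρ ^ 2) • p.2) + ε) / (b + ε)) =
      (u p.1 * v (ρ • p.1 + √(1 - ρ ^ 2) • p.2) +
        (ε * (u p.1 + v (ρ • p.1 + √(1 - ρ ^ 2) • p.2)) + ε ^ 2)) / ((a + ε) * (b + ε)) := by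
    intro p; field_simp; ring
  have rhs : ∫ p : (Fin n → ℝ) × (Fin n → ℝ),
      (u p.1 + ε) / (a + ε) * ((v (ρ • p.1 + √(1 - ρ ^ 2) • p.2) + ε) / (b + ε)) ∂(γ n).prod (γ n) =
      ((∫ p : (Fin n → ℝ) × (Fin n → ℝ), u p.1 * v (ρ • p.1 + √(1 - ρ ^ 2) • p.2) ∂(γ n).prod (γ n)) +
        (ε * (a + b) + ε ^ 2)) / ((a + ε) * (b + ε)) := by
    simp only [ex]
    rw [integral_div, integral_add uvi (((ufi.fun_add vfi).const_mul ε).fun_add (integrable_const _)),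
      integral_add ((ufi.fun_add vfi).const_mul ε) (integrable_const _), integral_const_mul,
      integral_add ufi vfi, integral_fst_prod, comb_integral hv.measurable h1, ← ha, ← hb]
    simp
  rw [rhs, le_div_iff₀ (mul_pos a0 b0)] at key
  have es : ∑ i, (∫ x, x i * u x ∂γ n) / (a + ε) * ((∫ x, x i * v x ∂γ n) / (b + ε)) =
      (∑ i, (∫ x, x i * u x ∂γ n) * (∫ x, x i * v x ∂γ n)) / ((a + ε) * (b + ε)) := by
    rw [Finset.sum_div]
    exact Finset.sum_congr rfl fun i _ => by rw [div_mul_div_comm]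
  rw [es] at key
  linarith

/-- The limit `ε → 0` of `two_point_lower_eps`. -/
lemma two_point_lower_lim {n : ℕ} {u v : (Fin n → ℝ) → ℝ} (hu : Continuous u) (hv : Continuous v)
    (u1 : ∀ x, u x ∈ Set.Icc (0 : ℝ) 1) (v1 : ∀ x, v x ∈ Set.Icc (0 : ℝ) 1)
    {a b : ℝ} (ha : ∫ x, u x ∂γ n = a) (hb : ∫ x, v x ∂γ n = b) (a0 : 0 < a) (b0 : 0 < b)
    {ρ : ℝ} (hρ : 0 ≤ ρ) (hρ1 : ρ < 1) :
    a * b * Real.exp ((ρ * ((∑ i, (∫ x, x i * u x ∂γ n) * (∫ x, x i * v x ∂γ n)) / (a * b))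
        + 3 * ρ ^ 2 * Real.log (a * b)) / (1 - ρ ^ 2)) ≤
      ∫ p : (Fin n → ℝ) × (Fin n → ℝ), u p.1 * v (ρ • p.1 + √(1 - ρ ^ 2) • p.2) ∂(γ n).prod (γ n) := by
  have key := fun (ε : ℝ) (hε : 0 < ε) => two_point_lower_eps hu hv u1 v1 hρ hρ1 hε
  rw [ha, hb] at key
  set S := ∑ i, (∫ x, x i * u x ∂γ n) * (∫ x, x i * v x ∂γ n)
  set I := ∫ p : (Fin n → ℝ) × (Fin n → ℝ), u p.1 * v (ρ • p.1 + √(1 - ρ ^ 2) • p.2) ∂(γ n).prod (γ n)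
  have hc : (1 : ℝ) - ρ ^ 2 ≠ 0 := by nlinarith
  have c1 : ContinuousAt (fun ε : ℝ => (a + ε) * (b + ε) *
      Real.exp ((ρ * (S / ((a + ε) * (b + ε)))
        - 3 * ρ ^ 2 * (Real.log ((1 + ε) / (a + ε)) +
          Real.log ((1 + ε) / (b + ε)))) / (1 - ρ ^ 2))) 0 := by
    have d1 : ContinuousAt (fun ε : ℝ => a + ε) 0 := by fun_prop
    have d2 : ContinuousAt (fun ε : ℝ => b + ε) 0 := by fun_prop
    have d3 : ContinuousAt (fun ε : ℝ => 1 + ε) 0 := by fun_prop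
    have na : a + 0 ≠ 0 := by simpa using a0.ne'
    have nb : b + 0 ≠ 0 := by simpa using b0.ne'
    have l1 : ContinuousAt (fun ε : ℝ => Real.log ((1 + ε) / (a + ε))) 0 :=
      (d3.div d1 na).log (by simpa using a0.ne')
    have l2 : ContinuousAt (fun ε : ℝ => Real.log ((1 + ε) / (b + ε))) 0 :=
      (d3.div d2 nb).log (by simpa using b0.ne')
    have q : ContinuousAt (fun ε : ℝ => S / ((a + ε) * (b + ε))) 0 :=
      continuousAt_const.div (d1.mul d2) (mul_ne_zero na nb)
    exact (d1.mul d2).mul (((continuousAt_const.mul q).sub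
      (continuousAt_const.mul (l1.add l2))).div_const _).rexp
  have c2 : ContinuousAt (fun ε : ℝ => I + ε * (a + b) + ε ^ 2) 0 := by fun_prop
  have lim := le_of_tendsto_of_tendsto (c1.tendsto.mono_left (nhdsWithin_le_nhds (s := Set.Ioi 0)))
    (c2.tendsto.mono_left (nhdsWithin_le_nhds (s := Set.Ioi 0)))
    (Filter.eventually_of_mem self_mem_nhdsWithin fun ε hε => key ε hε)
  have e : ρ * (S / (a * b)) + 3 * ρ ^ 2 * Real.log (a * b) =
      ρ * (S / ((a + 0) * (b + 0))) -
        3 * ρ ^ 2 * (Real.log ((1 + 0) / (a + 0)) + Real.log ((1 + 0) / (b + 0))) := by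
    simp only [add_zero, one_div, Real.log_inv]
    rw [Real.log_mul a0.ne' b0.ne']
    ring
  rw [e]
  simpa using lim

lemma gM1_le_one {n : ℕ} {f : (Fin n → ℝ) → ℝ} (f1 : ∀ x, f x ∈ Set.Icc (0 : ℝ) 1) (i : Fin n) :
    gM1 n f i ≤ 1 := by
  have i2 := integrable_coord_mul n i i
  have e : ∫ y, (1 + y i * y i) / 2 ∂γ n = 1 := by
    rw [integral_div, integral_add (integrable_const _) i2, integral_coord_mul]
    simp
  have := norm_integral_le_of_norm_le (μ := γ n) (f := fun y => y i * f y)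
    (((integrable_const (1 : ℝ)).fun_add i2).div_const 2) (Filter.Eventually.of_forall fun y => by
      rw [Real.norm_eq_abs, abs_mul]
      have a := abs_le_one_of_mem (f1 y)
      have b := abs_nonneg (y i)
      have c := abs_mul_abs_self (y i)
      nlinarith [sq_nonneg (|y i| - 1)])
  rw [e] at this
  exact (le_abs_self _).trans this

lemma gM1_nonneg {n : ℕ} {f : (Fin n → ℝ) → ℝ} (hf : Measurable f)
    (f1 : ∀ x, f x ∈ Set.Icc (0 : ℝ) 1) (mf : CoordMonotone n f) (i : Fin n) : 0 ≤ gM1 n f i := by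
  have h := integral_hder hf f1 i
  have h0 : 0 ≤ ∫ x, hder n f i x ∂γ n := integral_nonneg fun x => hder_nonneg hf f1 mf i x
  rw [h] at h0
  exact nonneg_of_mul_nonneg_right h0 rt_pos

/-- For small `θ` the terms of order `θ` and `θ²` in the exponent of the two-point bound are both
controlled, so `psi` is comparable with its value `a / 2` at `θ = 0`. -/
lemma psi_lower {n : ℕ} {f g : (Fin n → ℝ) → ℝ} (hf : Measurable f) (hg : Measurable g)
    (f1 : ∀ x, f x ∈ Set.Icc (0 : ℝ) 1) (g1 : ∀ x, g x ∈ Set.Icc (0 : ℝ) 1)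
    (mf : CoordMonotone n f) (mg : CoordMonotone n g) (i : Fin n) {a : ℝ}
    (ha : gM1 n f i * gM1 n g i = a) (a0 : 0 < a) {θ : ℝ} (hθ : 0 ≤ θ) (hθ1 : θ ≤ 1 / 4)
    (hθL : θ ^ 2 * (1 - Real.log a) ≤ 1 / 16) (hθb : θ * |gM2col n f g i| ≤ a / 4) :
    a / 2 * Real.exp (-1) ≤ psi n f g i θ := by
  have A0 := gM1_nonneg hf f1 mf i
  have B0 := gM1_nonneg hg g1 mg i
  have A1 : 0 < gM1 n f i := A0.lt_of_ne fun h => by rw [← h] at ha; simp at ha; exact a0.ne ha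
  have B1 : 0 < gM1 n g i := B0.lt_of_ne fun h => by rw [← h] at ha; simp at ha; exact a0.ne ha
  have s0 : 0 ≤ Real.sin θ := Real.sin_nonneg_of_nonneg_of_le_pi hθ (by linarith [Real.pi_gt_three])
  have s1 : Real.sin θ ≤ θ := Real.sin_le hθ
  have ct : √(1 - Real.sin θ ^ 2) = Real.cos θ := by
    rw [← Real.cos_sq']
    exact Real.sqrt_sq (Real.cos_nonneg_of_neg_pi_div_two_le_of_le (by linarith [Real.pi_gt_three])
      (by linarith [Real.pi_gt_three]))
  have key := two_point_lower_lim (continuous_hder hf f1 i) (continuous_hder hg g1 i)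
    (fun x => ⟨hder_nonneg hf f1 mf i x, (le_abs_self _).trans (abs_hder_le f1 i x)⟩)
    (fun x => ⟨hder_nonneg hg g1 mg i x, (le_abs_self _).trans (abs_hder_le g1 i x)⟩)
    (integral_hder hf f1 i) (integral_hder hg g1 i) (mul_pos rt_pos A1) (mul_pos rt_pos B1)
    s0 (by linarith : Real.sin θ < 1)
  rw [ct] at key
  refine le_trans ?_ key
  have e1 : rt * gM1 n f i * (rt * gM1 n g i) = a / 2 := by
    rw [← ha]; linear_combination (gM1 n f i * gM1 n g i) * rt_sq
  have e2 : ∑ j, (∫ x, x j * hder n f i x ∂γ n) * (∫ x, x j * hder n g i x ∂γ n) =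
      gM2col n f g i / 4 := by
    unfold gM2col
    rw [Finset.sum_div]
    refine Finset.sum_congr rfl fun j _ => ?_
    rw [integral_coord_mul_hder hf f1, integral_coord_mul_hder hg g1]
    ring
  rw [e1, e2]
  refine mul_le_mul_of_nonneg_left (Real.exp_le_exp.2 ?_) (by positivity)
  set s := Real.sin θ
  set b := gM2col n f g i
  have s2 : s ^ 2 ≤ θ ^ 2 := pow_le_pow_left₀ s0 s1 2
  have t2 : θ ^ 2 ≤ 1 / 16 := by nlinarith
  have hs : 0 < 1 - s ^ 2 := by linarith
  have l2 : Real.log (a / 2) ≥ -(1 - Real.log a) := by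
    rw [Real.log_div a0.ne' two_ne_zero]
    linarith [Real.log_two_lt_d9]
  have aL : Real.log a ≤ 0 := Real.log_nonpos a0.le (by
    rw [← ha]; exact mul_le_one₀ (gM1_le_one f1 i) B0 (gM1_le_one g1 i))
  have p1 : -(1 / 16) ≤ s ^ 2 * Real.log (a / 2) := by
    have h1 := mul_le_mul_of_nonneg_left l2.le (sq_nonneg s)
    have h2 := mul_le_mul_of_nonneg_right s2 (by linarith : 0 ≤ 1 - Real.log a)
    linarith
  have p2 : -(1 / 8) ≤ s * (b / 4 / (a / 2)) := by
    have e : s * (b / 4 / (a / 2)) = s * b / (2 * a) := by field_simp; ring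
    rw [e, le_div_iff₀ (by positivity)]
    have h1 : s * |b| ≤ θ * |b| := mul_le_mul_of_nonneg_right s1 (abs_nonneg b)
    have h2 : s * -|b| ≤ s * b := mul_le_mul_of_nonneg_left (neg_abs_le b) s0
    linarith
  rw [le_div_iff₀ hs]
  nlinarith

/-- The contribution of the angles in `[0, t]` to the correlation, for `t` small enough that the
exponent of the two-point bound stays above `-1`. -/
lemma coord_lower {n : ℕ} {f g : (Fin n → ℝ) → ℝ} (hf : Measurable f) (hg : Measurable g)
    (f1 : ∀ x, f x ∈ Set.Icc (0 : ℝ) 1) (g1 : ∀ x, g x ∈ Set.Icc (0 : ℝ) 1)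
    (mf : CoordMonotone n f) (mg : CoordMonotone n g) (i : Fin n) {a : ℝ}
    (ha : gM1 n f i * gM1 n g i = a) (a0 : 0 < a) {t : ℝ} (ht : 0 ≤ t) (ht1 : t ≤ 1 / 4)
    (htL : t ^ 2 * (1 - Real.log a) ≤ 1 / 16) (htb : t * |gM2col n f g i| ≤ a / 4) :
    Real.exp (-1) / 4 * (t * a) ≤ ∫ θ in (0 : ℝ)..(Real.pi / 2), Real.cos θ * psi n f g i θ := by
  have hc : Continuous fun θ => Real.cos θ * psi n f g i θ :=
    Real.continuous_cos.mul (continuous_psi hf hg f1 g1 i)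
  have tp : t ≤ Real.pi / 2 := by linarith [Real.pi_gt_three]
  rw [← intervalIntegral.integral_add_adjacent_intervals (hc.intervalIntegrable 0 t)
    (hc.intervalIntegrable t (Real.pi / 2))]
  have aL : Real.log a ≤ 0 := Real.log_nonpos a0.le (by
    rw [← ha]; exact mul_le_one₀ (gM1_le_one f1 i) (gM1_nonneg hg g1 mg i) (gM1_le_one g1 i))
  have h2 : 0 ≤ ∫ θ in t..(Real.pi / 2), Real.cos θ * psi n f g i θ :=
    intervalIntegral.integral_nonneg tp fun θ hθ => mul_nonneg
      (Real.cos_nonneg_of_neg_pi_div_two_le_of_le (by linarith [Real.pi_gt_three, hθ.1]) hθ.2)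
      (psi_nonneg hf hg f1 g1 mf mg i θ)
  have h1 : ∫ _θ in (0 : ℝ)..t, a / 4 * Real.exp (-1) ≤
      ∫ θ in (0 : ℝ)..t, Real.cos θ * psi n f g i θ := by
    refine intervalIntegral.integral_mono_on ht (by simp) (hc.intervalIntegrable 0 t) fun θ hθ => ?_
    have hb := psi_lower hf hg f1 g1 mf mg i ha a0 hθ.1 (hθ.2.trans ht1)
      ((mul_le_mul_of_nonneg_right (pow_le_pow_left₀ hθ.1 hθ.2 2) (by linarith)).trans htL)
      ((mul_le_mul_of_nonneg_right hθ.2 (abs_nonneg _)).trans htb)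
    have cs : 1 / 2 ≤ Real.cos θ := by
      have := Real.one_sub_sq_div_two_le_cos (x := θ)
      nlinarith [hθ.1, hθ.2]
    calc a / 4 * Real.exp (-1) = 1 / 2 * (a / 2 * Real.exp (-1)) := by ring
      _ ≤ _ := mul_le_mul cs hb (by positivity) (by linarith)
  rw [intervalIntegral.integral_const, smul_eq_mul] at h1
  linarith

/-- Here `coord_lower` is used at `t = min (1 / (4 √(log (e / a)))) (a / (4 |b|))`, where
`a = M₁(f)ᵢ M₁(g)ᵢ` and `b = ⟨M₂(f) eᵢ, M₂(g) eᵢ⟩`; if `a = 0` the left side vanishes. -/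
lemma coord_term {n : ℕ} {f g : (Fin n → ℝ) → ℝ} (hf : Measurable f) (hg : Measurable g)
    (f1 : ∀ x, f x ∈ Set.Icc (0 : ℝ) 1) (g1 : ∀ x, g x ∈ Set.Icc (0 : ℝ) 1)
    (mf : CoordMonotone n f) (mg : CoordMonotone n g) (i : Fin n) :
    Real.exp (-1) / 16 *
      (if gM2col n f g i = 0 then
          gM1 n f i * gM1 n g i /
            Real.sqrt (Real.log (Real.exp 1 / (gM1 n f i * gM1 n g i)))
        else
          min (gM1 n f i * gM1 n g i /
              Real.sqrt (Real.log (Real.exp 1 / (gM1 n f i * gM1 n g i))))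
            ((gM1 n f i * gM1 n g i) ^ 2 / |gM2col n f g i|)) ≤
      ∫ θ in (0 : ℝ)..(Real.pi / 2), Real.cos θ * psi n f g i θ := by
  have A0 := mul_nonneg (gM1_nonneg hf f1 mf i) (gM1_nonneg hg g1 mg i)
  have A1 := mul_le_one₀ (gM1_le_one f1 i) (gM1_nonneg hg g1 mg i) (gM1_le_one g1 i)
  have low := fun t => coord_lower hf hg f1 g1 mf mg i (t := t) rfl
  set a := gM1 n f i * gM1 n g i with ha
  set b := gM2col n f g i with hb
  rcases A0.eq_or_lt with h | a0
  · rw [← h]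
    simp only [zero_div, ne_eq, OfNat.ofNat_ne_zero, not_false_eq_true, zero_pow, min_self, ite_self,
      mul_zero]
    exact intervalIntegral.integral_nonneg (by positivity) fun θ hθ => mul_nonneg
      (Real.cos_nonneg_of_neg_pi_div_two_le_of_le (by linarith [Real.pi_gt_three, hθ.1]) hθ.2)
      (psi_nonneg hf hg f1 g1 mf mg i θ)
  have eL : Real.log (Real.exp 1 / a) = 1 - Real.log a := by
    rw [Real.log_div (Real.exp_ne_zero _) a0.ne', Real.log_exp]
  rw [eL]
  have L1 : 1 ≤ 1 - Real.log a := by linarith [Real.log_nonpos a0.le A1]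
  set L := 1 - Real.log a with hL
  have r1 : 1 ≤ √L := Real.one_le_sqrt.2 L1
  have rr : √L ^ 2 = L := Real.sq_sqrt (by linarith)
  have tL : ∀ t, 0 ≤ t → t ≤ 1 / (4 * √L) → t ≤ 1 / 4 ∧ t ^ 2 * L ≤ 1 / 16 := by
    intro t t0 ht
    rw [le_div_iff₀ (by positivity)] at ht
    refine ⟨by nlinarith, ?_⟩
    rw [← rr]
    nlinarith [mul_nonneg t0 (by positivity : 0 ≤ √L)]
  split_ifs with h
  · have h0 : 0 ≤ 1 / (4 * √L) := by positivity
    have := low _ a0 h0 (tL _ h0 le_rfl).1 (tL _ h0 le_rfl).2 (by rw [h]; simp; linarith)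
    refine le_trans (le_of_eq ?_) this
    field_simp; ring
  · have b0 : 0 < |b| := abs_pos.2 h
    have h0 : 0 ≤ min (1 / (4 * √L)) (a / (4 * |b|)) := by positivity
    have T := tL _ h0 (min_le_left _ _)
    have hb4 : min (1 / (4 * √L)) (a / (4 * |b|)) * |b| ≤ a / 4 := by
      refine (mul_le_mul_of_nonneg_right (min_le_right _ _) b0.le).trans (le_of_eq ?_)
      field_simp
    have := low _ a0 h0 T.1 T.2 hb4
    refine le_trans (le_of_eq ?_) this
    have e1 : a / √L = 4 * a * (1 / (4 * √L)) := by field_simp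
    have e2 : a ^ 2 / |b| = 4 * a * (a / (4 * |b|)) := by field_simp
    rw [e1, e2, ← mul_min_of_nonneg _ _ (by positivity : 0 ≤ 4 * a)]
    ring

/-- **Theorem 1.7.** For increasing measurable `f, g : ℝⁿ → [0,1]`,
`Cor(f,g) ≥ c ∑ᵢ min( M₁(f)ᵢM₁(g)ᵢ/√(log(e/(M₁(f)ᵢM₁(g)ᵢ))),
(M₁(f)ᵢM₁(g)ᵢ)²/|⟨M₂(f)eᵢ, M₂(g)eᵢ⟩| )`, the second term of each minimum being `+∞`
when `⟨M₂(f)eᵢ, M₂(g)eᵢ⟩ = 0`. -/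
theorem gaussian_correlation_second_order_coordinatewise :
    ∃ c > (0 : ℝ), ∀ (n : ℕ) (f g : (Fin n → ℝ) → ℝ),
      Measurable f → Measurable g →
      (∀ x, f x ∈ Set.Icc (0 : ℝ) 1) → (∀ x, g x ∈ Set.Icc (0 : ℝ) 1) →
      CoordMonotone n f → CoordMonotone n g →
      gCor n f g ≥
        c * ∑ i,
          (if gM2col n f g i = 0 then
              gM1 n f i * gM1 n g i /
                Real.sqrt (Real.log (Real.exp 1 / (gM1 n f i * gM1 n g i)))
            else
              min (gM1 n f i * gM1 n g i /
                  Real.sqrt (Real.log (Real.exp 1 / (gM1 n f i * gM1 n g i))))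
                ((gM1 n f i * gM1 n g i) ^ 2 / |gM2col n f g i|)) := by
  refine ⟨Real.exp (-1) / 16, by positivity, fun n f g hf hg f1 g1 mf mg => ?_⟩
  refine le_trans ?_ (cor_half_le hf hg f1 g1 mf mg)
  rw [cor_half_eq hf hg f1 g1, Finset.mul_sum]
  exact Finset.sum_le_sum fun i _ => coord_term hf hg f1 g1 mf mg i

end
end

section
/- Let p : [0,∞) → [0,1] be twice differentiable with p(0) ∈ (0,1), and suppose there exists K > 0 such that p''(t) ≥ −p'(t) − K p(t) log(e/p(t)) for all t ≥ 0. Then for all t ≤ min( 1/(4√(K log(2e/p(0)))), p(0)/(4|p'(0)|) ) one has p(t) ≥ p(0)/2. -/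
open MeasureTheory Real Set

noncomputable section

/-!
The function `g x = x * log (e / x)` is nondecreasing on `[0, 1]` (`mul_log_exp_div_mono`), so from
a point `s` where `p` attains its maximum `M` on `[0, t]` onwards the hypothesis gives
`p'' + p' ≥ -K g(M)`. Integrating twice (`le_of_second_order`),
`p t ≥ M - c (t - s) - K g(M) (t - s)² / 2` as soon as `p' s ≥ -c`.

If `0 < s < t` then `p' s = 0` and one may take `c = 0`; if `s = 0` one takes `c = |p' 0|`; if
`s = t` then `p t = M ≥ p 0`. In the first two cases `c t ≤ p 0 / 4 ≤ M / 4`. As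
`M ≥ p 0`, `g M ≤ M log (2e / p 0)`, so the bound on `t` makes the quadratic term at most
`M / 32`, and `p t ≥ M / 2 ≥ p 0 / 2`.
Starting from the maximum rather than from `0` matters: `g (p u)` may be much larger than
`g (p 0)` once `p` has grown.
-/

lemma mul_log_exp_div_mono {x M : ℝ} (hx : 0 ≤ x) (hxM : x ≤ M) (hM : M ≤ 1) :
    x * Real.log (Real.exp 1 / x) ≤ M * Real.log (Real.exp 1 / M) := by
  rcases hx.eq_or_lt with rfl | hx
  · rcases hxM.eq_or_lt with rfl | hM0
    · simp
    · rw [Real.log_div (Real.exp_ne_zero 1) hM0.ne', Real.log_exp]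
      have := Real.log_nonpos hM0.le hM
      simp only [zero_mul]
      exact mul_nonneg hM0.le (by linarith)
  · have hM0 : 0 < M := hx.trans_le hxM
    rw [Real.log_div (Real.exp_ne_zero 1) hM0.ne', Real.log_div (Real.exp_ne_zero 1) hx.ne',
      Real.log_exp]
    have hlM := Real.log_nonpos hM0.le hM
    have h1 := Real.log_le_sub_one_of_pos (div_pos hM0 hx)
    rw [Real.log_div hM0.ne' hx.ne'] at h1
    have h2 : x * (Real.log M - Real.log x) ≤ M - x := by
      calc _ ≤ x * (M / x - 1) := mul_le_mul_of_nonneg_left h1 hx.le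
        _ = M - x := by field_simp
    nlinarith [mul_nonneg (sub_nonneg.2 hxM) (neg_nonneg.2 hlM)]

/-- Integrated form of `f'' + f' ≥ -A` with initial slope at least `-c`. -/
lemma le_of_second_order {f f' f'' : ℝ → ℝ} {s t A c : ℝ} (hst : s ≤ t) (hA : 0 ≤ A) (hc : 0 ≤ c)
    (hf : ContinuousOn f (Icc s t)) (hf' : ContinuousOn f' (Icc s t))
    (h1 : ∀ u ∈ Ioo s t, HasDerivAt f (f' u) u) (h2 : ∀ u ∈ Ioo s t, HasDerivAt f' (f'' u) u)
    (hs : -c ≤ f' s) (h : ∀ u ∈ Ioo s t, -f' u - A ≤ f'' u) :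
    f s - c * (t - s) - A * (t - s) ^ 2 / 2 ≤ f t := by
  -- `exp u * (f' u + A)` is the integrating-factor form of `f'' + f' + A ≥ 0`.
  have hm1 : MonotoneOn (fun u => Real.exp u * (f' u + A)) (Icc s t) := by
    apply monotoneOn_of_hasDerivWithinAt_nonneg (convex_Icc s t)
      (f' := fun u => Real.exp u * (f' u + A) + Real.exp u * f'' u)
    · exact Real.continuous_exp.continuousOn.mul (hf'.add continuousOn_const)
    · intro u hu
      rw [interior_Icc] at hu
      exact ((Real.hasDerivAt_exp u).mul ((h2 u hu).add_const A)).hasDerivWithinAt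
    · intro u hu
      rw [interior_Icc] at hu
      rw [← mul_add]
      exact mul_nonneg (Real.exp_pos u).le (by linarith [h u hu])
  have hslope : ∀ u ∈ Icc s t, -c - A * (u - s) ≤ f' u := by
    intro u hu
    have h3 : Real.exp s * (f' s + A) ≤ Real.exp u * (f' u + A) :=
      hm1 (left_mem_Icc.2 hst) hu hu.1
    have h4 : Real.exp (s - u) * (f' s + A) ≤ f' u + A := by
      rw [Real.exp_sub, div_mul_eq_mul_div, div_le_iff₀ (Real.exp_pos u)]
      linarith
    have h5 := Real.add_one_le_exp (s - u)
    have h6 : Real.exp (s - u) ≤ 1 := Real.exp_le_one_iff.2 (by linarith [hu.1])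
    have h7 := (Real.exp_pos (s - u)).le
    nlinarith [mul_le_mul_of_nonneg_left hs h7, mul_le_mul_of_nonneg_left h5 hA,
      mul_le_mul_of_nonneg_left h6 hc]
  have hm2 : MonotoneOn (fun u => f u + (c * (u - s) + A / 2 * (u - s) ^ 2)) (Icc s t) := by
    apply monotoneOn_of_hasDerivWithinAt_nonneg (convex_Icc s t)
      (f' := fun u => f' u + (c + A * (u - s)))
    · exact hf.add (by fun_prop)
    · intro u hu
      rw [interior_Icc] at hu
      have hid : HasDerivAt (fun u : ℝ => u - s) 1 u := (hasDerivAt_id u).sub_const s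
      have h8 := (hid.const_mul c).add ((hid.pow 2).const_mul (A / 2))
      refine ((h1 u hu).add (h8.congr_deriv ?_)).hasDerivWithinAt
      norm_num
      ring
    · intro u hu
      rw [interior_Icc] at hu
      linarith [hslope u (Ioo_subset_Icc_self hu)]
  have h9 := hm2 (left_mem_Icc.2 hst) (right_mem_Icc.2 hst) hst
  simp only [sub_self] at h9
  nlinarith

/-- **Lemma 4.1.** Let `p : [0,∞) → [0,1]` be twice differentiable with `p(0) ∈ (0,1)`
and suppose `K > 0` satisfies `p''(t) ≥ -p'(t) - K p(t) log(e/p(t))` for all `t ≥ 0`.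
Then for all `t ≤ min( 1/(4√(K log(2e/p(0)))), p(0)/(4|p'(0)|) )` one has `p(t) ≥ p(0)/2`
(when `p'(0) = 0` the second bound is interpreted as `+∞`). -/
theorem gronwall_type_lemma (p : ℝ → ℝ) (K : ℝ) (hK : 0 < K)
    (hrange : ∀ t, 0 ≤ t → p t ∈ Icc (0 : ℝ) 1)
    (hp0 : p 0 ∈ Ioo (0 : ℝ) 1)
    (hd1 : DifferentiableOn ℝ p (Ici 0))
    (hd2 : DifferentiableOn ℝ (derivWithin p (Ici 0)) (Ici 0))
    (hineq : ∀ t, 0 ≤ t →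
      derivWithin (derivWithin p (Ici 0)) (Ici 0) t ≥
        -derivWithin p (Ici 0) t - K * p t * Real.log (Real.exp 1 / p t)) :
    ∀ t, 0 ≤ t →
      t ≤ 1 / (4 * Real.sqrt (K * Real.log (2 * Real.exp 1 / p 0))) →
      (derivWithin p (Ici 0) 0 ≠ 0 → t ≤ p 0 / (4 * |derivWithin p (Ici 0) 0|)) →
      p t ≥ p 0 / 2 := by
  intro t ht htK hta
  obtain ⟨ha0, ha1⟩ := hp0
  obtain ⟨s, hs, hmax⟩ := isCompact_Icc.exists_isMaxOn (nonempty_Icc.2 ht)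
    (hd1.continuousOn.mono (Icc_subset_Ici_self : Icc 0 t ⊆ Ici 0))
  have haM : p 0 ≤ p s := hmax (left_mem_Icc.2 ht)
  have hM1 : p s ≤ 1 := (hrange s hs.1).2
  have hM0 : 0 < p s := ha0.trans_le haM
  rcases hs.2.eq_or_lt with rfl | hst
  · linarith
  have hnhds : ∀ u, 0 < u → Ici (0 : ℝ) ∈ nhds u := fun u hu => Ici_mem_nhds hu
  have hD1 : ∀ u, 0 < u → HasDerivAt p (derivWithin p (Ici 0) u) u := fun u hu =>
    (hd1 u hu.le).hasDerivWithinAt.hasDerivAt (hnhds u hu)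
  have hD2 : ∀ u, 0 < u → HasDerivAt (derivWithin p (Ici 0))
      (derivWithin (derivWithin p (Ici 0)) (Ici 0) u) u := fun u hu =>
    (hd2 u hu.le).hasDerivWithinAt.hasDerivAt (hnhds u hu)
  obtain ⟨c, hc0, hcs, hct⟩ : ∃ c : ℝ, 0 ≤ c ∧ -c ≤ derivWithin p (Ici 0) s ∧
      c * t ≤ p 0 / 4 := by
    rcases hs.1.eq_or_lt with rfl | hs0
    · refine ⟨|derivWithin p (Ici 0) 0|, abs_nonneg _, neg_abs_le _, ?_⟩
      by_cases h0 : derivWithin p (Ici 0) 0 = 0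
      · rw [h0, abs_zero, zero_mul]
        positivity
      · have h := hta h0
        rw [le_div_iff₀ (mul_pos four_pos (abs_pos.2 h0))] at h
        linarith
    · refine ⟨0, le_rfl, ?_, by rw [zero_mul]; positivity⟩
      have h := (hmax.isLocalMax (Icc_mem_nhds hs0 hst)).hasDerivAt_eq_zero (hD1 s hs0)
      rw [h, neg_zero]
  have hlogM : 1 ≤ Real.log (Real.exp 1 / p s) := by
    rw [Real.log_div (Real.exp_ne_zero 1) hM0.ne', Real.log_exp]
    linarith [Real.log_nonpos hM0.le hM1]
  have hlogL : Real.log (Real.exp 1 / p s) ≤ Real.log (2 * Real.exp 1 / p 0) := by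
    apply Real.log_le_log (by positivity)
    apply div_le_div₀ (by positivity) _ ha0 haM
    linarith [Real.exp_pos 1]
  set L := Real.log (2 * Real.exp 1 / p 0)
  set l := Real.log (Real.exp 1 / p s)
  have hKL : 0 < K * L := mul_pos hK (by linarith)
  have ht2 : K * L * t ^ 2 ≤ 1 / 16 := by
    have hsq := Real.sq_sqrt hKL.le
    have hpos := Real.sqrt_pos.2 hKL
    rw [le_div_iff₀ (by positivity)] at htK
    have : (t * (4 * Real.sqrt (K * L))) ^ 2 ≤ 1 := pow_le_one₀ (by positivity) htK
    rw [mul_pow, mul_pow, hsq] at this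
    linarith
  have hsub : Icc s t ⊆ Ici 0 := fun u hu => hs.1.trans hu.1
  have key := le_of_second_order (A := K * (p s * l)) hst.le (by positivity) hc0
    (hd1.continuousOn.mono hsub) (hd2.continuousOn.mono hsub)
    (fun u hu => hD1 u (hs.1.trans_lt hu.1)) (fun u hu => hD2 u (hs.1.trans_lt hu.1)) hcs
    (by
      intro u hu
      have hu0 : 0 ≤ u := hs.1.trans hu.1.le
      have hg := mul_log_exp_div_mono (hrange u hu0).1 (hmax ⟨hu0, hu.2.le⟩) hM1
      have := mul_le_mul_of_nonneg_left hg hK.le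
      have := hineq u hu0
      linarith)
  have hlin : c * (t - s) ≤ p 0 / 4 :=
    (mul_le_mul_of_nonneg_left (by linarith [hs.1]) hc0).trans hct
  have hquad : K * (p s * l) * (t - s) ^ 2 ≤ p s * (1 / 16) := by
    have hL0 : 0 ≤ L := by linarith
    have h1 : (t - s) ^ 2 ≤ t ^ 2 := pow_le_pow_left₀ (by linarith) (by linarith [hs.1]) 2
    calc K * (p s * l) * (t - s) ^ 2 ≤ K * (p s * L) * t ^ 2 := by gcongr
      _ = p s * (K * L * t ^ 2) := by ring
      _ ≤ _ := by gcongr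
  linarith

end
end
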